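/- Let R be a commutative Noetherian ring of finite Krull dimension d, let f_i ∈ R[Y_i] for 1 ≤ i ≤ n, and let A = R[X_1,…,X_m,Y_1,…,Y_n, (f_1⋯f_n)^{-1}] be the localization of the polynomial ring R[X_1,…,X_m,Y_1,…,Y_n] at the powers of f_1⋯f_n. Then every finitely generated projective A-module P of constant rank r ≥ d+1 is cancellative: if P ⊕ A^t ≅ Q ⊕ A^t for some finitely generated projective A-module Q and some integer t > 0, then P ≅ Q. -/

import Mathlib

noncomputable section

set_option linter.unusedSimpArgs false
set_option linter.unusedSectionVars false
set_option linter.unusedVariables false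
set_option linter.style.longLine false
set_option linter.style.haveILetI false

namespace DK
open Matrix

section Elem
variable {ι : Type*} [Fintype ι] [DecidableEq ι] {C D : Type*} [CommRing C] [CommRing D]

/-- Elementary matrix as an element of `GL`. -/
def el {i j : ι} (h : i ≠ j) (c : C) : GL ι C :=
  ⟨transvection i j c, transvection i j (-c),
    by rw [transvection_mul_transvection_same _ _ h]; simp [transvection],
    by rw [transvection_mul_transvection_same _ _ h]; simp [transvection]⟩

lemma el_val {i j : ι} (h : i ≠ j) (c : C) :
    ((el h c : GL ι C) : Matrix ι ι C) = 1 + single i j c := rfl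

lemma el_add {i j : ι} (h : i ≠ j) (a b : C) : (el h (a + b) : GL ι C) = el h a * el h b :=
  Units.ext (transvection_mul_transvection_same _ _ h _ _).symm

lemma el_zero {i j : ι} (h : i ≠ j) : (el h 0 : GL ι C) = 1 :=
  Units.ext (by simp [el_val])

lemma el_inv {i j : ι} (h : i ≠ j) (a : C) : (el h a : GL ι C)⁻¹ = el h (-a) := by
  rw [inv_eq_iff_mul_eq_one, ← el_add]; simp [el_zero]

lemma el_comm {i j k l : ι} (h : i ≠ j) (h' : k ≠ l) (h1 : j ≠ k) (h2 : l ≠ i) (a b : C) :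
    (el h a : GL ι C) * el h' b = el h' b * el h a := by
  apply Units.ext
  simp only [Units.val_mul, el_val, mul_add, add_mul, one_mul, mul_one]
  simp only [ne_eq, h1, h2, not_false_eq_true, single_mul_single_of_ne]
  abel

/-- `e_ij(a) e_jk(b) e_ij(-a) = e_jk(b) e_ik(ab)` -/
lemma el_conj_left {i j k : ι} (h : i ≠ j) (h' : j ≠ k) (h'' : i ≠ k) (a b : C) :
    (el h a : GL ι C) * el h' b * (el h a)⁻¹ = el h' b * el h'' (a * b) := by
  rw [mul_inv_eq_iff_eq_mul]
  apply Units.ext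
  simp only [Units.val_mul, el_val, mul_add, add_mul, one_mul, mul_one]
  simp only [single_mul_single_same, ne_eq, h, h.symm, h', h'.symm, h'', h''.symm, not_false_eq_true,
    single_mul_single_of_ne]
  simp
  abel

/-- `e_jk(a) e_ij(b) e_jk(-a) = e_ij(b) e_ik(-ba)` -/
lemma el_conj_right {i j k : ι} (h : i ≠ j) (h' : j ≠ k) (h'' : i ≠ k) (a b : C) :
    (el h' a : GL ι C) * el h b * (el h' a)⁻¹ = el h b * el h'' (-(b * a)) := by
  rw [mul_inv_eq_iff_eq_mul]
  apply Units.ext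
  simp only [Units.val_mul, el_val, mul_add, add_mul, one_mul, mul_one]
  simp only [single_mul_single_same, ne_eq, h, h.symm, h', h'.symm, h'', h''.symm, not_false_eq_true,
    single_mul_single_of_ne]
  have : (single i k (-(b * a)) : Matrix ι ι C) = - single i k (b * a) := by
    ext p q
    simp [single_apply]
    split_ifs <;> simp
  rw [this]
  simp only [zero_mul]
  abel

/-- commutator formula -/
lemma el_commutator {i j k : ι} (h : i ≠ j) (h' : j ≠ k) (h'' : i ≠ k) (a b : C) :
    (el h'' (a * b) : GL ι C) = el h a * el h' b * (el h a)⁻¹ * (el h' b)⁻¹ := by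
  rw [el_conj_left h h' h'', el_comm h' h'' h''.symm h'.symm]; simp

/-- group generated by elementary matrices with entries in `I`. -/
def EI (ι : Type*) [Fintype ι] [DecidableEq ι] {C : Type*} [CommRing C] (I : Ideal C) :
    Subgroup (GL ι C) :=
  Subgroup.closure {g | ∃ (i j : ι) (h : i ≠ j) (c : C), c ∈ I ∧ g = el h c}

lemma el_mem {I : Ideal C} {i j : ι} (h : i ≠ j) {c : C} (hc : c ∈ I) : el h c ∈ EI ι I :=
  Subgroup.subset_closure ⟨i, j, h, c, hc, rfl⟩

lemma EI_mono {I J : Ideal C} (h : I ≤ J) : EI ι I ≤ EI ι J := by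
  refine Subgroup.closure_mono ?_
  rintro _ ⟨i, j, hh, c, hc, rfl⟩
  exact ⟨i, j, hh, c, h hc, rfl⟩

lemma el_map (f : C →+* D) {i j : ι} (h : i ≠ j) (c : C) :
    GeneralLinearGroup.map f (el h c : GL ι C) = el h (f c) := by
  apply Units.ext
  ext p q
  simp [el_val, single_apply, one_apply]
  split_ifs <;> simp

lemma map_mem_EI (f : C →+* D) {I : Ideal C} {J : Ideal D} (h : ∀ c ∈ I, f c ∈ J)
    {σ : GL ι C} (hσ : σ ∈ EI ι I) : GeneralLinearGroup.map f σ ∈ EI ι J := by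
  have : EI ι I ≤ (EI ι J).comap (GeneralLinearGroup.map f) := by
    refine (Subgroup.closure_le _).2 ?_
    rintro _ ⟨i, j, hh, c, hc, rfl⟩
    simp only [SetLike.mem_coe, Subgroup.mem_comap, el_map]
    exact el_mem _ (h _ hc)
  exact this hσ

lemma map_mem_E (f : C →+* D) {σ : GL ι C} (hσ : σ ∈ EI ι (⊤ : Ideal C)) :
    GeneralLinearGroup.map f σ ∈ EI ι (⊤ : Ideal D) :=
  map_mem_EI f (fun _ _ => Submodule.mem_top) hσ

/-- induction principle: left multiplication by generators -/
lemma EI_induction {I : Ideal C} {p : GL ι C → Prop} (h1 : p 1)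
    (hm : ∀ (i j : ι) (h : i ≠ j) (c : C), c ∈ I → ∀ σ, σ ∈ EI ι I → p σ → p (el h c * σ))
    {σ : GL ι C} (hσ : σ ∈ EI ι I) : p σ := by
  refine Subgroup.closure_induction_left (p := fun x _ => p x) h1 ?_ ?_ hσ
  · rintro _ ⟨i, j, h, c, hc, rfl⟩ y hy hp
    exact hm i j h c hc y hy hp
  · rintro _ ⟨i, j, h, c, hc, rfl⟩ y hy hp
    rw [el_inv]
    exact hm i j h (-c) (I.neg_mem hc) y hy hp

/-- Elementary equivalence of vectors. -/
def Rel (v w : ι → C) : Prop := ∃ σ ∈ EI ι (⊤ : Ideal C), (σ : Matrix ι ι C) *ᵥ v = w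

lemma Rel.refl (v : ι → C) : Rel v v := ⟨1, one_mem _, by simp⟩
lemma Rel.symm {v w : ι → C} (h : Rel v w) : Rel w v := by
  obtain ⟨σ, hσ, rfl⟩ := h
  refine ⟨σ⁻¹, inv_mem hσ, ?_⟩
  rw [mulVec_mulVec, ← Units.val_mul, inv_mul_cancel]; simp
lemma Rel.trans {u v w : ι → C} (h : Rel u v) (h' : Rel v w) : Rel u w := by
  obtain ⟨σ, hσ, rfl⟩ := h
  obtain ⟨τ, hτ, rfl⟩ := h'
  refine ⟨τ * σ, mul_mem hτ hσ, ?_⟩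
  rw [mulVec_mulVec, ← Units.val_mul]

lemma map_mulVec' (f : C →+* D) (σ : GL ι C) (v : ι → C) :
    (GeneralLinearGroup.map f σ : Matrix ι ι D) *ᵥ (f ∘ v) = f ∘ ((σ : Matrix ι ι C) *ᵥ v) := by
  ext i
  simp [mulVec, dotProduct]

lemma Rel.map (f : C →+* D) {v w : ι → C} (h : Rel v w) : Rel (f ∘ v) (f ∘ w) := by
  obtain ⟨σ, hσ, rfl⟩ := h
  exact ⟨GeneralLinearGroup.map f σ, map_mem_E f hσ, map_mulVec' f σ v⟩

lemma el_mulVec {i j : ι} (h : i ≠ j) (c : C) (v : ι → C) :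
    ((el h c : GL ι C) : Matrix ι ι C) *ᵥ v = Function.update v i (v i + c * v j) := by
  ext k
  rw [el_val, add_mulVec, one_mulVec, Pi.add_apply, single_mulVec]
  by_cases hk : k = i
  · subst hk; simp
  · simp [hk]

lemma Rel.step {i j : ι} (h : i ≠ j) (c : C) (v : ι → C) :
    Rel v (Function.update v i (v i + c * v j)) :=
  ⟨el h c, el_mem h trivial, el_mulVec h c v⟩

/-- add a combination of other entries to entry i -/
lemma Rel.comb (i : ι) (v c : ι → C) (s : Finset ι) (hs : i ∉ s) :
    Rel v (Function.update v i (v i + ∑ j ∈ s, c j * v j)) := by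
  classical
  induction s using Finset.induction_on with
  | empty => simpa using Rel.refl v
  | insert a s ha ih =>
    rw [Finset.mem_insert, not_or] at hs
    refine (ih hs.2).trans ?_
    have := Rel.step hs.1 (c a) (Function.update v i (v i + ∑ j ∈ s, c j * v j))
    convert this using 1
    rw [Finset.sum_insert ha]
    have : a ≠ i := fun h => hs.1 h.symm
    simp [this]
    congr 1
    ring

/-- simultaneous addition of multiples of entry `i` to others -/
lemma Rel.addMul (i : ι) (v c : ι → C) (s : Finset ι) (hs : i ∉ s) :
    Rel v (fun j => if j ∈ s then v j + c j * v i else v j) := by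
  classical
  induction s using Finset.induction_on with
  | empty => simpa using Rel.refl v
  | insert a s ha ih =>
    rw [Finset.mem_insert, not_or] at hs
    refine (ih hs.2).trans ?_
    have hne : a ≠ i := fun h => hs.1 h.symm
    have := Rel.step hne (c a) (fun j => if j ∈ s then v j + c j * v i else v j)
    convert this using 1
    ext j
    by_cases hj : j = a
    · subst hj; simp [ha, hs.2]
    · simp [hj]

/-- Unimodular vectors. -/
def Um (v : ι → C) : Prop := ∃ u : ι → C, ∑ i, u i * v i = 1

lemma Um.map (f : C →+* D) {v : ι → C} (h : Um v) : Um (f ∘ v) := by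
  obtain ⟨u, hu⟩ := h
  refine ⟨f ∘ u, ?_⟩
  have := congrArg f hu
  simpa using this

lemma Um.rel {v w : ι → C} (h : Um v) (hr : Rel v w) : Um w := by
  obtain ⟨u, hu⟩ := h
  obtain ⟨σ, hσ, rfl⟩ := hr
  refine ⟨u ᵥ* ((σ⁻¹ : GL ι C) : Matrix ι ι C), ?_⟩
  change (u ᵥ* ((σ⁻¹ : GL ι C) : Matrix ι ι C)) ⬝ᵥ ((σ : Matrix ι ι C) *ᵥ v) = 1
  rw [← dotProduct_mulVec, mulVec_mulVec, ← Units.val_mul, inv_mul_cancel]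
  simpa [dotProduct] using hu

lemma Um.single (i : ι) : Um (Pi.single i (1 : C)) :=
  ⟨Pi.single i 1, by simp [Pi.single_apply]⟩

/-- if some entry is one then all is equivalent to the basis vector. -/
lemma Rel.of_one {v : ι → C} {i : ι} (h : v i = 1) : Rel v (Pi.single i 1) := by
  refine (Rel.addMul i v (fun j => - v j) (Finset.univ.erase i) (by simp)).trans ?_
  have : (fun j => if j ∈ Finset.univ.erase i then v j + (fun j => - v j) j * v i else v j)
      = Pi.single i 1 := by
    ext j
    by_cases hj : j = i
    · subst hj; simp [h]
    · simp [hj, h]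
  rw [this]; exact Rel.refl _

lemma Rel.single_single (i j : ι) : Rel (Pi.single i (1 : C)) (Pi.single j 1) := by
  by_cases h : i = j
  · subst h; exact Rel.refl _
  refine (Rel.step (Ne.symm h) 1 _).trans ?_
  refine Rel.of_one ?_
  simp [Ne.symm h]

lemma Rel.of_one' {v : ι → C} {i j : ι} (h : v i = 1) : Rel v (Pi.single j 1) :=
  (Rel.of_one h).trans (Rel.single_single i j)

/-- if the other entries generate the unit ideal -/
lemma Rel.of_span {v : ι → C} {i j : ι} (u : ι → C)
    (h : ∑ k ∈ Finset.univ.erase i, u k * v k = 1) : Rel v (Pi.single j 1) := by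
  refine (Rel.comb i v (fun k => (1 - v i) * u k) (Finset.univ.erase i) (by simp)).trans ?_
  apply Rel.of_one' (i := i)
  simp only [Function.update_self, mul_assoc, ← Finset.mul_sum, h]
  ring

/-- Transitivity property. -/
def TT (ι : Type*) [Fintype ι] [DecidableEq ι] (C : Type*) [CommRing C] : Prop :=
  ∀ v : ι → C, Um v → ∀ i, Rel v (Pi.single i 1)

lemma comp_single (f : C →+* D) (i : ι) : f ∘ (Pi.single i (1:C)) = Pi.single i (1:D) := by
  ext j; simp [Pi.single_apply]

lemma TT.of_equiv (e : C ≃+* D) (h : TT ι C) : TT ι D := by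
  intro v hv i
  have := (h _ (hv.map (e.symm : D →+* C)) i).map (e : C →+* D)
  rw [comp_single] at this
  convert this using 1
  ext j; simp

lemma TT.of_subsingleton [Subsingleton C] : TT ι C := by
  intro v _ i
  rw [Subsingleton.elim v (Pi.single i 1)]; exact Rel.refl _

end Elem
end DK
end

noncomputable section

set_option linter.unusedSimpArgs false
set_option linter.unusedSectionVars false
set_option linter.unusedVariables false
set_option linter.style.longLine false
set_option linter.style.haveILetI false
namespace DK
open Matrix

section Dil
variable {ι : Type*} [Fintype ι] [DecidableEq ι] {C D : Type*} [CommRing C] [CommRing D]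

/-- `f : C → D` behaves like inverting `s`. -/
structure DenOK (f : C →+* D) (s : C) : Prop where
  unit : IsUnit (f s)
  den : ∀ c : D, ∃ (K : ℕ) (a : C), f (s ^ K) * c = f a

lemma DenOK.of_away (s : C) [Algebra C D] [IsLocalization.Away s D] :
    DenOK (algebraMap C D) s := by
  refine ⟨IsLocalization.Away.algebraMap_isUnit s, fun c => ?_⟩
  obtain ⟨⟨a, ⟨_, K, rfl⟩⟩, h⟩ := IsLocalization.surj (Submonoid.powers s) c
  exact ⟨K, a, by rw [mul_comm]; exact h⟩

variable {f : C →+* D} {s : C}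

abbrev imE (ι : Type*) [Fintype ι] [DecidableEq ι] (f : C →+* D) (s : C) (M : ℕ) :
    Subgroup (GL ι D) :=
  (EI ι (Ideal.span {s ^ M})).map (GeneralLinearGroup.map f)

lemma el_mem_imE {M N : ℕ} (h : M ≤ N) {i j : ι} (hij : i ≠ j) (x : C) :
    el hij (f (s ^ N * x)) ∈ imE ι f s M := by
  refine ⟨el hij (s ^ N * x), el_mem _ ?_, el_map f _ _⟩
  exact Ideal.mul_mem_right _ _ (Ideal.mem_span_singleton.2 (pow_dvd_pow s h))

lemma conj_imE {γ : GL ι D} {M N : ℕ}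
    (h : ∀ (i j : ι) (h : i ≠ j) (x : C), γ * el h (f (s ^ N * x)) * γ⁻¹ ∈ imE ι f s M)
    {τ : GL ι D} (hτ : τ ∈ imE ι f s N) : γ * τ * γ⁻¹ ∈ imE ι f s M := by
  have key : imE ι f s N ≤ (imE ι f s M).comap (MulAut.conj γ).toMonoidHom := by
    rw [imE, Subgroup.map_le_iff_le_comap, EI, Subgroup.closure_le]
    rintro _ ⟨i, j, hij, c, hc, rfl⟩
    obtain ⟨x, rfl⟩ := Ideal.mem_span_singleton.1 hc
    simpa [el_map] using h i j hij x
  exact key hτ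

lemma conj_gen (hD : DenOK f s) (hc : ∀ i j : ι, ∃ l, l ≠ i ∧ l ≠ j)
    {p q : ι} (hpq : p ≠ q) (c : D) (M : ℕ) : ∃ N, ∀ (i j : ι) (h : i ≠ j) (x : C),
      el hpq c * el h (f (s ^ N * x)) * (el hpq c)⁻¹ ∈ imE ι f s M := by
  obtain ⟨K, a, hK⟩ := hD.den c
  have hcy : ∀ (n : ℕ) (x : C), M + K ≤ n → c * f (s ^ n * x) = f (s ^ (n - K) * (a * x)) := by
    intro n x hn
    obtain ⟨m, rfl⟩ := Nat.exists_eq_add_of_le hn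
    rw [show M + K + m - K = M + m by omega, show s ^ (M + K + m) = s ^ K * s ^ (M + m) by ring]
    simp only [map_mul, ← hK]; ring
  have easy : ∀ n, M + K ≤ n → ∀ (i j : ι) (h : i ≠ j) (x : C), ¬ (p = j ∧ q = i) →
      el hpq c * el h (f (s ^ n * x)) * (el hpq c)⁻¹ ∈ imE ι f s M := by
    intro n hn i j h x hne
    by_cases h1 : q = i
    · subst h1
      have hpj : p ≠ j := fun h => hne ⟨h, rfl⟩
      rw [el_conj_left hpq h hpj, hcy n x hn]
      exact mul_mem (el_mem_imE (by omega) _ _) (el_mem_imE (by omega) _ _)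
    · by_cases h2 : p = j
      · subst h2
        have hiq : i ≠ q := fun h => h1 h.symm
        rw [el_conj_right h hpq hiq, mul_comm (f _) c, hcy n x hn, ← map_neg, ← mul_neg]
        exact mul_mem (el_mem_imE (by omega) _ _) (el_mem_imE (by omega) _ _)
      · rw [el_comm hpq h h1 (Ne.symm h2), mul_inv_cancel_right]
        exact el_mem_imE (by omega) _ _
  refine ⟨(M + K) + (M + K), fun i j h x => ?_⟩
  by_cases hne : p = j ∧ q = i
  · obtain ⟨rfl, rfl⟩ := hne
    obtain ⟨l, hl1, hl2⟩ := hc p q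
    have e1 : f (s ^ (M + K + (M + K)) * x) = f (s ^ (M + K) * 1) * f (s ^ (M + K) * x) := by
      rw [← map_mul]; congr 1; ring
    rw [e1, el_commutator (Ne.symm hl2) hl1 h]
    have A := easy (M + K) le_rfl q l (Ne.symm hl2) 1 (fun h => hl1 h.1.symm)
    have B := easy (M + K) le_rfl l p hl1 x (fun h => hl2 h.2.symm)
    have := mul_mem (mul_mem (mul_mem A B) (inv_mem A)) (inv_mem B)
    convert this using 1
    group
  · exact easy _ (by omega) i j h x hne

lemma conj_den (hD : DenOK f s) (hc : ∀ i j : ι, ∃ l, l ≠ i ∧ l ≠ j)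
    {γ : GL ι D} (hγ : γ ∈ EI ι (⊤ : Ideal D)) : ∀ (M : ℕ), ∃ N, ∀ τ ∈ imE ι f s N,
      γ * τ * γ⁻¹ ∈ imE ι f s M := by
  refine EI_induction (p := fun γ => ∀ (M : ℕ), ∃ N, ∀ τ ∈ imE ι f s N,
      γ * τ * γ⁻¹ ∈ imE ι f s M) ?_ ?_ hγ
  · intro M; exact ⟨M, fun τ h => by simpa using h⟩
  · intro i j h c _ σ _ ih M
    obtain ⟨N, hN⟩ := conj_gen hD hc h c M
    obtain ⟨N', hN'⟩ := ih N
    refine ⟨N', fun τ hτ => ?_⟩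
    have := conj_imE hN (hN' τ hτ)
    convert this using 1
    group

/-- denominators of polynomials -/
lemma DenOK.poly (hD : DenOK f s) (g : Polynomial D) :
    ∃ (K : ℕ) (g' : Polynomial C), Polynomial.C (f (s ^ K)) * g = g'.map f := by
  induction g using Polynomial.induction_on' with
  | add p q hp hq =>
    obtain ⟨K, a, ha⟩ := hp
    obtain ⟨L, b, hb⟩ := hq
    refine ⟨K + L, Polynomial.C (s ^ L) * a + Polynomial.C (s ^ K) * b, ?_⟩
    simp only [Polynomial.map_add, Polynomial.map_mul, ← ha, ← hb, Polynomial.map_C, pow_add,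
      map_mul]
    ring
  | monomial n c =>
    obtain ⟨K, a, ha⟩ := hD.den c
    exact ⟨K, Polynomial.monomial n a, by rw [Polynomial.C_mul_monomial, ha, Polynomial.map_monomial]⟩

/-- evaluation hom -/
abbrev evG (ι : Type*) [Fintype ι] [DecidableEq ι] (a : D) : GL ι (Polynomial D) →* GL ι D :=
  GeneralLinearGroup.map (Polynomial.evalRingHom a)

lemma dilation (hD : DenOK f s) (hc : ∀ i j : ι, ∃ l, l ≠ i ∧ l ≠ j)
    {σ : GL ι (Polynomial D)} (hσ : σ ∈ EI ι (⊤ : Ideal (Polynomial D))) (a : C) :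
    ∀ M : ℕ, ∃ N, ∀ b : C, evG ι (f (a + s ^ N * b)) σ * (evG ι (f a) σ)⁻¹ ∈ imE ι f s M := by
  refine EI_induction (p := fun σ => ∀ M : ℕ, ∃ N, ∀ b : C,
    evG ι (f (a + s ^ N * b)) σ * (evG ι (f a) σ)⁻¹ ∈ imE ι f s M) ?_ ?_ hσ
  · intro M; exact ⟨0, fun b => by simp⟩
  · intro i j h g _ σ _ ih M
    have hE : evG ι (f a) (el h g) ∈ EI ι (⊤ : Ideal D) := map_mem_E _ (el_mem h trivial)
    obtain ⟨N₁, h₁⟩ := conj_den hD hc hE M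
    obtain ⟨N₂, h₂⟩ := ih N₁
    obtain ⟨K, g', hg'⟩ := hD.poly g
    refine ⟨M + K + N₂, fun b => ?_⟩
    have A : evG ι (f (a + s ^ (M + K + N₂) * b)) (el h g) * (evG ι (f a) (el h g))⁻¹
        ∈ imE ι f s M := by
      rw [el_map, el_map, el_inv, ← el_add]
      obtain ⟨q, hq⟩ := g'.sub_dvd_eval_sub (a + s ^ (M + K + N₂) * b) a
      have : Polynomial.evalRingHom (f (a + s ^ (M + K + N₂) * b)) g +
          - Polynomial.evalRingHom (f a) g = f (s ^ M * (s ^ N₂ * b * q)) := by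
        have hu : IsUnit (f (s ^ K)) := by rw [map_pow]; exact hD.unit.pow K
        apply hu.mul_left_cancel
        have e : ∀ z : C, f (s ^ K) * Polynomial.eval (f z) g = f (g'.eval z) := by
          intro z
          have := congrArg (Polynomial.eval (f z)) hg'
          rw [Polynomial.eval_mul, Polynomial.eval_C, Polynomial.eval_map, Polynomial.eval₂_hom] at this
          exact this
        simp only [Polynomial.coe_evalRingHom]
        rw [mul_add, mul_neg, e, e, ← sub_eq_add_neg, ← map_sub, hq, ← map_mul]
        congr 1; ring
      rw [this]
      exact el_mem_imE le_rfl _ _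
    have B := h₁ _ (h₂ (s ^ (M + K) * b))
    have e2 : a + s ^ N₂ * (s ^ (M + K) * b) = a + s ^ (M + K + N₂) * b := by ring
    rw [e2] at B
    have := mul_mem A B
    convert this using 1
    simp only [map_mul]
    group

end Dil

section Split
variable {ι : Type*} [Fintype ι] [DecidableEq ι]

lemma exists_path {D : Type*} [CommRing D] {σ : GL ι D} (hσ : σ ∈ EI ι (⊤ : Ideal D)) :
    ∃ τ ∈ EI ι (⊤ : Ideal (Polynomial D)), evG ι 0 τ = 1 ∧ evG ι 1 τ = σ := by
  refine EI_induction (p := fun σ => ∃ τ ∈ EI ι (⊤ : Ideal (Polynomial D)),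
    evG ι 0 τ = 1 ∧ evG ι 1 τ = σ) ?_ ?_ hσ
  · exact ⟨1, one_mem _, by simp, by simp⟩
  · rintro i j h c _ σ _ ⟨τ, hτ, h0, h1⟩
    refine ⟨el h (Polynomial.C c * Polynomial.X) * τ, mul_mem (el_mem _ trivial) hτ, ?_, ?_⟩
    · rw [map_mul, h0, el_map]; simp [el_zero]
    · rw [map_mul, h1, el_map]; simp

lemma imE_le {C D : Type*} [CommRing C] [CommRing D] {f : C →+* D} {s : C} {M : ℕ} {σ : GL ι D}
    (h : σ ∈ imE ι f s M) : ∃ τ ∈ EI ι (⊤ : Ideal C), GeneralLinearGroup.map f τ = σ := by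
  obtain ⟨τ, hτ, rfl⟩ := h
  exact ⟨τ, EI_mono le_top hτ, rfl⟩

/-- splitting of elementary matrices for comaximal localizations -/
lemma split (hc : ∀ i j : ι, ∃ l, l ≠ i ∧ l ≠ j)
    {B Bf Bt D : Type*} [CommRing B] [CommRing Bf] [CommRing Bt] [CommRing D]
    (gf : B →+* Bf) (gt : B →+* Bt) (jf : Bf →+* D) (jt : Bt →+* D)
    (hcomm : jf.comp gf = jt.comp gt) (f t : B) (hft : ∃ x y, x * t + y * f = 1)
    (hf : DenOK jf (gf t)) (ht : DenOK jt (gt f))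
    {σ : GL ι D} (hσ : σ ∈ EI ι (⊤ : Ideal D)) :
    ∃ ρf ∈ EI ι (⊤ : Ideal Bf), ∃ ρt ∈ EI ι (⊤ : Ideal Bt),
      GeneralLinearGroup.map jt ρt * σ = GeneralLinearGroup.map jf ρf := by
  obtain ⟨τ, hτ, h0, h1⟩ := exists_path hσ
  obtain ⟨N₁, hN₁⟩ := dilation hf hc hτ 0 0
  obtain ⟨N₂, hN₂⟩ := dilation ht hc hτ 1 0
  have hcop : IsCoprime (t ^ N₁) (f ^ N₂) := IsCoprime.pow hft
  obtain ⟨x, y, hxy⟩ := hcop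
  obtain ⟨ρf, hρf, ef⟩ := imE_le (hN₁ (gf x))
  obtain ⟨ρt, hρt, et⟩ := imE_le (hN₂ (gt (-y)))
  refine ⟨ρf, hρf, ρt, hρt, ?_⟩
  rw [ef, et]
  have hc' : ∀ z, jf (gf z) = jt (gt z) := fun z => RingHom.congr_fun hcomm z
  have e1 : jt (1 + gt f ^ N₂ * gt (-y)) = jf (0 + gf t ^ N₁ * gf x) := by
    have : jf (0 + gf t ^ N₁ * gf x) = jf (gf (t ^ N₁ * x)) := by simp
    rw [this, hc']
    have : t ^ N₁ * x = 1 + f ^ N₂ * (-y) := by linear_combination hxy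
    rw [this]; simp
  rw [e1]
  simp only [map_one, map_zero, h0, h1]
  group

end Split
end DK
end

noncomputable section

set_option linter.unusedSimpArgs false
set_option linter.unusedSectionVars false
set_option linter.unusedVariables false
set_option linter.style.longLine false
set_option linter.style.haveILetI false
namespace DK
open Matrix

section Descent
universe w
variable {ι : Type*} [Fintype ι] [DecidableEq ι] {C D : Type*} [CommRing C] [CommRing D]

lemma descent_E [Algebra C D] (M : Submonoid C) [IsLocalization M D]
    {σ : GL ι D} (hσ : σ ∈ EI ι (⊤ : Ideal D)) :
    ∃ s ∈ M, ∀ (D' : Type w) [CommRing D'] (f : C →+* D') (g : D' →+* D),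
      g.comp f = algebraMap C D → IsUnit (f s) →
      ∃ σ' ∈ EI ι (⊤ : Ideal D'), GeneralLinearGroup.map g σ' = σ := by
  refine EI_induction (p := fun σ => ∃ s ∈ M, ∀ (D' : Type w) [CommRing D'] (f : C →+* D')
      (g : D' →+* D), g.comp f = algebraMap C D → IsUnit (f s) →
      ∃ σ' ∈ EI ι (⊤ : Ideal D'), GeneralLinearGroup.map g σ' = σ) ?_ ?_ hσ
  · exact ⟨1, one_mem _, fun D' _ f g _ _ => ⟨1, one_mem _, by simp⟩⟩
  · rintro i j h c _ σ _ ⟨s, hs, H⟩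
    obtain ⟨⟨a, t⟩, hat⟩ := IsLocalization.surj M c
    refine ⟨s * t, mul_mem hs t.2, fun D' _ f g hgf hu => ?_⟩
    rw [map_mul, IsUnit.mul_iff] at hu
    obtain ⟨σ', hσ', e⟩ := H D' f g hgf hu.1
    obtain ⟨u, hu'⟩ := hu.2
    refine ⟨el h (f a * ((u⁻¹ : D'ˣ) : D')) * σ', mul_mem (el_mem _ trivial) hσ', ?_⟩
    rw [map_mul, e, el_map]
    congr 2
    have hgf' : ∀ z, g (f z) = algebraMap C D z := fun z => RingHom.congr_fun hgf z
    have h1 : g (u : D') = algebraMap C D t := by rw [hu', hgf']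
    have h2 : IsUnit (algebraMap C D t) := IsLocalization.map_units D t
    apply h2.mul_left_injective
    simp only
    rw [hat, map_mul, hgf', ← h1, mul_assoc, ← map_mul]
    simp

lemma descent [Algebra C D] (M : Submonoid C) [IsLocalization M D] (v : ι → C) (i : ι)
    (h : Rel (algebraMap C D ∘ v) (Pi.single i 1)) :
    ∃ s ∈ M, ∀ (D' : Type w) [CommRing D'] (f : C →+* D'), IsUnit (f s) →
      Rel (f ∘ v) (Pi.single i 1) := by
  obtain ⟨σ, hσ, e⟩ := h
  obtain ⟨s, hs, H⟩ := descent_E M hσ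
  let L := Localization.Away s
  have hsu : IsUnit (algebraMap C D s) := IsLocalization.map_units D ⟨s, hs⟩
  let g : L →+* D := IsLocalization.Away.lift s hsu
  have hg : g.comp (algebraMap C L) = algebraMap C D := IsLocalization.Away.lift_comp s hsu
  have hg' : ∀ z, g (algebraMap C L z) = algebraMap C D z := fun z => RingHom.congr_fun hg z
  obtain ⟨σ', hσ', e'⟩ := H L (algebraMap C L) g hg (IsLocalization.Away.algebraMap_isUnit s)
  let w : ι → L := (σ' : Matrix ι ι L) *ᵥ (algebraMap C L ∘ v) - Pi.single i 1
  have hw : ∀ k, g (w k) = 0 := by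
    intro k
    have h1 := map_mulVec' g σ' (algebraMap C L ∘ v)
    have h2 : g ∘ (algebraMap C L ∘ v) = algebraMap C D ∘ v := by ext k; exact hg' _
    rw [e', h2, e, ← comp_single g i] at h1
    have := congrFun h1 k
    simp only [Function.comp_apply] at this
    simp only [w, Pi.sub_apply, map_sub, ← this, sub_self]
  have hk : ∀ k, ∃ m ∈ M, ∃ K : ℕ, ∃ a : C, algebraMap C L (s ^ K) * w k = algebraMap C L a ∧ m * a = 0 := by
    intro k
    obtain ⟨K, a, ha⟩ := (DenOK.of_away (D := L) s).den (w k)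
    have h0 : algebraMap C D a = 0 := by rw [← hg', ← ha, map_mul, hw, mul_zero]
    obtain ⟨m, hm⟩ := (IsLocalization.map_eq_zero_iff M D a).1 h0
    exact ⟨m, m.2, K, a, ha, hm⟩
  choose m hmM K a ha hma using hk
  refine ⟨s * ∏ k, m k, mul_mem hs (prod_mem fun k _ => hmM k), fun D' _ f hu => ?_⟩
  rw [map_mul, IsUnit.mul_iff] at hu
  let g' : L →+* D' := IsLocalization.Away.lift s hu.1
  have hg2 : ∀ z, g' (algebraMap C L z) = f z := fun z => IsLocalization.Away.lift_eq s hu.1 z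
  have hw2 : ∀ k, g' (w k) = 0 := by
    intro k
    have hmk : IsUnit (f (m k)) := by
      refine isUnit_of_dvd_unit ?_ hu.2
      exact map_dvd f (Finset.dvd_prod_of_mem m (Finset.mem_univ k))
    have h1 := congrArg g' (ha k)
    rw [map_mul, hg2, hg2] at h1
    have h2 : f (a k) = 0 := by
      have := congrArg f (hma k)
      rw [map_mul, map_zero] at this
      exact (hmk.mul_right_eq_zero).1 this
    rw [h2] at h1
    have h3 : IsUnit (f (s ^ K k)) := by rw [map_pow]; exact hu.1.pow _
    exact (h3.mul_right_eq_zero).1 h1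
  refine ⟨GeneralLinearGroup.map g' σ', map_mem_E _ hσ', ?_⟩
  have h1 := map_mulVec' g' σ' (algebraMap C L ∘ v)
  have h2 : g' ∘ (algebraMap C L ∘ v) = f ∘ v := by ext k; exact hg2 _
  rw [h2] at h1
  rw [h1, ← comp_single g' i]
  ext k
  have := hw2 k
  simp only [w, Pi.sub_apply, map_sub, sub_eq_zero] at this
  exact this

end Descent

section Monic
open Polynomial
variable {ι : Type*} [Fintype ι] [DecidableEq ι] {B : Type*} [CommRing B]

/-- If `f` is monic of degree `n+1` and `g` of degree `< n+1` has a unit coefficient, then `(f,g)`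
contains a monic-like polynomial of degree `n`. -/
lemma exists_monic_lower (f g : B[X]) (n : ℕ) (hf : f.Monic) (hfn : f.natDegree = n + 1)
    (hg : g.degree < ((n + 1 : ℕ) : WithBot ℕ)) (t : ℕ) (ht : IsUnit (g.coeff t)) [Nontrivial B] :
    ∃ a b : B[X], (a * f + b * g).degree < ((n + 1 : ℕ) : WithBot ℕ) ∧ (a * f + b * g).coeff n = 1 := by
  let I : Ideal B[X] := Ideal.span {f, g}
  let J : Ideal B :=
    { carrier := {c | ∃ p ∈ I, p.degree < ((n + 1 : ℕ) : WithBot ℕ) ∧ p.coeff n = c}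
      zero_mem' := ⟨0, I.zero_mem, by simp [WithBot.bot_lt_coe], by simp⟩
      add_mem' := by
        rintro _ _ ⟨p, hp, hpd, rfl⟩ ⟨q, hq, hqd, rfl⟩
        exact ⟨p + q, I.add_mem hp hq, (degree_add_le _ _).trans_lt (max_lt hpd hqd), by simp⟩
      smul_mem' := by
        rintro c _ ⟨p, hp, hpd, rfl⟩
        refine ⟨Polynomial.C c * p, I.mul_mem_left _ hp, ?_, by simp⟩
        exact lt_of_le_of_lt (by rw [← smul_eq_C_mul]; exact degree_smul_le _ _) hpd }
  have key : ∀ t ≤ n, ∀ p ∈ I, p.degree < ((n + 1 : ℕ) : WithBot ℕ) → p.coeff (n - t) ∈ J := by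
    intro t
    induction t with
    | zero => intro _ p hp hpd; exact ⟨p, hp, hpd, rfl⟩
    | succ t ih =>
      intro htn p hp hpd
      have hp' : Polynomial.X * p - Polynomial.C (p.coeff n) * f ∈ I :=
        I.sub_mem (I.mul_mem_left _ hp) (I.mul_mem_left _ (Ideal.subset_span (by simp)))
      have hd' : (Polynomial.X * p - Polynomial.C (p.coeff n) * f).degree < ((n + 1 : ℕ) : WithBot ℕ) := by
        rw [degree_lt_iff_coeff_zero] at hpd ⊢
        intro k hk
        obtain ⟨k, rfl⟩ : ∃ k', k = k' + 1 := ⟨k - 1, by omega⟩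
        rw [coeff_sub, coeff_X_mul, coeff_C_mul]
        rcases Nat.lt_or_ge n k with h | h
        · rw [hpd k (by omega), coeff_eq_zero_of_natDegree_lt (p := f) (by omega)]; simp
        · obtain rfl : k = n := by omega
          rw [← hfn, hf.coeff_natDegree]; simp
      have h1 := ih (by omega) _ hp' hd'
      obtain ⟨m, hm⟩ : ∃ m, n - t = m + 1 := ⟨n - t - 1, by omega⟩
      have hm' : n - (t + 1) = m := by omega
      rw [hm, coeff_sub, coeff_X_mul, coeff_C_mul] at h1
      rw [hm']
      have h2 : p.coeff n ∈ J := ⟨p, hp, hpd, rfl⟩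
      have := J.add_mem h1 (J.mul_mem_right (f.coeff (m + 1)) h2)
      simpa using this
  have htn : t ≤ n := by
    by_contra hcon
    rw [degree_lt_iff_coeff_zero] at hg
    rw [hg t (by omega)] at ht
    exact not_isUnit_zero ht
  have h1 := key (n - t) (by omega) g (Ideal.subset_span (by simp)) hg
  rw [show n - (n - t) = t by omega] at h1
  have h2 : (1 : B) ∈ J := by
    rw [← Ideal.eq_top_iff_one]; exact Ideal.eq_top_of_isUnit_mem _ h1 ht
  obtain ⟨p, hp, hpd, hp1⟩ := h2
  obtain ⟨a, b, hab⟩ := Ideal.mem_span_pair.1 hp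
  exact ⟨a, b, by rw [hab]; exact hpd, by rw [hab]; exact hp1⟩

lemma local_monic [IsLocalRing B] (hc : ∀ i j : ι, ∃ l, l ≠ i ∧ l ≠ j) (n : ℕ) :
    ∀ (v : ι → B[X]) (i : ι), Um v → (v i).Monic → (v i).natDegree = n → ∀ k,
      Rel v (Pi.single k 1) := by
  induction n with
  | zero =>
    intro v i _ hm hn k
    exact Rel.of_one' (i := i) (hm.natDegree_eq_zero.1 hn)
  | succ n ih =>
    intro v i hv hm hn k
    -- reduce
    have R1 := Rel.addMul i v (fun j => - (v j /ₘ v i)) (Finset.univ.erase i) (by simp)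
    set w : ι → B[X] := fun j => if j ∈ Finset.univ.erase i then v j + (fun j => - (v j /ₘ v i)) j * v i else v j with hw
    have hwi : w i = v i := by simp [hw]
    have hwj : ∀ j, j ≠ i → w j = v j %ₘ v i := by
      intro j hj
      simp only [hw, Finset.mem_erase, hj, ne_eq, not_false_eq_true, Finset.mem_univ, and_self, if_true]
      rw [modByMonic_eq_sub_mul_div]; ring
    have hdeg : ∀ j, j ≠ i → (w j).degree < ((n + 1 : ℕ) : WithBot ℕ) := by
      intro j hj
      rw [hwj j hj]
      refine (degree_modByMonic_lt _ hm).trans_le ?_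
      rw [← hn]; exact degree_le_natDegree
    have hwu : Um w := hv.rel R1
    refine R1.trans ?_
    -- find a unit coefficient
    obtain ⟨j, hji, t, ht⟩ : ∃ j, j ≠ i ∧ ∃ t, IsUnit ((w j).coeff t) := by
      by_contra hcon
      push Not at hcon
      let q := Polynomial.mapRingHom (IsLocalRing.residue B)
      obtain ⟨u, hu⟩ := hwu.map q
      have h0 : ∀ j, j ≠ i → (q ∘ w) j = 0 := by
        intro j hj
        ext t
        simp only [q, Function.comp_apply, coe_mapRingHom, coeff_map, coeff_zero]
        rw [IsLocalRing.residue_eq_zero_iff]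
        exact (IsLocalRing.mem_maximalIdeal _).2 (hcon j hj t)
      rw [Finset.sum_eq_single i (fun j _ hj => by rw [h0 j hj, mul_zero]) (by simp)] at hu
      have hmq : (q (w i)).Monic := by rw [hwi]; exact hm.map _
      have : IsUnit (q (w i)) := IsUnit.of_mul_eq_one _ (by rw [mul_comm]; exact hu)
      have h1 := hmq.isUnit_iff.1 this
      have h2 : (q (w i)).natDegree = n + 1 := by
        rw [hwi]; exact (hm.natDegree_map _).trans hn
      rw [h1] at h2; simp at h2
    obtain ⟨l, hli, hlj⟩ := hc i j
    obtain ⟨a, b, hab, hab1⟩ := exists_monic_lower (w i) (w j) n (by rw [hwi]; exact hm)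
      (by rw [hwi]; exact hn) (hdeg j hji) t ht
    let c : B[X] := Polynomial.C (1 - (w l).coeff n)
    have R2 := Rel.step hli (c * a) w
    set w' := Function.update w l (w l + c * a * w i) with hw'
    have R3 := Rel.step hlj (c * b) w'
    set w'' := Function.update w' l (w' l + c * b * w' j) with hw''
    refine (R2.trans R3).trans ?_
    have hl : w'' l = w l + c * (a * w i + b * w j) := by
      simp [hw'', hw', hlj, hlj.symm, hli]; ring
    have hd : (w'' l).degree < ((n + 1 : ℕ) : WithBot ℕ) := by
      rw [hl]
      refine (degree_add_le _ _).trans_lt (max_lt (hdeg l hli) ?_)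
      refine lt_of_le_of_lt ?_ hab
      rw [← smul_eq_C_mul]; exact degree_smul_le _ _
    have hcf : (w'' l).coeff n = 1 := by
      rw [hl, coeff_add, coeff_C_mul, hab1]; ring
    have hnd : (w'' l).natDegree = n := by
      refine natDegree_eq_of_le_of_coeff_ne_zero ?_ (by rw [hcf]; exact one_ne_zero)
      rw [natDegree_le_iff_coeff_eq_zero]
      rw [degree_lt_iff_coeff_zero] at hd
      intro k hk
      exact hd k (by omega)
    refine ih w'' l ((hwu.rel R2).rel R3) ?_ hnd k
    rw [Monic, leadingCoeff, hnd, hcf]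

end Monic
end DK
end

noncomputable section

set_option linter.unusedSimpArgs false
set_option linter.unusedSectionVars false
set_option linter.unusedVariables false
set_option linter.style.longLine false
set_option linter.style.haveILetI false
namespace DK
open Matrix

section MonicThm
open Polynomial
universe u
variable {ι : Type*} [Fintype ι] [DecidableEq ι] {B : Type u} [CommRing B]

/-- substitution -/
abbrev sb {B T : Type*} [CommRing B] [CommRing T] (g : B →+* T) (x : T) : B[X] →+* T :=
  eval₂RingHom g x

lemma sb_comp {B T U : Type*} [CommRing B] [CommRing T] [CommRing U] (g : B →+* T) (x : T)
    (h : T →+* U) (p : B[X]) : h (sb g x p) = sb (h.comp g) (h x) p := by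
  simp [sb, hom_eval₂]

/-- Quillen's ideal -/
def QI (v : ι → B[X]) : Ideal B where
  carrier := {b | ∀ (T : Type u) [CommRing T] (g : B →+* T) (x y : T),
    Rel (sb g (x + g b * y) ∘ v) (sb g x ∘ v)}
  zero_mem' := by
    intro T _ g x y
    simp only [map_zero, zero_mul, add_zero]
    exact Rel.refl _
  add_mem' := by
    intro a b ha hb T _ g x y
    have h1 := ha T g x y
    have h2 := hb T g (x + g a * y) y
    have : x + g (a + b) * y = x + g a * y + g b * y := by rw [map_add]; ring
    rw [this]
    exact h2.trans h1
  smul_mem' := by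
    intro c a ha T _ g x y
    have h1 := ha T g x (g c * y)
    have : x + g (c • a) * y = x + g a * (g c * y) := by rw [smul_eq_mul, map_mul]; ring
    rw [this]; exact h1

lemma pow_mem_QI (hc : ∀ i j : ι, ∃ l, l ≠ i ∧ l ≠ j) (v : ι → B[X]) (s : B) (i : ι)
    (H : ∀ (D' : Type u) [CommRing D'] (f : B[X] →+* D'), IsUnit (f (C s)) →
      Rel (f ∘ v) (Pi.single i 1)) : ∃ N, s ^ N ∈ QI v := by
  let s0 : B[X][X] := C (C s)
  let D := Localization.Away s0
  let f : B[X][X] →+* D := algebraMap B[X][X] D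
  have hD : DenOK f s0 := DenOK.of_away s0
  let cc : B →+* B[X][X] := (C : B[X] →+* B[X][X]).comp (C : B →+* B[X])
  let jD : B[X] →+* D[X] := mapRingHom (f.comp cc)
  have hj : IsUnit (jD (C s)) := by
    have : jD (C s) = C (f s0) := by simp [jD, cc, s0]
    rw [this]; exact hD.unit.map C
  obtain ⟨σ, hσ, e⟩ := (H D[X] jD hj).symm
  let x : B[X][X] := C X
  let y : B[X][X] := X
  obtain ⟨N, hN⟩ := dilation hD hc hσ x 0
  obtain ⟨τ, hτ, eτ⟩ := imE_le (hN y)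
  -- evaluation
  have ev : ∀ z : B[X][X], (evG ι (f z) σ : Matrix ι ι D) *ᵥ (Pi.single i 1) = f ∘ (sb cc z ∘ v) := by
    intro z
    have h1 := map_mulVec' (evalRingHom (f z)) σ (Pi.single i 1)
    rw [comp_single, e] at h1
    rw [h1]
    ext k
    simp [jD, hom_eval₂, eval_map]
  let b : B[X][X] := x + s0 ^ N * y
  have h1 : f ∘ ((τ : Matrix ι ι B[X][X]) *ᵥ (sb cc x ∘ v)) = f ∘ (sb cc b ∘ v) := by
    rw [← map_mulVec', eτ, ← ev, ← ev, mulVec_mulVec, ← Units.val_mul]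
    simp [b]
  obtain ⟨M, hM⟩ : ∃ M : ℕ, ∀ k, s0 ^ M * (((τ : Matrix ι ι B[X][X]) *ᵥ (sb cc x ∘ v)) k - sb cc b (v k)) = 0 := by
    have : ∀ k, ∃ M : ℕ, s0 ^ M * (((τ : Matrix ι ι B[X][X]) *ᵥ (sb cc x ∘ v)) k - sb cc b (v k)) = 0 := by
      intro k
      have h2 := congrFun h1 k
      have h3 : f (((τ : Matrix ι ι B[X][X]) *ᵥ (sb cc x ∘ v)) k - sb cc b (v k)) = 0 := by
        rw [map_sub, sub_eq_zero]; exact h2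
      obtain ⟨⟨_, M, rfl⟩, hm⟩ := (IsLocalization.map_eq_zero_iff (Submonoid.powers s0) D _).1 h3
      exact ⟨M, hm⟩
    choose M hM using this
    refine ⟨∑ k, M k, fun k => ?_⟩
    obtain ⟨q, hq⟩ := pow_dvd_pow s0 (Finset.single_le_sum (f := M) (fun _ _ => Nat.zero_le _) (Finset.mem_univ k))
    rw [hq, mul_right_comm, hM, zero_mul]
  -- set Y to zero
  let e0 : B[X][X] →+* B[X][X] := (C : B[X] →+* B[X][X]).comp (evalRingHom 0)
  let τ0 := GeneralLinearGroup.map e0 τ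
  have hτ0 : τ0 ∈ EI ι (⊤ : Ideal B[X][X]) := map_mem_E _ hτ
  let τ' := τ * τ0⁻¹
  have hτ' : τ' ∈ EI ι (⊤ : Ideal B[X][X]) := mul_mem hτ (inv_mem hτ0)
  have e0x : e0 ∘ (sb cc x ∘ v) = sb cc x ∘ v := by
    ext1 k
    simp only [Function.comp_apply]
    rw [sb_comp]
    congr 2
    · ext <;> simp [e0, cc]
    · simp [e0, x]
  have e0b : e0 ∘ (sb cc b ∘ v) = sb cc x ∘ v := by
    ext1 k
    simp only [Function.comp_apply]
    rw [sb_comp]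
    congr 2
    · ext <;> simp [e0, cc]
    · simp [e0, b, x, y]
  have e0s : e0 s0 = s0 := by simp [e0, s0]
  have A0 : s0 ^ M • ((τ : Matrix ι ι B[X][X]) *ᵥ (sb cc x ∘ v)) = s0 ^ M • (sb cc b ∘ v) := by
    ext1 k
    have := hM k
    simp only [Pi.smul_apply, smul_eq_mul, Function.comp_apply]
    linear_combination this
  have A1 : s0 ^ M • ((τ0 : Matrix ι ι B[X][X]) *ᵥ (sb cc x ∘ v)) = s0 ^ M • (sb cc x ∘ v) := by
    have h2 : e0 ∘ (s0 ^ M • ((τ : Matrix ι ι B[X][X]) *ᵥ (sb cc x ∘ v))) = e0 ∘ (s0 ^ M • (sb cc b ∘ v)) := by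
      rw [A0]
    have hsm : ∀ w : ι → B[X][X], e0 ∘ (s0 ^ M • w) = s0 ^ M • (e0 ∘ w) := by
      intro w; ext1 k; simp only [Function.comp_apply, Pi.smul_apply, smul_eq_mul, map_mul, map_pow, e0s]
    rw [hsm, hsm, e0b, ← map_mulVec', e0x] at h2
    exact h2
  have A2 : s0 ^ M • ((τ' : Matrix ι ι B[X][X]) *ᵥ (sb cc x ∘ v)) = s0 ^ M • (sb cc b ∘ v) := by
    rw [← mulVec_smul, ← A1, ← mulVec_smul, mulVec_mulVec, ← Units.val_mul]
    simp only [τ', inv_mul_cancel_right]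
    rw [mulVec_smul, A0]
  have A3 : e0 ∘ ((τ' : Matrix ι ι B[X][X]) *ᵥ (sb cc x ∘ v)) = sb cc x ∘ v := by
    rw [← map_mulVec', e0x]
    have : GeneralLinearGroup.map e0 τ' = 1 := by
      have h3 : GeneralLinearGroup.map e0 τ0 = τ0 := by
        apply Units.ext
        ext1 p q
        simp [τ0, e0]
      simp only [τ', map_mul, map_inv, h3]
      simp [τ0]
    rw [this]; simp
  have A4 : ∀ k, ∃ u : B[X][X], ((τ' : Matrix ι ι B[X][X]) *ᵥ (sb cc x ∘ v)) k = sb cc b (v k) + X * u ∧ s0 ^ M * u = 0 := by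
    intro k
    have h0 : e0 (((τ' : Matrix ι ι B[X][X]) *ᵥ (sb cc x ∘ v)) k - sb cc b (v k)) = 0 := by
      have h1 := congrFun A3 k
      have h2 := congrFun e0b k
      simp only [Function.comp_apply] at h1 h2
      rw [map_sub, h2, sub_eq_zero]
      exact h1
    have h0' : X ∣ (((τ' : Matrix ι ι B[X][X]) *ᵥ (sb cc x ∘ v)) k - sb cc b (v k)) := by
      rw [X_dvd_iff, coeff_zero_eq_eval_zero]
      exact C_injective (by rw [C_0]; exact h0)
    obtain ⟨u, hu⟩ := h0'
    refine ⟨u, by rw [← hu]; ring, ?_⟩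
    have h5 := congrFun A2 k
    simp only [Pi.smul_apply, smul_eq_mul, Function.comp_apply] at h5
    have h6 : X * (s0 ^ M * u) = 0 := by linear_combination s0 ^ M * (-hu) + h5
    exact monic_X.isRegular.left (by simpa using h6)
  refine ⟨M + N, fun T _ g x' y' => ?_⟩
  let h : B[X][X] →+* T := eval₂RingHom (sb g x') (g (s ^ M) * y')
  have hcc : h.comp cc = g := by ext; simp [h, cc]
  have hx : h x = x' := by simp [h, x]
  have hs0 : h s0 = g s := by simp [h, s0]
  have hb : h b = x' + g (s ^ (M + N)) * y' := by
    have hy : h y = g (s ^ M) * y' := by simp [h, y]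
    simp only [b, map_add, map_mul, map_pow, hx, hs0, hy]; ring
  refine Rel.symm ⟨GeneralLinearGroup.map h τ', map_mem_E _ hτ', ?_⟩
  have h7 : sb g x' ∘ v = h ∘ (sb cc x ∘ v) := by
    ext1 k; simp only [Function.comp_apply]; rw [sb_comp, hcc, hx]
  rw [h7, map_mulVec']
  ext1 k
  obtain ⟨u, hu, hu0⟩ := A4 k
  simp only [Function.comp_apply]
  rw [hu, map_add, sb_comp, hcc, hb, map_mul]
  have h8 : h X = g (s ^ M) * y' := by simp [h]
  have h9 : g (s ^ M) * h u = 0 := by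
    have := congrArg h hu0
    rw [map_mul, map_zero] at this
    have h10 : h (s0 ^ M) = g (s ^ M) := by rw [map_pow, map_pow, hs0]
    rwa [h10] at this
  rw [h8]
  linear_combination y' * h9

theorem monic_thm (hc : ∀ i j : ι, ∃ l, l ≠ i ∧ l ≠ j) (v : ι → B[X]) (hv : Um v) (i : ι)
    (hm : (v i).Monic) : Rel v ((C : B →+* B[X]) ∘ (evalRingHom 0 ∘ v)) := by
  have hQ : QI v = ⊤ := by
    by_contra hne
    obtain ⟨m, hmm, hle⟩ := Ideal.exists_le_maximal _ hne
    let Bm := Localization.AtPrime m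
    let g : B →+* Bm := algebraMap B Bm
    letI : Algebra B[X] Bm[X] := (mapRingHom g).toAlgebra
    haveI : IsLocalization (m.primeCompl.map (C : B →+* B[X])) Bm[X] :=
      Polynomial.isLocalization m.primeCompl Bm
    have h1 : Rel (algebraMap B[X] Bm[X] ∘ v) (Pi.single i 1) :=
      local_monic hc _ (algebraMap B[X] Bm[X] ∘ v) i (hv.map _) (hm.map g) rfl i
    obtain ⟨_, ⟨s, hs, rfl⟩, H⟩ := descent.{u} (m.primeCompl.map (C : B →+* B[X])) v i h1
    obtain ⟨N, hN⟩ := pow_mem_QI hc v s i H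
    exact hs (hmm.isPrime.mem_of_pow_mem N (hle hN))
  have h1 : (1 : B) ∈ QI v := by rw [hQ]; trivial
  have h2 := h1 B[X] C 0 X
  convert h2 using 1
  · ext1 k; simp [sb]
  · ext1 k; simp [sb, coeff_zero_eq_eval_zero]

lemma TT.of_monic (hc : ∀ i j : ι, ∃ l, l ≠ i ∧ l ≠ j) (hB : TT ι B) (v : ι → B[X]) (hv : Um v)
    (i : ι) (hm : (v i).Monic) (j : ι) : Rel v (Pi.single j 1) := by
  refine (monic_thm hc v hv i hm).trans ?_
  have := (hB _ (hv.map (evalRingHom 0)) j).map (C : B →+* B[X])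
  rwa [comp_single] at this

end MonicThm
end DK
end

noncomputable section

set_option linter.unusedSimpArgs false
set_option linter.unusedSectionVars false
set_option linter.unusedVariables false
set_option linter.style.longLine false
set_option linter.style.haveILetI false
namespace DK
open Matrix

section SR
universe u

lemma dim_quot_succ {D : Type*} [CommRing D] (J : Ideal D)
    (hJ : ∀ p ∈ minimalPrimes D, ¬ J ≤ p) : ringKrullDim (D ⧸ J) + 1 ≤ ringKrullDim D := by
  by_cases hr' : J = ⊤
  · rw [hr', ringKrullDim_eq_bot_of_subsingleton]
    simp
  have : Nonempty (PrimeSpectrum.zeroLocus (R := D) J) := by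
    rwa [Set.nonempty_coe_sort, Set.nonempty_iff_ne_empty, ne_eq,
      PrimeSpectrum.zeroLocus_empty_iff_eq_top]
  have := Ideal.Quotient.nontrivial_iff.mpr hr'
  have := (Ideal.Quotient.mk J).domain_nontrivial
  rw [ringKrullDim_quotient, Order.krullDim_eq_iSup_length, ringKrullDim,
    Order.krullDim_eq_iSup_length, ← WithBot.coe_one, ← WithBot.coe_add,
    ENat.iSup_add, WithBot.coe_le_coe, iSup_le_iff]
  intro l
  obtain ⟨p, hp, hp'⟩ := Ideal.exists_minimalPrimes_le (J := l.head.1.asIdeal) bot_le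
  let p' : PrimeSpectrum D := ⟨p, hp.1.1⟩
  have hp' : p' < (l.head : PrimeSpectrum D) := by
    refine lt_of_le_of_ne hp' fun h => hJ p hp ?_
    have h1 := l.head.2
    have h2 : (l.head : PrimeSpectrum D).asIdeal = p := by rw [← h]
    rw [PrimeSpectrum.mem_zeroLocus, h2] at h1
    exact h1
  let l' : LTSeries (PrimeSpectrum D) := (l.map Subtype.val (Subtype.strictMono_coe _)).cons p' hp'
  have h3 : l'.length = l.length + 1 := by
    change 0 + l.length + 1 = l.length + 1
    omega
  refine le_trans ?_ (le_iSup _ l')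
  rw [h3]; simp

lemma exists_not_mem_of_minimal {D : Type*} [CommRing D] (p : Ideal D) (hp : p ∈ minimalPrimes D)
    (b : D) (hb : b ∈ p) : ∃ y, y ∉ p ∧ IsNilpotent (y * b) := by
  have hpp : p.IsPrime := hp.1.1
  have h := Ideal.disjoint_nonZeroDivisors_of_mem_minimalPrimes hp
  by_contra hcon
  push Not at hcon
  -- the monoid generated by complement and powers of b
  let S : Submonoid D := p.primeCompl ⊔ Submonoid.powers b
  have h0 : (0 : D) ∉ S := by
    intro h0
    obtain ⟨y, hy, _, ⟨n, rfl⟩, e⟩ := Submonoid.mem_sup.1 h0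
    refine hcon y hy ⟨n + 1, ?_⟩
    have : (y * b) ^ (n + 1) = y ^ n * b * (y * b ^ n) := by ring
    rw [this]
    simp only at e
    rw [e, mul_zero]
  obtain ⟨q, hq, hqd, hqS⟩ := Ideal.exists_le_prime_disjoint (⊥ : Ideal D) S (by
    rw [Set.disjoint_left]
    intro x hx hx'
    rw [SetLike.mem_coe, Ideal.mem_bot] at hx
    exact h0 (hx ▸ hx'))
  have hle : q ≤ p := by
    intro x hx
    by_contra hxp
    exact Set.disjoint_left.1 hqS hx (Submonoid.mem_sup_left (S := p.primeCompl) (T := Submonoid.powers b) hxp)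
  have := hp.2 ⟨hq, bot_le⟩ hle
  exact Set.disjoint_left.1 hqS (this hb) (Submonoid.mem_sup_right (S := p.primeCompl) (Submonoid.mem_powers b))

lemma SR (n : ℕ) : ∀ {B : Type*} {D : Type u} [CommRing B] [CommRing D] (g : B →+* D)
    (_ : ∀ y : D, ∃ (w : D) (b : B), IsUnit w ∧ w * y = g b) (_ : ringKrullDim D < n)
    (a : B) (b : Fin n → B)
    (_ : ∀ p : Ideal D, p.IsPrime → ¬ (g a ∈ p ∧ ∀ i, g (b i) ∈ p)),
    ∃ x : Fin n → B, ∀ p : Ideal D, p.IsPrime → ¬ ∀ i, g (b i + a * x i) ∈ p := by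
  induction n with
  | zero =>
    intro B D _ _ g hg hd a b H
    refine ⟨Fin.elim0, fun p hp => ?_⟩
    exfalso
    have : Nontrivial D := by
      have := Ideal.Quotient.nontrivial_iff.2 hp.ne_top
      exact (Ideal.Quotient.mk p).domain_nontrivial
    have h1 := ringKrullDim_nonneg_of_nontrivial (R := D)
    exact absurd (lt_of_le_of_lt h1 hd) (by simp)
  | succ n ih =>
    intro B D _ _ g hg hd a b H
    let bl := g (b (Fin.last n))
    let J : Ideal D := Ideal.span {bl} ⊔ (nilradical D).colon {bl}
    have hJ : ∀ p ∈ minimalPrimes D, ¬ J ≤ p := by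
      intro p hp hle
      obtain ⟨y, hy, hyn⟩ := exists_not_mem_of_minimal p hp bl
        (hle (Ideal.mem_sup_left (Ideal.mem_span_singleton_self _)))
      refine hy (hle (Ideal.mem_sup_right ?_))
      rw [Submodule.mem_colon_singleton]
      exact hyn
    have hdim := dim_quot_succ J hJ
    have hd' : ringKrullDim (D ⧸ J) < n := by
      have := lt_of_le_of_lt hdim hd
      refine not_le.1 fun h => absurd this (not_lt.2 ?_)
      push_cast
      gcongr
    let π : D →+* D ⧸ J := Ideal.Quotient.mk J
    obtain ⟨x, hx⟩ := ih (π.comp g) (by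
        intro y
        obtain ⟨y, rfl⟩ := Ideal.Quotient.mk_surjective y
        obtain ⟨w, b, hw, e⟩ := hg y
        exact ⟨π w, b, hw.map π, by rw [← map_mul, e]; rfl⟩) hd' a (fun i => b i.castSucc) (by
        rintro p hp ⟨h1, h2⟩
        have : (p.comap π).IsPrime := hp.comap π
        refine H (p.comap π) this ⟨h1, fun i => ?_⟩
        refine Fin.lastCases ?_ (fun i => h2 i) i
        have : π bl = 0 := Ideal.Quotient.eq_zero_iff_mem.2 (Ideal.mem_sup_left (Ideal.mem_span_singleton_self _))
        rw [Ideal.mem_comap]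
        change π bl ∈ p
        rw [this]; exact p.zero_mem)
    have htop : Ideal.span (Set.range fun i : Fin n => g (b i.castSucc + a * x i)) ⊔ J = ⊤ := by
      by_contra hne
      obtain ⟨m, hm, hle⟩ := Ideal.exists_le_maximal _ hne
      have hJm : J ≤ m := le_sup_right.trans hle
      have hmp : (m.map π).IsPrime := by
        refine Ideal.map_isPrime_of_surjective Ideal.Quotient.mk_surjective ?_
        rw [Ideal.mk_ker]; exact hJm
      refine hx _ hmp fun i => Ideal.mem_map_of_mem π ?_
      exact hle (Ideal.mem_sup_left (Ideal.subset_span ⟨i, rfl⟩))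
    have h1 : (1 : D) ∈ Ideal.span (Set.range fun i : Fin n => g (b i.castSucc + a * x i)) ⊔ J := by
      rw [htop]; trivial
    obtain ⟨c, hc, z, hz, e1⟩ := Submodule.mem_sup.1 h1
    obtain ⟨z1, hz1, y, hy, e2⟩ := Submodule.mem_sup.1 hz
    rw [Submodule.mem_colon_singleton, smul_eq_mul] at hy
    obtain ⟨w, y', hw, ey⟩ := hg y
    refine ⟨Fin.lastCases y' x, fun p hp hall => ?_⟩
    have hlast := hall (Fin.last n)
    simp only [Fin.lastCases_last] at hlast
    have hcast : ∀ i : Fin n, g (b i.castSucc + a * x i) ∈ p := by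
      intro i
      have := hall i.castSucc
      simpa only [Fin.lastCases_castSucc] using this
    have hcp : c ∈ p := by
      have : Ideal.span (Set.range fun i : Fin n => g (b i.castSucc + a * x i)) ≤ p :=
        Ideal.span_le.2 (by rintro _ ⟨i, rfl⟩; exact hcast i)
      exact this hc
    have hyb : y * bl ∈ p := by
      have h2 : y * bl ∈ nilradical D := hy
      rw [nilradical_eq_sInf] at h2
      exact Submodule.mem_sInf.1 h2 p hp
    have hblp : bl ∈ p → y ∈ p → False := by
      intro hb hy
      refine hp.ne_top ((Ideal.eq_top_iff_one _).2 ?_)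
      rw [← e1, ← e2]
      refine p.add_mem hcp (p.add_mem ?_ hy)
      exact (Ideal.span_singleton_le_iff_mem p).2 hb hz1
    have hyy : g y' ∈ p ↔ y ∈ p := by
      rw [← ey]
      constructor
      · intro h
        rcases hp.mem_or_mem h with h | h
        · exact absurd (Ideal.eq_top_of_isUnit_mem _ h hw) hp.ne_top
        · exact h
      · exact fun h => p.mul_mem_left _ h
    rw [map_add, map_mul] at hlast
    by_cases hyp : y ∈ p
    · refine hblp ?_ hyp
      have := p.sub_mem hlast (p.mul_mem_left (g a) (hyy.2 hyp))
      simpa using this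
    · have hbp : bl ∈ p := (hp.mem_or_mem hyb).resolve_left hyp
      have hap : g a ∈ p := by
        have h3 := p.sub_mem hlast hbp
        have h4 : g a * g y' ∈ p := by
          have : g a * g y' = g (b (Fin.last n)) + g a * g y' - bl := by simp [bl]
          rw [this]; exact h3
        exact (hp.mem_or_mem h4).resolve_right (fun h => hyp (hyy.1 h))
      refine H p hp ⟨hap, fun i => ?_⟩
      refine Fin.lastCases hbp (fun i => ?_) i
      have := hcast i
      rw [map_add, map_mul] at this
      have h5 := p.sub_mem this (p.mul_mem_right (g (x i)) hap)
      simpa using h5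

lemma SR_rel {n : ℕ} {B : Type*} {D : Type u} [CommRing B] [CommRing D] (g : B →+* D)
    (hg : ∀ y : D, ∃ (w : D) (b : B), IsUnit w ∧ w * y = g b) (hd : ringKrullDim D < n)
    (v : Fin (n + 1) → B) (hv : Um v) : ∃ v', Rel v v' ∧ v' 0 = v 0 ∧
      Ideal.span (Set.range fun i : Fin n => g (v' i.succ)) = ⊤ := by
  obtain ⟨x, hx⟩ := SR n g hg hd (v 0) (fun i => v i.succ) (by
    rintro p hp ⟨h0, h1⟩
    obtain ⟨u, hu⟩ := hv
    refine hp.ne_top ((Ideal.eq_top_iff_one _).2 ?_)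
    rw [← map_one g, ← hu, map_sum]
    refine p.sum_mem fun i _ => ?_
    rw [map_mul]
    refine p.mul_mem_left _ ?_
    exact Fin.cases h0 h1 i)
  refine ⟨_, Rel.addMul 0 v (Fin.cases 0 x) (Finset.univ.erase 0) (by simp), by simp, ?_⟩
  by_contra hne
  obtain ⟨m, hm, hle⟩ := Ideal.exists_le_maximal _ hne
  refine hx m hm.isPrime fun i => hle (Ideal.subset_span ⟨i, ?_⟩)
  simp [mul_comm]

lemma TT_bass {n : ℕ} {B : Type u} [CommRing B] (hd : ringKrullDim B < n) : TT (Fin (n + 1)) B := by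
  intro v hv j
  obtain ⟨v', hr, h0, hs⟩ := SR_rel (RingHom.id B) (fun y => ⟨1, y, isUnit_one, by simp⟩) hd v hv
  refine hr.trans ?_
  have h1 : (1 : B) ∈ Ideal.span (Set.range fun i : Fin n => (RingHom.id B) (v' i.succ)) := by
    rw [hs]; trivial
  obtain ⟨c, hc⟩ := (Ideal.mem_span_range_iff_exists_fun).1 h1
  refine Rel.of_span (i := 0) (Fin.cases 0 c) ?_
  have : (Finset.univ.erase (0 : Fin (n + 1))) = Finset.univ.image Fin.succ := by
    ext i; refine Fin.cases ?_ (fun i => ?_) i <;> simp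
  rw [this, Finset.sum_image (fun a _ b _ h => Fin.succ_injective _ h)]
  simpa using hc

end SR
end DK
end

noncomputable section

set_option linter.unusedSimpArgs false
set_option linter.unusedSectionVars false
set_option linter.unusedVariables false
set_option linter.style.longLine false
set_option linter.style.haveILetI false
namespace DK
open Matrix

section PolyDim
open Polynomial
universe u

/-- polynomials with leading coefficient in `S` -/
def lcS {B : Type*} [CommRing B] (S : Submonoid B) (h0 : (0 : B) ∉ S) : Submonoid B[X] where
  carrier := {h | h.leadingCoeff ∈ S}
  one_mem' := by
    have : Nontrivial B := ⟨0, 1, fun h => h0 (h ▸ S.one_mem)⟩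
    simp [S.one_mem]
  mul_mem' := by
    intro a b ha hb
    have : a.leadingCoeff * b.leadingCoeff ≠ 0 := fun h => h0 (h ▸ S.mul_mem ha hb)
    change (a * b).leadingCoeff ∈ S
    rw [leadingCoeff_mul' this]
    exact S.mul_mem ha hb

lemma mem_lcS {B : Type*} [CommRing B] {S : Submonoid B} {h0 : (0 : B) ∉ S} {h : B[X]} :
    h ∈ lcS S h0 ↔ h.leadingCoeff ∈ S := Iff.rfl

lemma zero_lcS {B : Type*} [CommRing B] {S : Submonoid B} {h0 : (0 : B) ∉ S} :
    (0 : B[X]) ∉ lcS S h0 := by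
  rw [mem_lcS, leadingCoeff_zero]; exact h0

lemma exists_lc_mem {B L : Type*} [CommRing B] [CommRing L] [Algebra B L] (S : Submonoid B)
    (h0 : (0 : B) ∉ S) [IsLocalization S L] (I : Ideal B[X]) (f : L[X]) (hf : f.Monic)
    (hfI : f ∈ I.map (mapRingHom (algebraMap B L))) : ∃ h ∈ I, h ∈ lcS S h0 := by
  letI : Algebra B[X] L[X] := (mapRingHom (algebraMap B L)).toAlgebra
  haveI : IsLocalization (S.map (C : B →+* B[X])) L[X] := Polynomial.isLocalization S L
  obtain ⟨⟨⟨h, hI⟩, ⟨_, s, hs, rfl⟩⟩, e⟩ :=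
    (IsLocalization.mem_map_algebraMap_iff (S.map (C : B →+* B[X])) L[X]).1 hfI
  have e' : f * C (algebraMap B L s) = h.map (algebraMap B L) := by
    have : (algebraMap B[X] L[X]) (C s) = C (algebraMap B L s) := by
      change mapRingHom (algebraMap B L) (C s) = _
      simp
    rw [← this]; exact e
  let n := f.natDegree
  -- kill higher coefficients
  have hk : ∀ k, ∃ t ∈ S, (n < k → t * h.coeff k = 0) ∧ (k = n → t * (h.coeff k - s) = 0) := by
    intro k
    have hc := congrArg (fun p => coeff p k) e'
    simp only [coeff_mul_C, coeff_map] at hc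
    rcases lt_trichotomy k n with hkn | rfl | hkn
    · exact ⟨1, S.one_mem, fun h => by omega, fun h => by omega⟩
    · have : algebraMap B L (h.coeff n - s) = 0 := by
        rw [map_sub, ← hc]
        simp only [n]
        rw [hf.coeff_natDegree]; ring
      obtain ⟨t, ht⟩ := (IsLocalization.map_eq_zero_iff S L _).1 this
      exact ⟨t, t.2, fun h => by omega, fun _ => ht⟩
    · have : algebraMap B L (h.coeff k) = 0 := by
        rw [← hc, coeff_eq_zero_of_natDegree_lt hkn, zero_mul]
      obtain ⟨t, ht⟩ := (IsLocalization.map_eq_zero_iff S L _).1 this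
      exact ⟨t, t.2, fun _ => ht, fun h => by omega⟩
  choose t htS ht1 ht2 using hk
  let T := ∏ k ∈ Finset.range (h.natDegree + n + 2), t k
  have hT : T ∈ S := S.prod_mem fun k _ => htS k
  have hT1 : ∀ k, n < k → T * h.coeff k = 0 := by
    intro k hk
    by_cases hkr : k ∈ Finset.range (h.natDegree + n + 2)
    · obtain ⟨q, hq⟩ := Finset.dvd_prod_of_mem t hkr
      rw [show T = t k * q from hq, mul_right_comm, ht1 k hk, zero_mul]
    · rw [coeff_eq_zero_of_natDegree_lt (by simp at hkr; omega), mul_zero]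
  have hT2 : T * h.coeff n = T * s := by
    obtain ⟨q, hq⟩ := Finset.dvd_prod_of_mem t (show n ∈ Finset.range (h.natDegree + n + 2) by simp; omega)
    rw [show T = t n * q from hq]
    linear_combination q * ht2 n rfl
  have hTs : T * s ∈ S := S.mul_mem hT hs
  refine ⟨C T * h, I.mul_mem_left _ hI, ?_⟩
  have hnd : (C T * h).natDegree = n := by
    refine natDegree_eq_of_le_of_coeff_ne_zero ?_ ?_
    · rw [natDegree_le_iff_coeff_eq_zero]
      intro k hk
      rw [coeff_C_mul, hT1 k hk]
    · rw [coeff_C_mul, hT2]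
      exact fun h => h0 (h ▸ hTs)
  rw [mem_lcS, leadingCoeff, hnd, coeff_C_mul, hT2]
  exact hTs

lemma exists_monic_of_maximal {L : Type*} [CommRing L] (q : Ideal L[X]) [hq : q.IsMaximal]
    (hp : (q.comap (C : L →+* L[X])).IsMaximal) : ∃ f ∈ q, f.Monic := by
  set p := q.comap (C : L →+* L[X]) with hpdef
  letI : Field (L ⧸ p) := Ideal.Quotient.field p
  let π : L[X] →+* (L ⧸ p)[X] := mapRingHom (Ideal.Quotient.mk p)
  have hπ : Function.Surjective π := map_surjective _ Ideal.Quotient.mk_surjective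
  have hker : RingHom.ker π ≤ q := by
    rw [ker_mapRingHom, Ideal.mk_ker, Ideal.map_le_iff_le_comap]
  have hex : ∃ f ∈ q, π f ≠ 0 := by
    by_contra hcon
    push Not at hcon
    have hk : RingHom.ker π = q := le_antisymm hker fun f hf => hcon f hf
    have h1 : (RingHom.ker π).IsMaximal := hk ▸ hq
    have h2 : IsField (L ⧸ p)[X] := by
      have h3 : IsField (L[X] ⧸ RingHom.ker π) := (Ideal.Quotient.maximal_ideal_iff_isField_quotient _).1 h1
      exact MulEquiv.isField h3 (RingHom.quotientKerEquivOfSurjective hπ).symm.toMulEquiv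
    exact Polynomial.not_isField _ h2
  obtain ⟨f, hf, hf0⟩ := hex
  have hlc : (π f).leadingCoeff ≠ 0 := leadingCoeff_ne_zero.2 hf0
  have hm : (π f * C (π f).leadingCoeff⁻¹).Monic := monic_mul_leadingCoeff_inv hf0
  have hmem : π f * C (π f).leadingCoeff⁻¹ ∈ lifts (Ideal.Quotient.mk p) := by
    obtain ⟨g, hg⟩ := hπ (π f * C (π f).leadingCoeff⁻¹)
    exact (mem_lifts _).2 ⟨g, hg⟩
  obtain ⟨g, hg, _, hgm⟩ := lifts_and_degree_eq_and_monic hmem hm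
  refine ⟨g, ?_, hgm⟩
  obtain ⟨c, hc⟩ := hπ (C (π f).leadingCoeff⁻¹)
  have : π (g - f * c) = 0 := by
    rw [map_sub, map_mul, hc, sub_eq_zero]; exact hg
  have h4 := q.add_mem (hker this) (q.mul_mem_right c hf)
  simpa using h4

lemma height_le_of_no_monic {L : Type*} [CommRing L] [IsNoetherianRing L] {d : ℕ}
    (hd : ringKrullDim L ≤ d) (q : Ideal L[X]) [hq : q.IsPrime] (h : ∀ f ∈ q, ¬ f.Monic) :
    q.height ≤ d := by
  have hdim : ∀ p : Ideal L, p.IsPrime → p.height ≤ d := by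
    intro p hp
    have := Ideal.height_le_ringKrullDim_of_isPrime (I := p) |>.trans hd
    exact_mod_cast this
  by_cases hm : q.IsMaximal
  · set p := q.comap (C : L →+* L[X]) with hp
    have hpp : p.IsPrime := Ideal.comap_isPrime _ _
    haveI : q.LiesOver p := ⟨rfl⟩
    rw [height_eq_height_add_one p q]
    have hnm : ¬ p.IsMaximal := fun hpm => by
      obtain ⟨f, hf, hfm⟩ := exists_monic_of_maximal q hpm
      exact h f hf hfm
    obtain ⟨m, hmm, hle⟩ := Ideal.exists_le_maximal p hpp.ne_top
    have hlt : p < m := lt_of_le_of_ne hle fun e => hnm (e ▸ hmm)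
    have := hmm.isPrime
    exact (Ideal.height_add_one_le_of_lt_of_isPrime hlt).trans (hdim m this)
  · obtain ⟨m, hmm, hle⟩ := Ideal.exists_le_maximal q hq.ne_top
    have hlt : q < m := lt_of_le_of_ne hle fun e => hm (e ▸ hmm)
    have := hmm.isPrime
    have h1 := Ideal.height_add_one_le_of_lt_of_isPrime hlt
    have h2 : (m.height : WithBot ℕ∞) ≤ (d + 1 : ℕ) := by
      refine (Ideal.height_le_ringKrullDim_of_isPrime (I := m)).trans ?_
      rw [Polynomial.ringKrullDim_of_isNoetherianRing]
      push_cast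
      gcongr
    have h3 : m.height ≤ (d + 1 : ℕ) := by exact_mod_cast h2
    have h4 : q.height + 1 ≤ (d : ℕ∞) + 1 := by
      refine h1.trans (h3.trans ?_)
      push_cast; exact le_rfl
    exact (ENat.add_le_add_iff_right ENat.one_ne_top).1 h4

lemma dim_lcS {B : Type*} [CommRing B] [IsNoetherianRing B] (S : Submonoid B) (h0 : (0 : B) ∉ S)
    {d : ℕ} (hd : ringKrullDim (Localization S) ≤ d) :
    ringKrullDim (Localization (lcS S h0)) ≤ d := by
  rw [ringKrullDim_le_iff_height_le]
  intro Q hQ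
  let L := Localization S
  have hL : IsNoetherianRing L := IsLocalization.isNoetherianRing S L inferInstance
  letI : Algebra B[X] L[X] := (mapRingHom (algebraMap B L)).toAlgebra
  haveI hloc : IsLocalization (S.map (C : B →+* B[X])) L[X] := Polynomial.isLocalization S L
  set q := Q.under B[X] with hqdef
  have hqp : q.IsPrime := Ideal.comap_isPrime _ _
  have hqd : Disjoint (lcS S h0 : Set B[X]) q :=
    ((IsLocalization.isPrime_iff_isPrime_disjoint (lcS S h0) _ Q).1 hQ).2
  have hqd' : Disjoint (S.map (C : B →+* B[X]) : Set B[X]) q := by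
    refine Set.disjoint_of_subset_left ?_ hqd
    rintro _ ⟨s, hs, rfl⟩
    change (C s).leadingCoeff ∈ S
    rwa [leadingCoeff_C]
  set q' := q.map (algebraMap B[X] L[X]) with hq'
  have hq'p : q'.IsPrime := IsLocalization.isPrime_of_isPrime_disjoint _ _ _ hqp hqd'
  have hun : q'.under B[X] = q := IsLocalization.under_map_of_isPrime_disjoint _ _ hqp hqd'
  have e1 : q.height = Q.height := IsLocalization.height_under (lcS S h0) Q
  have e2 : q.height = q'.height := by
    rw [← hun]; exact IsLocalization.height_under (S.map (C : B →+* B[X])) q'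
  rw [← e1, e2]
  have := height_le_of_no_monic hd q' (by
    intro f hf hfm
    obtain ⟨h, hh, hhl⟩ := exists_lc_mem S h0 q f hfm hf
    exact Set.disjoint_left.1 hqd hhl hh)
  exact_mod_cast this

/-- every element of `S` becomes monic after an automorphism -/
def Mon {B : Type*} [CommRing B] (S : Submonoid B[X]) : Prop :=
  ∀ h ∈ S, ∃ ψ : B[X] ≃+* B[X], (ψ h).Monic

/-- change of variables -/
def chV (D : Type*) [CommRing D] (N : ℕ) : D[X][X] ≃+* D[X][X] :=
  RingEquiv.ofRingHom
    (eval₂RingHom (mapRingHom (C : D →+* D[X])) (C X + X ^ N))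
    (eval₂RingHom (eval₂RingHom ((C : D[X] →+* D[X][X]).comp C) (X - C X ^ N)) (C X))
    (by ext <;> simp [eval₂_pow]) (by ext <;> simp [eval₂_pow])

lemma chV_monic {D : Type*} [CommRing D] [Nontrivial D] (g : D[X][X]) (hg : g.leadingCoeff.Monic) :
    ∃ N, (chV D N g).Monic := by
  let e := (Finset.range (g.natDegree + 1)).sup fun i => (g.coeff i).natDegree
  have he : ∀ i, (g.coeff i).natDegree ≤ e := by
    intro i
    by_cases hi : i ∈ Finset.range (g.natDegree + 1)
    · exact Finset.le_sup (f := fun i => (g.coeff i).natDegree) hi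
    · rw [coeff_eq_zero_of_natDegree_lt (by simp at hi; omega)]; simp
  let N := e + 1
  refine ⟨N, ?_⟩
  have e0 : chV D N g = ∑ i ∈ Finset.range (g.natDegree + 1),
      (g.coeff i).map (C : D →+* D[X]) * (C X + X ^ N) ^ i := by
    change eval₂ _ _ g = _
    rw [eval₂_eq_sum_range]; rfl
  have hXm : (C (X : D[X]) + X ^ N : D[X][X]).Monic := by
    rw [add_comm]; exact monic_X_pow_add_C _ (by omega)
  have hXd : (C (X : D[X]) + X ^ N : D[X][X]).natDegree = N := by
    rw [add_comm]; exact natDegree_X_pow_add_C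
  have hlm : ((g.coeff g.natDegree).map (C : D →+* D[X]) * (C X + X ^ N) ^ g.natDegree).Monic :=
    (hg.map _).mul (hXm.pow _)
  rw [e0, Finset.sum_range_succ, add_comm]
  refine hlm.add_of_left ?_
  have hdeg : N * g.natDegree ≤ ((g.coeff g.natDegree).map (C : D →+* D[X]) * (C X + X ^ N) ^ g.natDegree).natDegree := by
    have hg' : (g.coeff g.natDegree).Monic := hg
    rw [(hg'.map _).natDegree_mul (hXm.pow _), hXm.natDegree_pow, hXd, mul_comm]
    omega
  rw [degree_eq_natDegree hlm.ne_zero]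
  refine (degree_sum_le _ _).trans_lt ?_
  rw [Finset.sup_lt_iff (WithBot.bot_lt_coe _)]
  intro i hi
  rw [Finset.mem_range] at hi
  refine degree_le_natDegree.trans_lt ?_
  have h1 : ((g.coeff i).map (C : D →+* D[X]) * (C X + X ^ N) ^ i).natDegree ≤ e + i * N := by
    refine natDegree_mul_le.trans ?_
    rw [hXm.natDegree_pow, hXd]
    exact Nat.add_le_add_right (natDegree_map_le.trans (he i)) _
  have h2 : e + i * N < N * g.natDegree := by
    have : N * (i + 1) ≤ N * g.natDegree := Nat.mul_le_mul_left _ hi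
    have h3 : N * (i + 1) = i * N + N := by ring
    omega
  exact_mod_cast lt_of_le_of_lt h1 (lt_of_lt_of_le h2 hdeg)

lemma Mon.lcS {D : Type*} [CommRing D] {S : Submonoid D[X]} (hS : Mon S) (h0 : (0 : D[X]) ∉ S) :
    Mon (lcS S h0) := by
  intro h hh
  have : Nontrivial D[X] := ⟨0, 1, fun h => h0 (h ▸ S.one_mem)⟩
  have : Nontrivial D := Polynomial.nontrivial_iff.1 this
  obtain ⟨ψ, hψ⟩ := hS _ hh
  let g := mapEquiv ψ h
  have hg : g.leadingCoeff.Monic := by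
    have : g.leadingCoeff = ψ h.leadingCoeff := by
      simp only [g, mapEquiv_apply]
      exact leadingCoeff_map_of_injective (f := (ψ : D[X] →+* D[X])) ψ.injective h
    rw [this]; exact hψ
  obtain ⟨N, hN⟩ := chV_monic g hg
  exact ⟨(mapEquiv ψ).trans (chV D N), hN⟩

lemma TT_poly {B : Type u} [CommRing B] [IsNoetherianRing B] (S : Submonoid B) (h0 : (0 : B) ∉ S)
    {d n : ℕ} (hd : ringKrullDim (Localization S) ≤ d) (hM : Mon (lcS S h0)) (hn : d < n) (hn2 : 2 ≤ n)
    (hB : TT (Fin (n + 1)) B) : TT (Fin (n + 1)) B[X] := by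
  have hc : ∀ i j : Fin (n + 1), ∃ l, l ≠ i ∧ l ≠ j := by
    intro i j
    obtain ⟨l, hl⟩ := Finset.exists_mem_notMem_of_card_lt_card (s := {i, j}) (t := (Finset.univ : Finset (Fin (n + 1)))) (by
      refine lt_of_le_of_lt Finset.card_le_two ?_
      simp; omega)
    simp at hl
    exact ⟨l, hl.1, hl.2⟩
  intro v hv j
  let T := lcS S h0
  have hdim := dim_lcS S h0 hd
  obtain ⟨v', hr, h00, hs⟩ := SR_rel (algebraMap B[X] (Localization T)) (by
      intro y
      obtain ⟨⟨b, t⟩, e⟩ := IsLocalization.surj T y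
      exact ⟨_, b, IsLocalization.map_units _ t, by rw [mul_comm]; exact e⟩)
    (lt_of_le_of_lt hdim (by exact_mod_cast hn)) v hv
  refine hr.trans ?_
  -- an element of T in the ideal of the tail
  let I : Ideal B[X] := Ideal.span (Set.range fun i : Fin n => v' i.succ)
  have hI : I.map (algebraMap B[X] (Localization T)) = ⊤ := by
    rw [Ideal.map_span, ← hs]
    congr 1
    rw [← Set.range_comp]; rfl
  obtain ⟨g, hgI, hgT⟩ : ∃ g ∈ I, g ∈ T := by
    have h1 : (1 : Localization T) ∈ I.map (algebraMap B[X] (Localization T)) := by rw [hI]; trivial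
    obtain ⟨⟨⟨h, hI⟩, t⟩, e⟩ := (IsLocalization.mem_map_algebraMap_iff T _).1 h1
    simp only [one_mul] at e
    obtain ⟨c, hc⟩ := (IsLocalization.eq_iff_exists T (Localization T)).1 e
    exact ⟨c * h, I.mul_mem_left _ hI, hc ▸ T.mul_mem c.2 t.2⟩
  obtain ⟨c, hcg⟩ := (Ideal.mem_span_range_iff_exists_fun).1 hgI
  let K := (v' 0).natDegree + 1
  have R1 := Rel.comb 0 v' (fun i => X ^ K * (Fin.cases 0 c i : B[X])) (Finset.univ.erase 0) (by simp)
  set w := Function.update v' 0 (v' 0 + ∑ i ∈ Finset.univ.erase 0, X ^ K * (Fin.cases 0 c i : B[X]) * v' i) with hw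
  have hsum : ∑ i ∈ Finset.univ.erase 0, X ^ K * (Fin.cases 0 c i : B[X]) * v' i = X ^ K * g := by
    have : (Finset.univ.erase (0 : Fin (n + 1))) = Finset.univ.image Fin.succ := by
      ext i; refine Fin.cases ?_ (fun i => ?_) i <;> simp
    rw [this, Finset.sum_image (fun a _ b _ h => Fin.succ_injective _ h)]
    simp only [Fin.cases_succ, mul_assoc, ← Finset.mul_sum, hcg]
  have hw0 : w 0 ∈ T := by
    have h1 : w 0 = X ^ K * g + v' 0 := by rw [hw, Function.update_self, hsum, add_comm]
    have hg0 : g ≠ 0 := fun h => zero_lcS (h ▸ hgT)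
    have h2 : (v' 0).degree < (X ^ K * g).degree := by
      have : Nontrivial B := ⟨0, 1, fun h => h0 (by rw [h]; exact S.one_mem)⟩
      rw [X_pow_mul, degree_mul_X_pow, degree_eq_natDegree hg0]
      refine degree_le_natDegree.trans_lt ?_
      have : (v' 0).natDegree < g.natDegree + K := by omega
      exact_mod_cast this
    rw [h1, mem_lcS, add_comm, leadingCoeff_add_of_degree_lt h2, X_pow_mul, leadingCoeff_mul_X_pow]
    exact hgT
  refine R1.trans ?_
  obtain ⟨ψ, hψ⟩ := hM _ hw0
  have hwU : Um w := (hv.rel hr).rel R1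
  have h3 := TT.of_monic hc hB ((ψ : B[X] →+* B[X]) ∘ w) (hwU.map _) 0 hψ j
  have h4 := h3.map (ψ.symm : B[X] →+* B[X])
  rw [comp_single] at h4
  convert h4 using 1
  ext1 i; simp

theorem TT_mvPoly (R : Type u) [CommRing R] [IsNoetherianRing R] [Nontrivial R] {d n : ℕ} (hd : ringKrullDim R ≤ d)
    (hn : d < n) (hn2 : 2 ≤ n) (m : ℕ) : TT (Fin (n + 1)) (MvPolynomial (Fin m) R) := by
  suffices H : ∃ (B : Type u) (_ : CommRing B) (_ : IsNoetherianRing B) (_ : B ≃+* MvPolynomial (Fin m) R)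
      (S : Submonoid B) (h0 : (0 : B) ∉ S), ringKrullDim (Localization S) ≤ d ∧ Mon (lcS S h0) ∧
      TT (Fin (n + 1)) B by
    obtain ⟨B, _, _, e, _, _, _, _, h⟩ := H
    exact TT.of_equiv e h
  induction m with
  | zero =>
    refine ⟨R, inferInstance, inferInstance, (MvPolynomial.isEmptyRingEquiv R (Fin 0)).symm, ⊥, by simp, ?_, ?_, ?_⟩
    · have : ringKrullDim (Localization (⊥ : Submonoid R)) = ringKrullDim R :=
        ringKrullDim_eq_of_ringEquiv (IsLocalization.atUnits R (⊥ : Submonoid R) (S := Localization (⊥ : Submonoid R)) (by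
          intro x hx; rw [Submonoid.mem_bot.1 hx]; exact isUnit_one)).symm.toRingEquiv
      rw [this]; exact hd
    · intro h hh
      exact ⟨RingEquiv.refl _, Submonoid.mem_bot.1 hh⟩
    · exact TT_bass (lt_of_le_of_lt hd (by exact_mod_cast hn))
  | succ m ih =>
    obtain ⟨B, _, _, e, S, h0, hdS, hM, hT⟩ := ih
    refine ⟨B[X], inferInstance, inferInstance, ?_, lcS S h0, zero_lcS, dim_lcS S h0 hdS, hM.lcS _,
      TT_poly S h0 hdS hM hn hn2 hT⟩
    exact (mapEquiv e).trans (MvPolynomial.finSuccEquiv R m).symm.toRingEquiv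

end PolyDim
end DK
end

noncomputable section

set_option linter.unusedSimpArgs false
set_option linter.unusedSectionVars false
set_option linter.unusedVariables false
set_option linter.style.longLine false
set_option linter.style.haveILetI false
namespace DK
open Matrix

section Inv
universe u

lemma glue_elem {C Cf Ct D : Type*} [CommRing C] [CommRing Cf] [CommRing Ct] [CommRing D]
    [Algebra C Cf] [Algebra C Ct] [Algebra C D] (f t : C) [IsLocalization.Away f Cf]
    [IsLocalization.Away t Ct] [IsLocalization.Away (f * t) D] (jf : Cf →+* D) (jt : Ct →+* D)
    (hjf : ∀ c, jf (algebraMap C Cf c) = algebraMap C D c)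
    (hjt : ∀ c, jt (algebraMap C Ct c) = algebraMap C D c) (hft : IsCoprime t f)
    (a : Cf) (b : Ct) (hab : jf a = jt b) :
    ∃ c : C, algebraMap C Cf c = a ∧ algebraMap C Ct c = b := by
  obtain ⟨N, a0, ha⟩ := IsLocalization.Away.surj f a
  obtain ⟨M, b0, hb⟩ := IsLocalization.Away.surj t b
  have h1 : algebraMap C D (t ^ M * a0) = algebraMap C D (f ^ N * b0) := by
    have h2 := congrArg jf ha
    have h3 := congrArg jt hb
    simp only [map_mul, map_pow, hjf, hjt] at h2 h3 ⊢
    rw [← h2, ← h3, hab]; ring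
  obtain ⟨K, hK⟩ := IsLocalization.Away.exists_of_eq (f * t) h1
  obtain ⟨u, v, huv⟩ := IsCoprime.pow (m := K + M) (n := K + N) hft
  have hf : IsUnit (algebraMap C Cf (f ^ (K + N))) := by
    rw [map_pow]; exact (IsLocalization.Away.algebraMap_isUnit f).pow _
  have ht : IsUnit (algebraMap C Ct (t ^ (K + M))) := by
    rw [map_pow]; exact (IsLocalization.Away.algebraMap_isUnit t).pow _
  refine ⟨u * t ^ K * b0 + v * f ^ K * a0, ?_, ?_⟩
  · apply hf.mul_left_cancel
    have : f ^ (K + N) * (u * t ^ K * b0 + v * f ^ K * a0) = f ^ K * a0 := by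
      linear_combination (-u) * hK + f ^ K * a0 * huv
    rw [← map_mul, this, map_mul, ← ha]; simp only [map_pow]; ring
  · apply ht.mul_left_cancel
    have : t ^ (K + M) * (u * t ^ K * b0 + v * f ^ K * a0) = t ^ K * b0 := by
      linear_combination (v) * hK + t ^ K * b0 * huv
    rw [← map_mul, this, map_mul, ← hb]; simp only [map_pow]; ring

variable {ι : Type*} [Fintype ι] [DecidableEq ι]

lemma Um.pow_mem {C D : Type*} [CommRing C] [CommRing D] [Algebra C D] (f : C)
    [IsLocalization.Away f D] (w : ι → C) (h : Um (algebraMap C D ∘ w)) :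
    ∃ N, f ^ N ∈ Ideal.span (Set.range w) := by
  obtain ⟨u, hu⟩ := h
  have : (1 : D) ∈ (Ideal.span (Set.range w)).map (algebraMap C D) := by
    rw [← hu]
    refine Ideal.sum_mem _ fun i _ => Ideal.mul_mem_left _ _ (Ideal.mem_map_of_mem _ (Ideal.subset_span ⟨i, rfl⟩))
  obtain ⟨⟨⟨h, hI⟩, ⟨_, k, rfl⟩⟩, e⟩ := (IsLocalization.mem_map_algebraMap_iff (Submonoid.powers f) _).1 this
  simp only [one_mul] at e
  obtain ⟨K, hK⟩ := IsLocalization.Away.exists_of_eq f e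
  refine ⟨K + k, ?_⟩
  rw [pow_add, hK]
  exact Ideal.mul_mem_left _ _ hI

lemma glue (hc : ∀ i j : ι, ∃ l, l ≠ i ∧ l ≠ j)
    {C Cf Ct D : Type*} [CommRing C] [CommRing Cf] [CommRing Ct] [CommRing D]
    [Algebra C Cf] [Algebra C Ct] [Algebra C D] (f t : C) [IsLocalization.Away f Cf]
    [IsLocalization.Away t Ct] [IsLocalization.Away (f * t) D] (jf : Cf →+* D) (jt : Ct →+* D)
    (hjf : ∀ c, jf (algebraMap C Cf c) = algebraMap C D c)
    (hjt : ∀ c, jt (algebraMap C Ct c) = algebraMap C D c) (hft : IsCoprime t f)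
    (hC : TT ι C) (v : ι → Cf) (hv : Um v) (i : ι) (hr : Rel (jf ∘ v) (Pi.single i 1)) :
    Rel v (Pi.single i 1) := by
  have huf : IsUnit (algebraMap C D (f * t)) := IsLocalization.Away.algebraMap_isUnit (f * t)
  rw [map_mul, IsUnit.mul_iff] at huf
  have hdf : DenOK jf (algebraMap C Cf t) := by
    refine ⟨by rw [hjf]; exact huf.2, fun c => ?_⟩
    obtain ⟨N, a, ha⟩ := IsLocalization.Away.surj (f * t) c
    have hfi : IsUnit (algebraMap C Cf f) := IsLocalization.Away.algebraMap_isUnit f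
    obtain ⟨w, hw⟩ := hfi
    refine ⟨N, (↑(w⁻¹ ^ N) : Cf) * algebraMap C Cf a, ?_⟩
    have h1 : jf ↑(w⁻¹ ^ N) * algebraMap C D f ^ N = 1 := by
      rw [← hjf, ← hw, ← map_pow, ← map_mul, ← Units.val_pow_eq_pow_val, ← Units.val_mul]; simp
    rw [map_mul jf, hjf, ← ha]
    simp only [map_mul, map_pow, hjf]
    linear_combination (- algebraMap C D t ^ N * c) * h1
  have hdt : DenOK jt (algebraMap C Ct f) := by
    refine ⟨by rw [hjt]; exact huf.1, fun c => ?_⟩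
    obtain ⟨N, a, ha⟩ := IsLocalization.Away.surj (f * t) c
    have hfi : IsUnit (algebraMap C Ct t) := IsLocalization.Away.algebraMap_isUnit t
    obtain ⟨w, hw⟩ := hfi
    refine ⟨N, (↑(w⁻¹ ^ N) : Ct) * algebraMap C Ct a, ?_⟩
    have h1 : jt ↑(w⁻¹ ^ N) * algebraMap C D t ^ N = 1 := by
      rw [← hjt, ← hw, ← map_pow, ← map_mul, ← Units.val_pow_eq_pow_val, ← Units.val_mul]; simp
    rw [map_mul jt, hjt, ← ha]
    simp only [map_mul, map_pow, hjt]
    linear_combination (- algebraMap C D f ^ N * c) * h1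
  obtain ⟨σ, hσ, e⟩ := hr
  obtain ⟨ρf, hρf, ρt, hρt, eρ⟩ := split hc (algebraMap C Cf) (algebraMap C Ct) jf jt
    (by ext c; simp [hjf, hjt]) f t hft hdf hdt hσ
  have h1 : jf ∘ ((ρf : Matrix ι ι Cf) *ᵥ v) = jt ∘ ((ρt : Matrix ι ι Ct) *ᵥ (Pi.single i 1)) := by
    rw [← map_mulVec', ← map_mulVec', ← eρ, comp_single, ← e, Matrix.mulVec_mulVec, ← Units.val_mul]
  have h2 : ∀ k, ∃ c : C, algebraMap C Cf c = ((ρf : Matrix ι ι Cf) *ᵥ v) k ∧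
      algebraMap C Ct c = ((ρt : Matrix ι ι Ct) *ᵥ (Pi.single i 1)) k := fun k =>
    glue_elem f t jf jt hjf hjt hft _ _ (congrFun h1 k)
  choose w hw1 hw2 using h2
  have hwf : algebraMap C Cf ∘ w = (ρf : Matrix ι ι Cf) *ᵥ v := funext hw1
  have hwt : algebraMap C Ct ∘ w = (ρt : Matrix ι ι Ct) *ᵥ (Pi.single i 1) := funext hw2
  have rf : Rel v (algebraMap C Cf ∘ w) := ⟨ρf, hρf, hwf.symm⟩
  have rt : Rel (Pi.single i 1) (algebraMap C Ct ∘ w) := ⟨ρt, hρt, hwt.symm⟩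
  obtain ⟨N, hN⟩ := Um.pow_mem f w (hv.rel rf)
  obtain ⟨M, hM⟩ := Um.pow_mem t w ((Um.single i).rel rt)
  have hw : Um w := by
    obtain ⟨x, y, hxy⟩ := IsCoprime.pow (m := M) (n := N) hft
    have : (1 : C) ∈ Ideal.span (Set.range w) := by
      rw [← hxy]; exact Ideal.add_mem _ (Ideal.mul_mem_left _ _ hM) (Ideal.mul_mem_left _ _ hN)
    exact Ideal.mem_span_range_iff_exists_fun.1 this
  have := (hC w hw i).map (algebraMap C Cf)
  rw [comp_single] at this
  exact rf.trans this

lemma glue' (hc : ∀ i j : ι, ∃ l, l ≠ i ∧ l ≠ j)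
    {C Cf : Type u} [CommRing C] [CommRing Cf] [Algebra C Cf] (f t : C) [IsLocalization.Away f Cf]
    (hft : IsCoprime t f) (hC : TT ι C) (v : ι → Cf) (hv : Um v) (i : ι)
    (H : ∀ (D : Type u) [CommRing D] (j : Cf →+* D), IsUnit (j (algebraMap C Cf t)) →
      Rel (j ∘ v) (Pi.single i 1)) :
    Rel v (Pi.single i 1) := by
  haveI i1 : IsLocalization.Away (f * t) (Localization.Away (algebraMap C Cf t)) :=
    IsLocalization.Away.mul' Cf _ f t
  have hu1 : IsUnit (algebraMap Cf (Localization.Away (algebraMap C Cf t)) (algebraMap C Cf t)) :=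
    IsLocalization.Away.algebraMap_isUnit _
  have hu : IsUnit ((algebraMap C (Localization.Away (algebraMap C Cf t)) :
      C →+* (Localization.Away (algebraMap C Cf t))) t) := by
    rw [IsScalarTower.algebraMap_apply C Cf]; exact hu1
  exact glue hc f t (Ct := Localization.Away t) (D := Localization.Away (algebraMap C Cf t))
      (algebraMap _ _) (IsLocalization.Away.lift t hu) (fun c => (IsScalarTower.algebraMap_apply _ _ _ c).symm)
      (fun c => IsLocalization.Away.lift_eq _ _ _) hft hC v hv i (H _ _ hu1)

lemma inv_step (hc : ∀ i j : ι, ∃ l, l ≠ i ∧ l ≠ j) {S : Type u} [CommRing S] (g f : S)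
    (N : Submonoid S) (hg : g ∈ N) (hf : f ∈ N)
    (hN : ∀ x ∈ N, ∃ (a : ℕ) (h : S), x ∣ (g * f) ^ a * (1 + f * h))
    (D : Type u) [CommRing D] [Algebra S D] [IsLocalization N D] (hD : TT ι D)
    (hC : TT ι (Localization.Away g)) : TT ι (Localization.Away (g * f)) := by
  have key : TT ι (Localization.Away (algebraMap S (Localization.Away g) f)) := by
    intro v hv i
    haveI : IsLocalization.Away (g * f) (Localization.Away (algebraMap S (Localization.Away g) f)) :=
      IsLocalization.Away.mul' (Localization.Away g) _ g f
    have hle : Submonoid.powers (g * f) ≤ N := (Submonoid.powers_le).2 (N.mul_mem hg hf)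
    have hu : IsUnit (algebraMap S D (g * f)) := IsLocalization.map_units D ⟨g * f, N.mul_mem hg hf⟩
    letI : Algebra (Localization.Away (algebraMap S (Localization.Away g) f)) D :=
      (IsLocalization.Away.lift (g * f) hu).toAlgebra
    haveI : IsScalarTower S (Localization.Away (algebraMap S (Localization.Away g) f)) D :=
      IsScalarTower.of_algebraMap_eq (R := S) (S := Localization.Away (algebraMap S (Localization.Away g) f)) (A := D) fun x => (IsLocalization.Away.lift_eq (g * f) hu x).symm
    haveI := IsLocalization.isLocalization_of_submonoid_le
      (Localization.Away (algebraMap S (Localization.Away g) f)) D _ N hle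
    obtain ⟨_, ⟨x, hx, rfl⟩, H⟩ := descent (N.map (algebraMap S (Localization.Away (algebraMap S (Localization.Away g) f)))) v i
      (hD _ (hv.map _) i)
    obtain ⟨a, h, hx⟩ := hN x hx
    obtain ⟨t, ht⟩ : ∃ t : Localization.Away g, t = algebraMap S (Localization.Away g) (1 + f * h) := ⟨_, rfl⟩
    refine glue' hc (algebraMap S (Localization.Away g) f) t ?_ hC v hv i (fun D' _ j hj => H D' j ?_)
    · refine ⟨1, - algebraMap S _ h, ?_⟩
      rw [ht]; simp; ring
    · refine isUnit_of_dvd_unit (map_dvd _ (map_dvd _ hx)) ?_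
      rw [map_mul, map_mul, IsUnit.mul_iff]
      constructor
      · rw [map_pow]
        exact (((IsLocalization.Away.algebraMap_isUnit (g * f)).pow a).map _)
      · rw [ht] at hj
        rwa [IsScalarTower.algebraMap_apply S (Localization.Away g) (Localization.Away (algebraMap S (Localization.Away g) f))]
  haveI : IsLocalization.Away (g * f) (Localization.Away (algebraMap S (Localization.Away g) f)) :=
      IsLocalization.Away.mul' (Localization.Away g) _ g f
  exact key.of_equiv (IsLocalization.algEquiv (Submonoid.powers (g * f)) _ _).toRingEquiv

end Inv
end DK
end

noncomputable section

set_option linter.unusedSimpArgs false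
set_option linter.unusedSectionVars false
set_option linter.unusedVariables false
set_option linter.style.longLine false
set_option linter.style.haveILetI false
namespace DK
open Matrix

section Model
universe u
open MvPolynomial

def Mf {B : Type*} [CommRing B] (f : B) : Submonoid B where
  carrier := {x | ∃ (a : ℕ) (h : B), x = f ^ a * (1 + f * h)}
  one_mem' := ⟨0, 0, by simp⟩
  mul_mem' := by
    rintro _ _ ⟨a, h, rfl⟩ ⟨b, k, rfl⟩
    exact ⟨a + b, h + k + f * h * k, by ring⟩

lemma dim_Mf {B : Type*} [CommRing B] (f : B) {d : ℕ} (hd : ringKrullDim B ≤ (d + 1 : ℕ)) :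
    ringKrullDim (Localization (Mf f)) ≤ d := by
  rw [ringKrullDim_le_iff_height_le]
  intro Q hQ
  set q := Q.under B with hqdef
  have hqp : q.IsPrime := Ideal.comap_isPrime _ _
  have hqd : Disjoint (Mf f : Set B) q :=
    ((IsLocalization.isPrime_iff_isPrime_disjoint (Mf f) _ Q).1 hQ).2
  have e1 : q.height = Q.height := IsLocalization.height_under (Mf f) Q
  rw [← e1]
  have hfq : f ∉ q := fun h => Set.disjoint_left.1 hqd (show f ∈ Mf f from ⟨1, 0, by simp⟩) h
  obtain ⟨m, hm, hqm⟩ := Ideal.exists_le_maximal q hqp.ne_top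
  have hlt : q < m := by
    refine lt_of_le_of_ne hqm ?_
    rintro rfl
    obtain ⟨y, hy⟩ := hm.exists_inv hfq
    obtain ⟨i, hi, e⟩ := hy
    refine Set.disjoint_left.1 hqd (show i ∈ Mf f from ⟨0, -y, ?_⟩) hi
    linear_combination e
  have h1 := (ringKrullDim_le_iff_height_le _).1 hd hm.isPrime
  have h2 : q.height + 1 ≤ m.height := by
    have := hm.isPrime
    exact Ideal.height_add_one_le_of_lt_of_isPrime hlt
  have h3 : q.height + 1 ≤ (d + 1 : ℕ) := h2.trans (by exact_mod_cast h1)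
  have h4 : q.height ≤ d := by
    push_cast at h3
    exact (ENat.add_le_add_iff_right (by simp)).1 h3
  exact_mod_cast h4

def gF {R : Type*} [CommRing R] {σ : Type*} {n : ℕ} (y : Fin n → σ) (F : Fin n → Polynomial R) :
    MvPolynomial σ R := ∏ i, Polynomial.aeval (X (y i) : MvPolynomial σ R) (F i)

lemma map_gF {R R' : Type*} [CommRing R] [CommRing R'] (φ : R →+* R') {σ : Type*} {n : ℕ}
    (y : Fin n → σ) (F : Fin n → Polynomial R) :
    MvPolynomial.map φ (gF y F) = gF y (fun i => (F i).map φ) := by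
  simp only [gF, map_prod]
  refine Finset.prod_congr rfl fun i _ => ?_
  rw [Polynomial.aeval_def, Polynomial.hom_eval₂, Polynomial.aeval_def, Polynomial.eval₂_map]
  simp only [map_X]
  congr 1
  ext x; simp [MvPolynomial.algebraMap_eq]

variable {ι : Type*} [Fintype ι] [DecidableEq ι]

lemma TT.away_equiv {A B : Type*} [CommRing A] [CommRing B] (e : A ≃+* B) (a : A) (b : B) (h : e a = b)
    (hT : TT ι (Localization.Away a)) : TT ι (Localization.Away b) := by
  refine hT.of_equiv (IsLocalization.ringEquivOfRingEquiv (M := Submonoid.powers a) (T := Submonoid.powers b)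
    _ _ e ?_)
  subst h
  exact Submonoid.map_powers e a

lemma TT_model {d k : ℕ} (hk : d < k) (hk2 : 2 ≤ k) (n : ℕ) : ∀ (R : Type u) [CommRing R]
    [IsNoetherianRing R] (hd : ringKrullDim R ≤ d) (σ : Type) [Finite σ] (y : Fin n → σ)
    (hy : Function.Injective y) (F : Fin n → Polynomial R),
    TT (Fin (k + 1)) (Localization.Away (gF y F)) := by
  have hc : ∀ i j : Fin (k + 1), ∃ l, l ≠ i ∧ l ≠ j := by
    intro i j
    obtain ⟨l, hl⟩ := Finset.exists_mem_notMem_of_card_lt_card (s := {i, j}) (t := (Finset.univ : Finset (Fin (k + 1)))) (by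
      refine lt_of_le_of_lt Finset.card_le_two ?_
      simp; omega)
    refine ⟨l, ?_⟩
    simpa using hl
  induction n with
  | zero =>
    intro R _ _ hd σ _ y hy F
    rcases subsingleton_or_nontrivial R with hs | hs
    · haveI : Subsingleton (Localization.Away (gF y F)) := by
        exact (algebraMap (MvPolynomial σ R) (Localization.Away (gF y F))).codomain_trivial
      exact TT.of_subsingleton
    · obtain ⟨m, ⟨e⟩⟩ := Finite.exists_equiv_fin σ
      have h1 := TT_mvPoly R hd hk hk2 m
      have h2 : TT (Fin (k + 1)) (MvPolynomial σ R) := h1.of_equiv (renameEquiv R e.symm).toRingEquiv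
      refine h2.of_equiv (IsLocalization.atUnits _ (Submonoid.powers (gF y F)) ?_).toRingEquiv
      rintro x ⟨a, rfl⟩
      simp [gF]
  | succ n ih =>
    intro R _ _ hd σ _ y hy F
    let τ := {x : σ // x ≠ y (Fin.last n)}
    classical
    let E : MvPolynomial σ R ≃+* MvPolynomial τ (Polynomial R) :=
      ((renameEquiv R (Equiv.optionSubtypeNe (y (Fin.last n))).symm).trans (optionEquivRight R τ)).toRingEquiv
    have hyl : ∀ i : Fin n, y i.castSucc ≠ y (Fin.last n) := fun i h =>
      (Fin.castSucc_lt_last i).ne (hy h)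
    have E1 : E (X (y (Fin.last n))) = C Polynomial.X := by
      simp [E]
    have E2 : ∀ i : Fin n, E (X (y i.castSucc)) = X ⟨y i.castSucc, hyl i⟩ := by
      intro i
      simp [E, Equiv.optionSubtypeNe_symm_apply, hyl]
    have E3 : ∀ r : R, E (C r) = C (Polynomial.C r) := by
      intro r; simp [E]
    have E4 : ∀ (p : Polynomial R) x, E (Polynomial.aeval x p) = Polynomial.aeval (E x) (p.map Polynomial.C) := by
      intro p x
      change (E : MvPolynomial σ R →+* MvPolynomial τ (Polynomial R)) _ = _
      rw [Polynomial.aeval_def, Polynomial.hom_eval₂, Polynomial.aeval_def, Polynomial.eval₂_map]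
      congr 1
      ext r; simp [MvPolynomial.algebraMap_eq, E3]
    let y' : Fin n → τ := fun i => ⟨y i.castSucc, hyl i⟩
    have hy' : Function.Injective y' := fun i j h => Fin.castSucc_injective _ (hy (Subtype.ext_iff.1 h))
    set f := F (Fin.last n) with hf
    have E5 : E (gF (fun i : Fin n => y i.castSucc) (fun i : Fin n => F i.castSucc)) =
        gF y' (fun i : Fin n => (F i.castSucc).map Polynomial.C) := by
      simp only [gF, map_prod, E4, E2, y']
    have E6 : E (gF y F) = gF y' (fun i : Fin n => (F i.castSucc).map Polynomial.C) * C f := by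
      rw [← E5]
      simp only [gF, Fin.prod_univ_castSucc, map_mul]
      congr 1
      rw [E4, E1, ← hf, Polynomial.aeval_def, Polynomial.eval₂_map]
      rw [MvPolynomial.algebraMap_eq, ← Polynomial.hom_eval₂, Polynomial.eval₂_C_X]
    set g := gF y' (fun i : Fin n => (F i.castSucc).map Polynomial.C) with hg
    refine TT.away_equiv E.symm (g * C f) _ (by rw [← E6]; simp) ?_
    have hC : TT (Fin (k + 1)) (Localization.Away g) :=
      TT.away_equiv E _ _ E5 (ih R hd σ _ (hy.comp (Fin.castSucc_injective n)) _)
    have hR' : IsNoetherianRing (Localization (Mf f)) := IsLocalization.isNoetherianRing (Mf f) (Localization (Mf f)) inferInstance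
    have hdR' : ringKrullDim (Localization (Mf f)) ≤ d := dim_Mf f (by
      rw [Polynomial.ringKrullDim_of_isNoetherianRing]; push_cast; gcongr)
    have hD := ih (Localization (Mf f)) hdR' τ y' hy' (fun i => ((F i.castSucc).map Polynomial.C).map (algebraMap _ (Localization (Mf f))))
    rw [← map_gF, ← hg] at hD
    letI := MvPolynomial.algebraMvPolynomial (σ := τ) (R := Polynomial R) (S := Localization (Mf f))
    haveI : IsLocalization ((Mf f).map (C (σ := τ))) (MvPolynomial τ (Localization (Mf f))) := MvPolynomial.isLocalization _ _
    haveI := IsLocalization.localization_localization_isLocalization ((Mf f).map (C (σ := τ)))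
      (Submonoid.powers (MvPolynomial.map (algebraMap (Polynomial R) (Localization (Mf f))) g))
      (Localization.Away (MvPolynomial.map (algebraMap (Polynomial R) (Localization (Mf f))) g))
    refine inv_step hc g (C f) (IsLocalization.localizationLocalizationSubmodule ((Mf f).map (C (σ := τ)))
      (Submonoid.powers (MvPolynomial.map (algebraMap (Polynomial R) (Localization (Mf f))) g))) ?_ ?_ ?_ _ hD hC
    · rw [IsLocalization.mem_localizationLocalizationSubmodule]
      refine ⟨⟨_, Submonoid.mem_powers _⟩, 1, ?_⟩
      simp only [OneMemClass.coe_one, map_one, mul_one]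
      rfl
    · rw [IsLocalization.mem_localizationLocalizationSubmodule]
      refine ⟨1, ⟨C f, f, ⟨1, 0, by simp⟩, rfl⟩, by simp⟩
    · intro x hx
      rw [IsLocalization.mem_localizationLocalizationSubmodule] at hx
      obtain ⟨⟨_, a, rfl⟩, ⟨_, z, hz, rfl⟩, e⟩ := hx
      have e' : algebraMap (MvPolynomial τ (Polynomial R)) (MvPolynomial τ (Localization (Mf f))) x =
        algebraMap (MvPolynomial τ (Polynomial R)) (MvPolynomial τ (Localization (Mf f))) (g ^ a * C z) := by
        rw [e, map_mul, map_pow]; rfl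
      obtain ⟨⟨_, c, hc, rfl⟩, hcx⟩ := (IsLocalization.eq_iff_exists ((Mf f).map (C (σ := τ))) _).1 e'
      obtain ⟨b, h, hb⟩ := (Mf f).mul_mem hc hz
      have h1 : x ∣ g ^ a * C (f ^ b * (1 + f * h)) := by
        refine ⟨C c, ?_⟩
        rw [← hb, C_mul, mul_comm x]
        refine Eq.trans ?_ hcx.symm
        simp only; ring
      refine ⟨a + b, C h, h1.trans ⟨g ^ b * C f ^ a, ?_⟩⟩
      simp only [map_mul, map_add, map_pow, map_one]; ring

end Model
end DK
end

noncomputable section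

set_option linter.unusedSimpArgs false
set_option linter.unusedSectionVars false
set_option linter.unusedVariables false
set_option linter.style.longLine false
set_option linter.style.haveILetI false
namespace DK
open Matrix

section Tits
variable {ι : Type*} [Fintype ι] [DecidableEq ι] {C D : Type*} [CommRing C] [CommRing D]

def InE (I : Ideal C) (N : Matrix ι ι C) : Prop := ∃ σ ∈ EI ι I, (σ : Matrix ι ι C) = 1 + N

lemma InE.zero (I : Ideal C) : InE I (0 : Matrix ι ι C) := ⟨1, one_mem _, by simp⟩

lemma InE.add {I : Ideal C} {N N' : Matrix ι ι C} (h : InE I N) (h' : InE I N') (h0 : N * N' = 0) :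
    InE I (N + N') := by
  obtain ⟨σ, hσ, e⟩ := h
  obtain ⟨τ, hτ, e'⟩ := h'
  refine ⟨σ * τ, mul_mem hσ hτ, ?_⟩
  rw [Units.val_mul, e, e', mul_add, add_mul, add_mul, h0]
  simp; abel

lemma InE.sum {I : Ideal C} {κ : Type*} (s : Finset κ) (N : κ → Matrix ι ι C)
    (h : ∀ k ∈ s, InE I (N k)) (h0 : ∀ k l, N k * N l = 0) : InE I (∑ k ∈ s, N k) := by
  classical
  induction s using Finset.induction_on with
  | empty => simpa using InE.zero I
  | insert a s ha ih =>
    rw [Finset.sum_insert ha]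
    refine (h a (by simp)).add (ih fun k hk => h k (by simp [hk])) ?_
    rw [Finset.mul_sum]; exact Finset.sum_eq_zero fun k _ => h0 _ _

lemma vmv {u v w x : ι → C} (h : v ⬝ᵥ w = 0) : vecMulVec u v * vecMulVec w x = 0 := by
  rw [vecMulVec_mul_vecMulVec, h]; ext; simp [vecMulVec_apply]

lemma InE.col {I : Ideal C} (u : ι → C) (l : ι) (hl : u l = 0) (y : C) (hy : y ∈ I) :
    InE I (vecMulVec u (Pi.single l y)) := by
  have : vecMulVec u (Pi.single l y) = ∑ k, vecMulVec (Pi.single k (u k)) (Pi.single l y) := by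
    ext i j
    simp [vecMulVec_apply, Matrix.sum_apply, Pi.single_apply]
  rw [this]
  refine InE.sum _ _ (fun k _ => ?_) (fun k m => vmv ?_)
  · by_cases hk : k = l
    · subst hk; rw [hl, Pi.single_zero]; simpa using InE.zero I
    · refine ⟨el hk (u k * y), el_mem hk (I.mul_mem_left _ hy), ?_⟩
      rw [el_val]; congr 1; ext i j
      simp [vecMulVec_apply, Matrix.single_apply, Pi.single_apply]
      grind
  · by_cases hm : m = l
    · subst hm; simp [hl]
    · simp [Pi.single_apply, Ne.symm hm, hm]

lemma InE.row {I : Ideal C} (v : ι → C) (l : ι) (hl : v l = 0) (hv : ∀ k, v k ∈ I) :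
    InE I (vecMulVec (Pi.single l 1) v) := by
  have : vecMulVec (Pi.single l 1) v = ∑ k, vecMulVec (Pi.single l 1) (Pi.single k (v k)) := by
    ext i j
    simp [vecMulVec_apply, Matrix.sum_apply, Pi.single_apply]
  rw [this]
  refine InE.sum _ _ (fun k _ => ?_) (fun k m => vmv ?_)
  · by_cases hk : l = k
    · subst hk; rw [hl, Pi.single_zero]; simpa using InE.zero I
    · refine ⟨el hk (v k), el_mem hk (hv k), ?_⟩
      rw [el_val]; congr 1; ext i j
      simp [vecMulVec_apply, Matrix.single_apply, Pi.single_apply]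
      grind
  · by_cases hm : k = l
    · subst hm; simp [hl]
    · simp [Pi.single_apply, Ne.symm hm, hm]

lemma InE.comm {I : Ideal C} {α β : Matrix ι ι C} (ha : InE I α) (hb : InE I β) (ha' : InE I (-α))
    (hb' : InE I (-β)) (h1 : α * α = 0) (h2 : β * β = 0) (h3 : β * α = 0) : InE I (α * β) := by
  obtain ⟨σ, hσ, e⟩ := ha
  obtain ⟨τ, hτ, e'⟩ := hb
  obtain ⟨σ', hσ', f⟩ := ha'
  obtain ⟨τ', hτ', f'⟩ := hb'
  refine ⟨σ * τ * (σ' * τ'), mul_mem (mul_mem hσ hτ) (mul_mem hσ' hτ'), ?_⟩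
  simp only [Units.val_mul, e, e', f, f']
  have : (1 + α) * (1 + β) * ((1 + -α) * (1 + -β)) = 1 + α * β - α * α - β * β - β * α
    + (α * α) * β + (β * α) * β - α * (β * α) - α * (β * β) + α * (β * α) * β := by noncomm_ring
  rw [this, h1, h2, h3]; simp

lemma InE.pair (s c : C) (i j l : ι) (hij : i ≠ j) (hli : l ≠ i) (hlj : l ≠ j) (u : ι → C) :
    InE (Ideal.span {s}) ((s ^ 2 * c) • vecMulVec u (Pi.single i (u j) - Pi.single j (u i))) := by
  set I := Ideal.span {s} with hI
  have hs : ∀ x, s * x ∈ I := fun x => I.mul_mem_right _ (Ideal.mem_span_singleton_self s)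
  set q : ι → C := Pi.single i (u j) - Pi.single j (u i) with hq
  set p : ι → C := Pi.single i (u i) + Pi.single j (u j) with hp
  have hqp : q ⬝ᵥ p = 0 := by
    simp [hq, hp, sub_dotProduct, dotProduct_add, Pi.single_apply, hij, hij.symm]; ring
  have hpl : p l = 0 := by simp [hp, Pi.single_apply, hli, hlj]
  have hql : q l = 0 := by simp [hq, Pi.single_apply, hli, hlj]
  set w := u - p with hw
  have hwi : w i = 0 := by simp [hw, hp, Pi.single_apply, hij]
  have hwj : w j = 0 := by simp [hw, hp, Pi.single_apply, hij.symm]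
  have hqw : q ⬝ᵥ w = 0 := by simp [hq, sub_dotProduct, hwi, hwj]
  have e1 : (s ^ 2 * c) • vecMulVec u q = (vecMulVec w (Pi.single i (s * (s * c * u j))) +
      vecMulVec w (Pi.single j (s * (- (s * c * u i))))) +
      (vecMulVec p (Pi.single l (s * c)) * vecMulVec (Pi.single l 1) (s • q)) := by
    rw [vecMulVec_mul_vecMulVec]
    have : u = w + p := by rw [hw]; abel
    ext a b
    rw [Matrix.smul_apply, vecMulVec_apply]
    conv_lhs => rw [this]
    simp [vecMulVec_apply, Pi.single_apply, hq]
    split_ifs <;> ring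
  rw [e1]
  refine InE.add (InE.add (InE.col w i hwi _ (hs _)) (InE.col w j hwj _ (hs _)) (vmv ?_)) ?_ ?_
  · simp [hwi]
  · have hneg : ∀ (a b : ι → C), - vecMulVec a b = vecMulVec a (-b) := by
      intro a b; ext; simp [vecMulVec_apply]
    refine InE.comm (InE.col p l hpl _ (hs _)) (InE.row _ l (by simp [hql]) ?_) ?_ ?_ (vmv ?_) (vmv ?_) (vmv ?_)
    · intro k; exact hs _
    · rw [hneg, ← Pi.single_neg]; exact InE.col p l hpl _ (I.neg_mem (hs _))
    · rw [hneg]; exact InE.row _ l (by simp [hql]) (fun k => I.neg_mem (hs _))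
    · simp [hpl]
    · simp [hql]
    · rw [smul_dotProduct, hqp, smul_zero]
  · rw [← mul_assoc, ← vecMulVec_add, vmv]
    · simp
    · simp [hp, add_dotProduct, Pi.single_apply, hij, hij.symm]; ring

lemma InE.main (hc : ∀ i j : ι, ∃ l, l ≠ i ∧ l ≠ j) (s x : C) (u v w : ι → C) (hvu : v ⬝ᵥ u = 0)
    (hwu : w ⬝ᵥ u = 1) : InE (Ideal.span {s}) ((s ^ 2 * x) • vecMulVec u v) := by
  have e : (s ^ 2 * x) • vecMulVec u v = ∑ k : ι × ι, (s ^ 2 * (x * v k.1 * w k.2)) •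
      vecMulVec u (Pi.single k.1 (u k.2) - Pi.single k.2 (u k.1)) := by
    rw [Fintype.sum_prod_type]
    ext a b
    simp only [Matrix.smul_apply, Matrix.sum_apply, vecMulVec_apply, Pi.sub_apply, Pi.single_apply,
      smul_eq_mul, mul_sub, Finset.sum_sub_distrib, mul_ite, mul_zero, Finset.sum_ite_eq, Finset.mem_univ, if_true]
    have h1 : ∑ i, ∑ j, (if b = i then s ^ 2 * (x * v i * w j) * (u a * u j) else 0) =
        s ^ 2 * x * (u a * v b) * (w ⬝ᵥ u) := by
      rw [Finset.sum_comm, dotProduct, Finset.mul_sum]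
      refine Finset.sum_congr rfl fun j _ => ?_
      rw [Finset.sum_ite_eq]; simp; ring
    have h2 : ∑ i, s ^ 2 * (x * v i * w b) * (u a * u i) =
        s ^ 2 * x * (w b) * u a * (v ⬝ᵥ u) := by
      rw [dotProduct, Finset.mul_sum]
      refine Finset.sum_congr rfl fun j _ => ?_
      ring
    rw [h1, h2, hvu, hwu]; ring
  rw [e]
  refine InE.sum _ _ (fun k _ => ?_) (fun k m => ?_)
  · by_cases hk : k.1 = k.2
    · rw [hk]; simpa using InE.zero _
    · obtain ⟨l, h1, h2⟩ := hc k.1 k.2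
      exact InE.pair s _ _ _ l hk h1 h2 u
  · rw [Matrix.smul_mul, Matrix.mul_smul, vmv]
    · simp
    · simp [sub_dotProduct]; ring

lemma conj_sq_mem (hc : ∀ i j : ι, ∃ l, l ≠ i ∧ l ≠ j) (s x : C) (γ : GL ι C) {i j : ι} (h : i ≠ j) :
    γ⁻¹ * el h (s ^ 2 * x) * γ ∈ EI ι (Ideal.span {s}) := by
  obtain ⟨σ, hσ, e⟩ := InE.main hc s x ((γ⁻¹ : GL ι C).val *ᵥ Pi.single i 1) (Pi.single j 1 ᵥ* γ.val)
    (Pi.single i 1 ᵥ* γ.val) (by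
      rw [dotProduct_mulVec, vecMul_vecMul, ← Units.val_mul]; simp [h]) (by
      rw [dotProduct_mulVec, vecMul_vecMul, ← Units.val_mul]; simp)
  convert hσ
  apply Units.ext
  rw [e, Units.val_mul, Units.val_mul, el_val, mul_add, add_mul, mul_one, ← Units.val_mul, inv_mul_cancel, Units.val_one]
  congr 1
  have : Matrix.single i j (s ^ 2 * x) = (s ^ 2 * x) • vecMulVec (Pi.single i 1) (Pi.single j 1) := by
    ext a b; simp [vecMulVec_apply, Matrix.single_apply, Pi.single_apply]; grind
  rw [this, Matrix.mul_smul, Matrix.smul_mul, mul_vecMulVec, vecMulVec_mul]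

lemma rel_of_congr (hc : ∀ i j : ι, ∃ l, l ≠ i ∧ l ≠ j) (s : C) (α β : D →+* C)
    (h : ∀ x, ∃ y, β x = α x + s ^ 2 * y) {σ : GL ι D} (hσ : σ ∈ EI ι (⊤ : Ideal D)) :
    (GeneralLinearGroup.map α σ)⁻¹ * GeneralLinearGroup.map β σ ∈ EI ι (Ideal.span {s}) := by
  refine EI_induction (p := fun σ => (GeneralLinearGroup.map α σ)⁻¹ * GeneralLinearGroup.map β σ ∈ EI ι (Ideal.span {s})) ?_ ?_ hσ
  · simpa using one_mem _
  · intro i j hij c _ σ _ ih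
    obtain ⟨y, hy⟩ := h c
    have : (GeneralLinearGroup.map α (el hij c * σ))⁻¹ * GeneralLinearGroup.map β (el hij c * σ) =
      ((GeneralLinearGroup.map α σ)⁻¹ * el hij (s ^ 2 * y) * (GeneralLinearGroup.map α σ)) *
      ((GeneralLinearGroup.map α σ)⁻¹ * GeneralLinearGroup.map β σ) := by
      rw [map_mul, map_mul, el_map, el_map, hy, el_add]; group
    rw [this]
    exact mul_mem (conj_sq_mem hc s y _ hij) ih

end Tits
end DK
end

noncomputable section

set_option linter.unusedSimpArgs false
set_option linter.unusedSectionVars false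
set_option linter.unusedVariables false
set_option linter.style.longLine false
set_option linter.style.haveILetI false
namespace DK
open Matrix

section ModelDef
open MvPolynomial

universe u

structure LocH {S B : Type*} [CommRing S] [CommRing B] (φ : S →+* B) (g : S) : Prop where
  unit : IsUnit (φ g)
  surj : ∀ b, ∃ (n : ℕ) (s : S), b * φ g ^ n = φ s
  inj : ∀ s, φ s = 0 → ∃ n : ℕ, g ^ n * s = 0

def IsModel {R B : Type*} [CommRing R] [CommRing B] (ρ : R →+* B) : Prop :=
  ∃ (σ : Type) (_ : Finite σ) (n : ℕ) (y : Fin n → σ) (F : Fin n → Polynomial R)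
    (φ : MvPolynomial σ R →+* B), Function.Injective y ∧ (∀ r, φ (C r) = ρ r) ∧ LocH φ (gF y F)

lemma LocH.isLoc {S B : Type*} [CommRing S] [CommRing B] {φ : S →+* B} {g : S} (h : LocH φ g) :
    @IsLocalization.Away S _ g B _ φ.toAlgebra := by
  letI := φ.toAlgebra
  refine IsLocalization.Away.mk g h.unit ?_ ?_
  · intro b
    obtain ⟨n, s, e⟩ := h.surj b
    exact ⟨n, s, e⟩
  · intro a b e
    obtain ⟨n, hn⟩ := h.inj (a - b) (by rw [map_sub, sub_eq_zero]; exact e)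
    exact ⟨n, by rw [mul_sub, sub_eq_zero] at hn; exact hn⟩

lemma LocH.of_isLoc {S B : Type*} [CommRing S] [CommRing B] [Algebra S B] {g : S} [IsLocalization.Away g B] :
    LocH (algebraMap S B) g := by
  refine ⟨IsLocalization.Away.algebraMap_isUnit g, ?_, ?_⟩
  · intro b
    obtain ⟨⟨s, ⟨_, n, rfl⟩⟩, e⟩ := IsLocalization.surj (Submonoid.powers g) b
    exact ⟨n, s, by simpa using e⟩
  · intro s hs
    obtain ⟨⟨_, n, rfl⟩, e⟩ := (IsLocalization.map_eq_zero_iff (Submonoid.powers g) B s).1 hs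
    exact ⟨n, e⟩

lemma IsModel.TT {d k : ℕ} (hk : d < k) (hk2 : 2 ≤ k) {R : Type u} [CommRing R] [IsNoetherianRing R]
    (hd : ringKrullDim R ≤ d) {B : Type*} [CommRing B] {ρ : R →+* B} (h : IsModel ρ) :
    TT (Fin (k + 1)) B := by
  obtain ⟨σ, _, n, y, F, φ, hy, hφ, hl⟩ := h
  letI := φ.toAlgebra
  haveI := hl.isLoc
  exact (TT_model hk hk2 n R hd σ y hy F).of_equiv
    (IsLocalization.algEquiv (Submonoid.powers (gF y F)) _ B).toRingEquiv

lemma IsModel.noeth {R : Type u} [CommRing R] [IsNoetherianRing R]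
    {B : Type*} [CommRing B] {ρ : R →+* B} (h : IsModel ρ) : IsNoetherianRing B := by
  obtain ⟨σ, _, n, y, F, φ, hy, hφ, hl⟩ := h
  letI := φ.toAlgebra
  haveI := hl.isLoc
  exact IsLocalization.isNoetherianRing (Submonoid.powers (gF y F)) B inferInstance

lemma IsModel.quot {R B : Type*} [CommRing R] [CommRing B] {ρ : R →+* B} (h : IsModel ρ) (I : Ideal R)
    (J : Ideal B) (hJ : J = I.map ρ) (ρ' : R ⧸ I →+* B ⧸ J)
    (hρ' : ∀ r, ρ' (Ideal.Quotient.mk I r) = Ideal.Quotient.mk J (ρ r)) :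
    IsModel ρ' := by
  obtain ⟨σ, _, n, y, F, φ, hy, hφ, hl⟩ := h
  let φ' : MvPolynomial σ (R ⧸ I) →+* B ⧸ J :=
    eval₂Hom ρ' (fun i => Ideal.Quotient.mk J (φ (X i)))
  have hφ' : ∀ p, φ' (MvPolynomial.map (Ideal.Quotient.mk I) p) = Ideal.Quotient.mk J (φ p) := by
    intro p
    have : φ'.comp (MvPolynomial.map (Ideal.Quotient.mk I)) = (Ideal.Quotient.mk J).comp φ := by
      ext r
      · simp [φ', hρ', hφ]
      · simp [φ']
    exact congrArg (fun f => f p) this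
  refine ⟨σ, inferInstance, n, y, fun i => (F i).map (Ideal.Quotient.mk I), φ', hy, ?_, ?_⟩
  · intro r; simp [φ']
  rw [← map_gF]
  refine ⟨?_, ?_, ?_⟩
  · rw [hφ']; exact hl.unit.map _
  · intro b
    obtain ⟨b, rfl⟩ := Ideal.Quotient.mk_surjective b
    obtain ⟨n, s, e⟩ := hl.surj b
    refine ⟨n, MvPolynomial.map (Ideal.Quotient.mk I) s, ?_⟩
    rw [hφ', hφ', ← e]; simp
  · intro s hs
    obtain ⟨s, rfl⟩ := MvPolynomial.map_surjective _ Ideal.Quotient.mk_surjective s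
    rw [hφ', Ideal.Quotient.eq_zero_iff_mem, hJ] at hs
    have key : ∀ x ∈ I.map ρ, ∃ (n : ℕ) (t : MvPolynomial σ R), x * φ (gF y F) ^ n = φ t ∧
        MvPolynomial.map (Ideal.Quotient.mk I) t = 0 := by
      intro x hx
      refine Submodule.span_induction (p := fun x _ => ∃ (n : ℕ) (t : MvPolynomial σ R), x * φ (gF y F) ^ n = φ t ∧
        MvPolynomial.map (Ideal.Quotient.mk I) t = 0) ?_ ?_ ?_ ?_ hx
      · rintro _ ⟨r, hr, rfl⟩
        refine ⟨0, C r, by simp [hφ], ?_⟩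
        rw [map_C, Ideal.Quotient.eq_zero_iff_mem.2 hr, C_0]
      · exact ⟨0, 0, by simp, by simp⟩
      · rintro a b _ _ ⟨n, t, e, ht⟩ ⟨m, t', e', ht'⟩
        refine ⟨n + m, t * gF y F ^ m + t' * gF y F ^ n, ?_, by simp [ht, ht']⟩
        rw [map_add, map_mul, map_mul, ← e, ← e']; simp only [map_pow]; ring
      · rintro a b _ ⟨n, t, e, ht⟩
        obtain ⟨m, s, e'⟩ := hl.surj a
        refine ⟨n + m, t * s, ?_, by simp [ht]⟩
        rw [map_mul, ← e, ← e', smul_eq_mul]; ring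
    obtain ⟨n, t, e, ht⟩ := key _ hs
    obtain ⟨m, hm⟩ := hl.inj (s * gF y F ^ n - t) (by rw [map_sub, map_mul, map_pow, e, sub_self])
    refine ⟨m + n, ?_⟩
    have := congrArg (MvPolynomial.map (Ideal.Quotient.mk I)) hm
    simp only [map_mul, map_sub, map_pow, ht, sub_zero, map_zero] at this
    rw [← this]; ring

lemma IsModel.loc {R B : Type*} [CommRing R] [CommRing B] {ρ : R →+* B} (h : IsModel ρ)
    (M : Submonoid R) {R' B' : Type*} [CommRing R'] [CommRing B'] [Algebra R R'] [Algebra B B']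
    [IsLocalization M R'] [IsLocalization (M.map ρ) B'] (ρ' : R' →+* B')
    (hρ' : ∀ r, ρ' (algebraMap R R' r) = algebraMap B B' (ρ r)) : IsModel ρ' := by
  obtain ⟨σ, _, n, y, F, φ, hy, hφ, hl⟩ := h
  let φ' : MvPolynomial σ R' →+* B' :=
    eval₂Hom ρ' (fun i => algebraMap B B' (φ (X i)))
  have hφ' : ∀ p, φ' (MvPolynomial.map (algebraMap R R') p) = algebraMap B B' (φ p) := by
    intro p
    have : φ'.comp (MvPolynomial.map (algebraMap R R')) = (algebraMap B B').comp φ := by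
      ext r
      · simp [φ', hρ', hφ]
      · simp [φ']
    exact congrArg (fun f => f p) this
  have hC : ∀ r, φ' (C r) = ρ' r := by intro r; simp [φ']
  refine ⟨σ, inferInstance, n, y, fun i => (F i).map (algebraMap R R'), φ', hy, hC, ?_⟩
  rw [← map_gF]
  refine ⟨?_, ?_, ?_⟩
  · rw [hφ']; exact hl.unit.map _
  · intro b
    obtain ⟨⟨b', ⟨_, m, hm, rfl⟩⟩, e⟩ := IsLocalization.surj (M.map ρ) b
    obtain ⟨n, s, e2⟩ := hl.surj b'
    have hu : IsUnit (algebraMap R R' m) := IsLocalization.map_units R' (⟨m, hm⟩ : M)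
    obtain ⟨w, hw⟩ := hu.exists_right_inv
    refine ⟨n, MvPolynomial.map (algebraMap R R') s * C w, ?_⟩
    rw [hφ', map_mul, hφ', hC, ← e2, map_mul, map_pow, ← e]
    simp only
    rw [← hρ']
    have := congrArg ρ' hw
    rw [map_mul, map_one] at this
    linear_combination (-b * algebraMap B B' (φ (gF y F)) ^ n) * this
  · intro s hs
    letI := MvPolynomial.algebraMvPolynomial (σ := σ) (R := R) (S := R')
    haveI : IsLocalization (M.map (C (σ := σ))) (MvPolynomial σ R') := MvPolynomial.isLocalization _ _
    obtain ⟨⟨t, ⟨_, m, hm, rfl⟩⟩, e⟩ := IsLocalization.surj (M.map (C (σ := σ))) s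
    have e' : s * C (algebraMap R R' m) = MvPolynomial.map (algebraMap R R') t := by
      refine Eq.trans ?_ e
      congr 1
      exact (map_C _ _).symm
    have h1 : algebraMap B B' (φ t) = 0 := by
      rw [← hφ', ← e', map_mul, hs, zero_mul]
    obtain ⟨⟨_, m', hm', rfl⟩, h2⟩ := (IsLocalization.map_eq_zero_iff (M.map ρ) B' _).1 h1
    simp only at h2
    rw [← hφ, ← map_mul] at h2
    obtain ⟨k, hk⟩ := hl.inj _ h2
    refine ⟨k, ?_⟩
    have h3 := congrArg (MvPolynomial.map (algebraMap R R')) hk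
    simp only [map_mul, map_pow, map_C, ← e', map_zero] at h3
    have hu : ∀ m ∈ M, IsUnit (C (σ := σ) (algebraMap R R' m)) := fun m hm =>
      (IsLocalization.map_units R' (⟨m, hm⟩ : M)).map C
    refine (((hu m hm).mul (hu m' hm')).mul_left_eq_zero).1 ?_
    rw [← h3]
    ring

/-- the double of a ring along an principal ideal -/
def Dbl {C : Type*} [CommRing C] (s : C) : Subring (C × C) where
  carrier := {x | ∃ y, x.2 = x.1 + s * y}
  mul_mem' := by
    rintro ⟨a, a'⟩ ⟨b, b'⟩ ⟨x, hx⟩ ⟨y, hy⟩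
    simp only at hx hy
    exact ⟨x * b + a * y + s * x * y, by simp [hx, hy]; ring⟩
  one_mem' := ⟨0, by simp⟩
  add_mem' := by
    rintro ⟨a, a'⟩ ⟨b, b'⟩ ⟨x, hx⟩ ⟨y, hy⟩
    simp only at hx hy
    exact ⟨x + y, by simp [hx, hy]; ring⟩
  zero_mem' := ⟨0, by simp⟩
  neg_mem' := by
    rintro ⟨a, a'⟩ ⟨x, hx⟩
    simp only at hx
    exact ⟨-x, by simp [hx]; ring⟩

section
variable {C : Type*} [CommRing C] (s : C)

def dfst : Dbl s →+* C := (RingHom.fst C C).comp (Dbl s).subtype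
def dsnd : Dbl s →+* C := (RingHom.snd C C).comp (Dbl s).subtype
def ddiag : C →+* Dbl s := ((RingHom.id C).prod (RingHom.id C)).codRestrict (Dbl s) (fun x => ⟨0, by simp⟩)
def dz : Dbl s := ⟨(0, s), 1, by simp⟩

lemma dbl_ext {x y : Dbl s} (h1 : dfst s x = dfst s y) (h2 : dsnd s x = dsnd s y) : x = y :=
  Subtype.ext (Prod.ext h1 h2)
@[simp] lemma dfst_diag (x : C) : dfst s (ddiag s x) = x := rfl
@[simp] lemma dsnd_diag (x : C) : dsnd s (ddiag s x) = x := rfl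
@[simp] lemma dfst_z : dfst s (dz s) = 0 := rfl
@[simp] lemma dsnd_z : dsnd s (dz s) = s := rfl
lemma dbl_form (x : Dbl s) : ∃ y, dsnd s x = dfst s x + s * y ∧ x = ddiag s (dfst s x) + dz s * ddiag s y := by
  obtain ⟨y, hy⟩ := x.2
  refine ⟨y, hy, dbl_ext s (by simp) ?_⟩
  simp; exact hy

lemma dbl_noeth [IsNoetherianRing C] : IsNoetherianRing (Dbl s) := by
  letI := (ddiag s).toAlgebra
  haveI : Module.Finite C (Dbl s) := by
    refine Module.Finite.of_surjective (M := C × C)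
      (LinearMap.coprod (LinearMap.toSpanSingleton C (Dbl s) 1) (LinearMap.toSpanSingleton C (Dbl s) (dz s))) ?_
    intro x
    obtain ⟨y, -, h⟩ := dbl_form s x
    refine ⟨(dfst s x, y), ?_⟩
    simp only [LinearMap.coprod_apply, LinearMap.toSpanSingleton_apply, Algebra.smul_def]
    refine Eq.trans ?_ h.symm
    rw [mul_one, mul_comm (dz s)]; rfl
  exact IsNoetherianRing.of_finite C (Dbl s)

lemma dim_of_cover {D : Type*} [CommRing D] {d : WithBot ℕ∞} (f g : D →+* C) (hf : Function.Surjective f)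
    (hg : Function.Surjective g) (hfg : ∀ x y, f x = 0 → g y = 0 → x * y = 0)
    (hd : ringKrullDim C ≤ d) : ringKrullDim D ≤ d := by
  have key : ∀ (f : D →+* C) (hf : Function.Surjective f) (p : LTSeries (PrimeSpectrum D)),
      RingHom.ker f ≤ (p 0).asIdeal → (p.length : WithBot ℕ∞) ≤ d := by
    intro f hf p hp
    refine le_trans ?_ hd
    rw [← ringKrullDim_eq_of_ringEquiv (RingHom.quotientKerEquivOfSurjective hf), ringKrullDim_quotient]
    have hz : ∀ i, p i ∈ PrimeSpectrum.zeroLocus (RingHom.ker f : Set D) := by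
      intro i x hx
      exact (show (p 0).asIdeal ≤ (p i).asIdeal from p.strictMono.monotone (Fin.zero_le i)) (hp hx)
    let q : LTSeries (PrimeSpectrum.zeroLocus (RingHom.ker f : Set D)) :=
      ⟨p.length, fun i => ⟨p i, hz i⟩, fun i => p.step i⟩
    exact Order.LTSeries.length_le_krullDim q
  refine iSup_le fun p => ?_
  by_cases h : RingHom.ker f ≤ (p 0).asIdeal
  · exact key f hf p h
  · refine key g hg p ?_
    obtain ⟨x, hx, hxp⟩ := SetLike.not_le_iff_exists.1 h
    intro y hy
    have : x * y ∈ (p 0).asIdeal := by rw [hfg x y hx hy]; exact zero_mem _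
    exact ((p 0).2.mem_or_mem this).resolve_left hxp

lemma dbl_dim {d : WithBot ℕ∞} (hd : ringKrullDim C ≤ d) : ringKrullDim (Dbl s) ≤ d := by
  refine dim_of_cover (dfst s) (dsnd s) (fun x => ⟨ddiag s x, rfl⟩) (fun x => ⟨ddiag s x, rfl⟩) ?_ hd
  intro x y hx hy
  refine dbl_ext s ?_ ?_ <;> simp [hx, hy]

end

lemma IsModel.dbl {R B : Type*} [CommRing R] [CommRing B] {ρ : R →+* B} (h : IsModel ρ) (s : R) :
    ∃ ρ' : Dbl s →+* Dbl (ρ s), IsModel ρ' := by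
  obtain ⟨σ, _, n, y, F, φ, hy, hφ, hl⟩ := h
  set g := gF y F with hg
  let ρ' : Dbl s →+* Dbl (ρ s) := ((ρ.comp (dfst s)).prod (ρ.comp (dsnd s))).codRestrict _ (by
    intro x
    obtain ⟨y, hy, -⟩ := dbl_form s x
    refine ⟨ρ y, ?_⟩
    simp [hy])
  let φ' : MvPolynomial σ (Dbl s) →+* Dbl (ρ s) := eval₂Hom ρ' (fun i => ddiag _ (φ (X i)))
  have h1 : ∀ p, dfst _ (φ' p) = φ (MvPolynomial.map (dfst s) p) := by
    intro p
    have : (dfst (ρ s)).comp φ' = φ.comp (MvPolynomial.map (dfst s)) := by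
      ext r
      · simp [φ', hφ]; rfl
      · simp [φ']
    exact congrArg (fun f => f p) this
  have h2 : ∀ p, dsnd _ (φ' p) = φ (MvPolynomial.map (dsnd s) p) := by
    intro p
    have : (dsnd (ρ s)).comp φ' = φ.comp (MvPolynomial.map (dsnd s)) := by
      ext r
      · simp [φ', hφ]; rfl
      · simp [φ']
    exact congrArg (fun f => f p) this
  have c1 : (dfst s).comp (ddiag s) = RingHom.id R := rfl
  have c2 : (dsnd s).comp (ddiag s) = RingHom.id R := rfl
  have hd : ∀ p, φ' (MvPolynomial.map (ddiag s) p) = ddiag _ (φ p) := by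
    intro p
    refine dbl_ext _ ?_ ?_
    · rw [h1, MvPolynomial.map_map, c1, MvPolynomial.map_id]; rfl
    · rw [h2, MvPolynomial.map_map, c2, MvPolynomial.map_id]; rfl
  refine ⟨ρ', σ, inferInstance, n, y, fun i => (F i).map (ddiag s), φ', hy, fun r => by simp [φ'], ?_⟩
  rw [← map_gF]
  refine ⟨?_, ?_, ?_⟩
  · rw [hd]; exact hl.unit.map _
  · intro x
    obtain ⟨z, -, hx⟩ := dbl_form _ x
    obtain ⟨n, p, e⟩ := hl.surj (dfst _ x)
    obtain ⟨m, q, e'⟩ := hl.surj z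
    refine ⟨n + m, MvPolynomial.map (ddiag s) (p * g ^ m) + C (dz s) * MvPolynomial.map (ddiag s) (q * g ^ n), ?_⟩
    rw [map_add, map_mul φ', hd, hd, hd, map_mul φ, map_mul φ, map_pow, map_pow, ← e, ← e', ← hg]
    have : φ' (C (dz s)) = dz (ρ s) := by
      refine dbl_ext _ ?_ ?_
      · rw [h1, map_C, hφ]; simp
      · rw [h2, map_C, hφ]; simp
    rw [this]
    conv_lhs => rw [hx]
    simp only [map_mul, map_pow]
    ring
  · intro p hp
    have a1 := h1 p
    have a2 := h2 p
    rw [hp, map_zero] at a1 a2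
    obtain ⟨n, hn⟩ := hl.inj _ a1.symm
    obtain ⟨m, hm⟩ := hl.inj _ a2.symm
    refine ⟨n + m, ?_⟩
    have inj : ∀ q : MvPolynomial σ (Dbl s), MvPolynomial.map (dfst s) q = 0 → MvPolynomial.map (dsnd s) q = 0 → q = 0 := by
      intro q hq1 hq2
      ext a : 1
      refine dbl_ext _ ?_ ?_
      · have := congrArg (coeff a) hq1
        rw [coeff_map] at this
        simpa using this
      · have := congrArg (coeff a) hq2
        rw [coeff_map] at this
        simpa using this
    refine inj _ ?_ ?_
    · rw [map_mul, map_pow, MvPolynomial.map_map, c1, MvPolynomial.map_id, ← hg, pow_add, mul_right_comm, hn, zero_mul]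
    · rw [map_mul, map_pow, MvPolynomial.map_map, c2, MvPolynomial.map_id, ← hg, pow_add, mul_assoc, hm, mul_zero]

/-- relative transitivity -/
lemma rel_model {d k : ℕ} (hk : d < k) (hk2 : 2 ≤ k) {R : Type u} [CommRing R] [IsNoetherianRing R]
    (hd : ringKrullDim R ≤ d) {B : Type*} [CommRing B] {ρ : R →+* B} (h : IsModel ρ) (s : R)
    (v w : Fin (k + 1) → B) (hv : Um v) (i : Fin (k + 1)) (hw : v = Pi.single i 1 + (ρ s) ^ 2 • w) :
    ∃ σ ∈ EI (Fin (k + 1)) (Ideal.span {ρ s}), (σ : Matrix _ _ B) *ᵥ v = Pi.single i 1 := by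
  have hc : ∀ i j : Fin (k + 1), ∃ l, l ≠ i ∧ l ≠ j := by
    intro i j
    obtain ⟨l, hl⟩ := Finset.exists_mem_notMem_of_card_lt_card (s := {i, j}) (t := (Finset.univ : Finset (Fin (k + 1)))) (by
      refine lt_of_le_of_lt Finset.card_le_two ?_
      simp; omega)
    refine ⟨l, ?_⟩
    simpa using hl
  haveI := dbl_noeth (s ^ 2)
  obtain ⟨ρ', hρ'⟩ := h.dbl (s ^ 2)
  have hT := hρ'.TT hk hk2 (dbl_dim (s ^ 2) hd)
  rw [map_pow] at hT
  obtain ⟨u, hu⟩ := hv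
  let t := ρ s ^ 2
  let mk (a c : B) : Dbl (ρ s ^ 2) := ⟨(a, a + ρ s ^ 2 * c), c, rfl⟩
  have mk1 : ∀ a c, dfst _ (mk a c) = a := fun _ _ => rfl
  have mk2 : ∀ a c, dsnd _ (mk a c) = a + ρ s ^ 2 * c := fun _ _ => rfl
  let V : Fin (k + 1) → Dbl (ρ s ^ 2) := fun j => mk ((Pi.single i 1 : Fin (k + 1) → B) j) (w j)
  have hV1 : dfst _ ∘ V = Pi.single i 1 := by ext j; simp [V, mk1]
  have hV2 : dsnd _ ∘ V = v := by ext j; simp [V, mk2, hw]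
  have hvi : v i = 1 + ρ s ^ 2 * w i := by rw [hw]; simp
  have hV : Um V := by
    refine ⟨fun j => mk ((Pi.single i 1 : Fin (k + 1) → B) j) (- u j * w i), ?_⟩
    refine dbl_ext _ ?_ ?_
    · simp [mk1, V, Pi.single_apply]
    · have : ∀ j, dsnd _ (V j) = v j := fun j => congrFun hV2 j
      simp only [map_sum, map_mul, map_one, this, mk2]
      have e : ∀ j, ((Pi.single i 1 : Fin (k + 1) → B) j + ρ s ^ 2 * (-u j * w i)) * v j =
        (Pi.single i 1 : Fin (k + 1) → B) j * v j - (ρ s ^ 2 * w i) * (u j * v j) := by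
        intro j; ring
      simp only [e, Finset.sum_sub_distrib, ← Finset.mul_sum, hu]
      simp [Pi.single_apply, hvi]
  obtain ⟨σ, hσ, e⟩ := hT V hV i
  refine ⟨_, rel_of_congr hc (ρ s) (dfst _) (dsnd _) (fun x => ?_) hσ, ?_⟩
  · obtain ⟨y, hy, -⟩ := dbl_form _ x
    exact ⟨y, hy⟩
  · have e1 := map_mulVec' (dfst _) σ V
    have e2 := map_mulVec' (dsnd _) σ V
    rw [e, hV1] at e1
    rw [e, hV2] at e2
    have s1 : (dfst (ρ s ^ 2)) ∘ (Pi.single i (1 : Dbl (ρ s ^ 2))) = (Pi.single i 1 : Fin (k + 1) → B) := by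
      ext j; simp only [Function.comp, Pi.single_apply]; split_ifs <;> simp
    have s2 : (dsnd (ρ s ^ 2)) ∘ (Pi.single i (1 : Dbl (ρ s ^ 2))) = (Pi.single i 1 : Fin (k + 1) → B) := by
      ext j; simp only [Function.comp, Pi.single_apply]; split_ifs <;> simp
    rw [s1] at e1; rw [s2] at e2
    rw [Units.val_mul, ← mulVec_mulVec, e2]
    conv_lhs => rw [← e1]
    rw [mulVec_mulVec, ← Units.val_mul, inv_mul_cancel, Units.val_one, one_mulVec]

end ModelDef
end DK
end

noncomputable section

set_option linter.unusedSimpArgs false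
set_option linter.unusedSectionVars false
set_option linter.unusedVariables false
set_option linter.style.longLine false
set_option linter.style.haveILetI false
namespace DK
open Matrix

section Transv
open TensorProduct
universe u v w

section TRdef
variable {A : Type*} [CommRing A] {P : Type*} [AddCommGroup P] [Module A P]

inductive TRs : A × P → A × P → Prop
  | vec (a : A) (p q : P) : TRs (a, p) (a, p + a • q)
  | fn (a : A) (p : P) (θ : P →ₗ[A] A) : TRs (a, p) (a + θ p, p)

def TR (v w : A × P) : Prop := Relation.ReflTransGen TRs v w

lemma TRs.tr {v w : A × P} (h : TRs v w) : TR v w := Relation.ReflTransGen.single h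

lemma TR.refl (v : A × P) : TR v v := Relation.ReflTransGen.refl
lemma TR.trans {u v w : A × P} (h : TR u v) (h' : TR v w) : TR u w := Relation.ReflTransGen.trans h h'

lemma TR.symm {v w : A × P} (h : TR v w) : TR w v := by
  induction h with
  | refl => exact TR.refl _
  | tail _ hs ih =>
    refine TR.trans ?_ ih
    cases hs with
    | vec a p q =>
      have := (TRs.vec a (p + a • q) (-q)).tr
      simpa using this
    | fn a p θ =>
      have := (TRs.fn (a + θ p) p (-θ)).tr
      simpa using this

lemma TR.equiv {v w : A × P} (h : TR v w) : ∃ e : (A × P) ≃ₗ[A] (A × P), e v = w := by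
  induction h with
  | refl => exact ⟨LinearEquiv.refl A _, rfl⟩
  | tail _ hs ih =>
    obtain ⟨e, he⟩ := ih
    rw [← Prod.mk.eta (p := e v)] at he
    have : ∀ {x y : A × P}, TRs x y → ∃ e : (A × P) ≃ₗ[A] (A × P), e x = y := by
      intro x y hs
      cases hs with
      | vec a p q =>
        refine ⟨LinearEquiv.ofLinear
          (LinearMap.prod (LinearMap.fst A A P) (LinearMap.snd A A P + (LinearMap.toSpanSingleton A P q).comp (LinearMap.fst A A P)))
          (LinearMap.prod (LinearMap.fst A A P) (LinearMap.snd A A P - (LinearMap.toSpanSingleton A P q).comp (LinearMap.fst A A P))) ?_ ?_, ?_⟩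
        · ext <;> simp
        · ext <;> simp
        · simp
      | fn a p θ =>
        refine ⟨LinearEquiv.ofLinear
          (LinearMap.prod (LinearMap.fst A A P + θ.comp (LinearMap.snd A A P)) (LinearMap.snd A A P))
          (LinearMap.prod (LinearMap.fst A A P - θ.comp (LinearMap.snd A A P)) (LinearMap.snd A A P)) ?_ ?_, ?_⟩
        · ext <;> simp
        · ext <;> simp
        · simp
    obtain ⟨e', he'⟩ := this hs
    exact ⟨e.trans e', by rw [LinearEquiv.trans_apply]; rw [Prod.mk.eta] at he; rw [he, he']⟩


def UmM (J : Ideal A) (v : A × P) : Prop := ∃ (c : A) (θ : P →ₗ[A] A), c * v.1 + θ v.2 - 1 ∈ J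

lemma UmM.tr {J : Ideal A} {v w : A × P} (hv : UmM J v) (h : TR v w) : UmM J w := by
  induction h with
  | refl => exact hv
  | tail _ hs ih =>
    cases hs with
    | vec a p q =>
      obtain ⟨c, θ, h⟩ := ih
      refine ⟨c - θ q, θ, ?_⟩
      convert h using 1
      simp; ring
    | fn a p θ' =>
      obtain ⟨c, θ, h⟩ := ih
      refine ⟨c, θ - c • θ', ?_⟩
      convert h using 1
      simp; ring

end TRdef

/-- lifting of transvections -/
lemma TR.lift {A B : Type*} [CommRing A] [CommRing B] {P N : Type*} [AddCommGroup P] [Module A P] [AddCommGroup N]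
    [Module B N] (f : A →+* B) (g : P →+ N) (hg : ∀ a p, g (a • p) = f a • g p)
    (hs : Function.Surjective g) (hθ : ∀ θ : N →ₗ[B] B, ∃ θ' : P →ₗ[A] A, ∀ p, f (θ' p) = θ (g p))
    {v w : B × N} (h : TR v w) : ∀ (x : A × P), (f x.1, g x.2) = v → ∃ y : A × P, TR x y ∧ (f y.1, g y.2) = w := by
  induction h with
  | refl => intro x hx; exact ⟨x, TR.refl _, hx⟩
  | tail _ hst ih =>
    intro x hx
    obtain ⟨⟨y1, y2⟩, hy, e⟩ := ih x hx
    cases hst with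
    | vec a p q =>
      obtain ⟨q, rfl⟩ := hs q
      simp only [Prod.mk.injEq] at e
      refine ⟨_, hy.trans (TRs.vec y1 y2 q).tr, ?_⟩
      simp [hg, e.1, e.2]
    | fn a p θ =>
      obtain ⟨θ', h'⟩ := hθ θ
      simp only [Prod.mk.injEq] at e
      refine ⟨_, hy.trans (TRs.fn y1 y2 θ').tr, ?_⟩
      simp [h', e.1, e.2]

/-- the basic step -/
lemma step_TR {d r : ℕ} (hk : d < r) (hk2 : 2 ≤ r) {R : Type u} [CommRing R] [IsNoetherianRing R]
    (hd : ringKrullDim R ≤ d) {B : Type*} [CommRing B] {ρ : R →+* B} (h : IsModel ρ) (s : R)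
    {N : Type*} [AddCommGroup N] [Module B N] (φ : (Fin r → B) →ₗ[B] N) (ψ : N →ₗ[B] (Fin r → B))
    (h1 : ∀ x, φ (ψ x) = ρ s • x) (h2 : ∀ x, ψ (φ x) = ρ s • x) (a : B) (p : N)
    (hu : UmM (⊥ : Ideal B) (1 + ρ s ^ 3 * a, ρ s ^ 3 • p)) :
    TR (1 + ρ s ^ 3 * a, ρ s ^ 3 • p) (1, (0 : N)) := by
  let Φ : (Fin (r + 1) → B) → B × N := fun x => (x 0, φ (fun j => x j.succ))
  let G : Subgroup (GL (Fin (r + 1)) B) :=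
    { carrier := {σ | ∀ x, TR (Φ x) (Φ ((σ : Matrix _ _ B) *ᵥ x))}
      mul_mem' := by
        intro σ τ h h' x
        rw [Units.val_mul, ← mulVec_mulVec]
        exact (h' x).trans (h _)
      one_mem' := by intro x; rw [Units.val_one, one_mulVec]; exact TR.refl _
      inv_mem' := by
        intro σ h x
        have := (h (((σ⁻¹ : GL (Fin (r + 1)) B) : Matrix _ _ B) *ᵥ x)).symm
        rwa [mulVec_mulVec, ← Units.val_mul, mul_inv_cancel, Units.val_one, one_mulVec] at this }
  have g1 : ∀ (j : Fin r) (c : B), el (Fin.succ_ne_zero j) c ∈ G := by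
    intro j c x
    rw [el_mulVec]
    have := (TRs.vec (x 0) (φ (fun j => x j.succ)) (c • φ (Pi.single j 1))).tr
    convert this using 1
    refine Prod.ext ?_ ?_
    · simp [Φ, Function.update_of_ne (Fin.succ_ne_zero j).symm]
    · simp only [Φ, ← map_smul, ← map_add]
      congr 1
      ext l
      by_cases hl : l = j
      · subst hl; simp [mul_comm]
      · simp [hl, Function.update_of_ne (fun h => hl (Fin.succ_injective _ h) : l.succ ≠ j.succ)]
  have g2 : ∀ (j : Fin r) (c : B), el (Fin.succ_ne_zero j).symm (c * ρ s) ∈ G := by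
    intro j c x
    rw [el_mulVec]
    have := (TRs.fn (x 0) (φ (fun j => x j.succ)) (c • (LinearMap.proj j).comp ψ)).tr
    convert this using 1
    refine Prod.ext ?_ ?_
    · simp [Φ, h2, mul_assoc]
    · simp only [Φ]
      congr 1
  have g3 : EI (Fin (r + 1)) (Ideal.span {ρ s}) ≤ G := by
    refine (Subgroup.closure_le _).2 ?_
    rintro _ ⟨i, j, hij, c, hc, rfl⟩
    obtain ⟨c, rfl⟩ := Ideal.mem_span_singleton'.1 hc
    rcases Fin.eq_zero_or_eq_succ i with rfl | ⟨i, rfl⟩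
    · obtain ⟨j, rfl⟩ := Fin.exists_succ_eq_of_ne_zero hij.symm
      exact g2 j c
    · rcases Fin.eq_zero_or_eq_succ j with rfl | ⟨j, rfl⟩
      · exact g1 i _
      · have := el_commutator (Fin.succ_ne_zero i) (Fin.succ_ne_zero j).symm hij 1 (c * ρ s)
        rw [one_mul] at this
        change el hij (c * ρ s) ∈ G
        rw [this]
        exact mul_mem (mul_mem (mul_mem (g1 i 1) (g2 j c)) (inv_mem (g1 i 1))) (inv_mem (g2 j c))
  let V : Fin (r + 1) → B := Fin.cons (1 + ρ s ^ 3 * a) (ρ s ^ 2 • ψ p)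
  have hV : Φ V = (1 + ρ s ^ 3 * a, ρ s ^ 3 • p) := by
    refine Prod.ext ?_ ?_
    · simp [Φ, V]
    · simp only [Φ, V, Fin.cons_succ]
      change φ (ρ s ^ 2 • ψ p) = _
      rw [map_smul, h1, smul_smul, ← pow_succ]
  have hUV : Um V := by
    obtain ⟨c, θ, e⟩ := hu
    refine ⟨Fin.cons c (fun j => θ (φ (Pi.single j 1))), ?_⟩
    rw [Ideal.mem_bot, sub_eq_zero] at e
    rw [Fin.sum_univ_succ]
    refine Eq.trans ?_ e
    simp only [Fin.cons_zero, V, Fin.cons_succ]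
    congr 1
    have : ρ s ^ 3 • p = φ (ρ s ^ 2 • ψ p) := by
      rw [map_smul, h1, smul_smul, ← pow_succ]
    rw [this]
    change _ = (θ.comp φ) _
    rw [LinearMap.pi_apply_eq_sum_univ (θ.comp φ)]
    refine Finset.sum_congr rfl fun j _ => ?_
    rw [smul_eq_mul, mul_comm]
    congr 1
    change θ (φ _) = θ (φ _)
    congr 2
    ext l
    simp [Pi.single_apply, eq_comm]
  obtain ⟨σ, hσ, e⟩ := rel_model hk hk2 hd h s V (Fin.cons (ρ s * a) (ψ p)) hUV 0 (by
    ext l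
    refine Fin.cases ?_ (fun l => ?_) l
    · simp [V]; ring
    · simp [V])
  have := g3 hσ V
  rw [e, hV] at this
  convert this using 1
  refine Prod.ext ?_ ?_
  · simp [Φ]
  · simp only [Φ]
    rw [show (fun j : Fin r => (Pi.single 0 1 : Fin (r + 1) → B) j.succ) = 0 from by ext; simp]
    simp

/-- hypothesis on existence of generic trivialisations -/
def GenTriv (r : ℕ) (R : Type u) (B : Type v) (N : Type w) [CommRing R] [CommRing B] (ρ : R →+* B) [AddCommGroup N] [Module B N] : Prop :=
  ∃ (p : Ideal R) (_ : p.IsPrime) (s : R) (φ : (Fin r → B) →ₗ[B] N) (ψ : N →ₗ[B] (Fin r → B)),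
    s ∉ p ∧ (∀ x, φ (ψ x) = ρ s • x) ∧ (∀ x, ψ (φ x) = ρ s • x)

lemma one_tmul_surj {A : Type*} [CommRing A] (J : Ideal A) {P : Type*} [AddCommGroup P] [Module A P] (x : (A ⧸ J) ⊗[A] P) :
    ∃ p : P, (1 : A ⧸ J) ⊗ₜ[A] p = x := by
  induction x with
  | zero => exact ⟨0, by simp⟩
  | tmul a p =>
    obtain ⟨a, rfl⟩ := Ideal.Quotient.mk_surjective a
    refine ⟨a • p, ?_⟩
    rw [tmul_smul, smul_tmul', Algebra.smul_def, mul_one]; rfl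
  | add x y hx hy =>
    obtain ⟨p, rfl⟩ := hx
    obtain ⟨q, rfl⟩ := hy
    exact ⟨p + q, by simp [tmul_add]⟩

lemma one_tmul_ker {A : Type*} [CommRing A] (J : Ideal A) {P : Type*} [AddCommGroup P] [Module A P] (p : P)
    (h : (1 : A ⧸ J) ⊗ₜ[A] p = 0) : p ∈ (J • ⊤ : Submodule A P) := by
  have := congrArg (TensorProduct.quotTensorEquivQuotSMul P J) h
  rw [map_zero] at this
  have e : (1 : A ⧸ J) = Ideal.Quotient.mk J 1 := rfl
  rw [e, TensorProduct.quotTensorEquivQuotSMul_mk_tmul, one_smul] at this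
  simpa using this

lemma mem_sup_smul {A : Type*} [CommRing A] (J : Ideal A) (s : A) {P : Type*} [AddCommGroup P] [Module A P] (p : P)
    (h : p ∈ ((J ⊔ Ideal.span {s}) • ⊤ : Submodule A P)) : ∃ q : P, p - s • q ∈ (J • ⊤ : Submodule A P) := by
  rw [Submodule.sup_smul, Submodule.mem_sup] at h
  obtain ⟨x, hx, y, hy, rfl⟩ := h
  rw [Submodule.ideal_span_singleton_smul] at hy
  obtain ⟨q, -, rfl⟩ := hy
  exact ⟨q, by simpa using hx⟩

lemma TR_main {d r : ℕ} (hk : d < r) (hk2 : 2 ≤ r) {R : Type u} [CommRing R] [IsNoetherianRing R]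
    (hd : ringKrullDim R ≤ d) {A : Type v} [CommRing A] {ρ : R →+* A} (h : IsModel ρ)
    {P : Type w} [AddCommGroup P] [Module A P] [Module.Projective A P]
    (hG : ∀ (I : Ideal R), I ≠ ⊤ → ∀ (ρ' : R ⧸ I →+* A ⧸ (I.map ρ)),
      (∀ r, ρ' (Ideal.Quotient.mk I r) = Ideal.Quotient.mk _ (ρ r)) → IsModel ρ' →
      GenTriv r (R ⧸ I) (A ⧸ (I.map ρ)) ((A ⧸ (I.map ρ)) ⊗[A] P) ρ')
    (v : A × P) (hv : UmM ⊥ v) : TR v (1, 0) := by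
  have St : ∀ I : Ideal R, ∀ v : A × P, UmM (I.map ρ) v → ∃ w, TR v w ∧ w.1 - 1 ∈ I.map ρ ∧ w.2 ∈ (I.map ρ • ⊤ : Submodule A P) := by
    intro I
    induction I using WellFoundedGT.induction with
    | ind I ih =>
    intro v hv
    by_cases hI : I = ⊤
    · subst hI
      exact ⟨v, TR.refl _, by rw [Ideal.map_top]; trivial, by rw [Ideal.map_top, Submodule.top_smul]; trivial⟩
    let ρ' : R ⧸ I →+* A ⧸ (I.map ρ) := Ideal.quotientMap _ ρ Ideal.le_comap_map
    have hρ' : ∀ r, ρ' (Ideal.Quotient.mk I r) = Ideal.Quotient.mk _ (ρ r) := fun r => by simp [ρ']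
    have hmod := h.quot I _ rfl ρ' hρ'
    obtain ⟨p, hp, s, φ, ψ, hsp, e1, e2⟩ := hG I hI ρ' hρ' hmod
    obtain ⟨s, rfl⟩ := Ideal.Quotient.mk_surjective s
    have hlt : I < I ⊔ Ideal.span {s ^ 3} := by
      refine lt_of_le_of_ne le_sup_left fun he => hsp ?_
      have : s ^ 3 ∈ I := by
        rw [he]; exact Ideal.mem_sup_right (Ideal.mem_span_singleton_self _)
      refine hp.mem_of_pow_mem 3 ?_
      rw [← map_pow, Ideal.Quotient.eq_zero_iff_mem.2 this]; exact zero_mem _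
    have hmap : (I ⊔ Ideal.span {s ^ 3}).map ρ = I.map ρ ⊔ Ideal.span {ρ s ^ 3} := by
      rw [Ideal.map_sup, Ideal.map_span, Set.image_singleton, map_pow]
    obtain ⟨w, hw, hw1, hw2⟩ := ih _ hlt v (by
      obtain ⟨c, θ, hc⟩ := hv
      exact ⟨c, θ, Ideal.map_mono hlt.le hc⟩)
    rw [hmap] at hw1 hw2
    obtain ⟨q, hq⟩ := mem_sup_smul _ _ _ hw2
    obtain ⟨x, hx, y, hy, exy⟩ := Submodule.mem_sup.1 hw1
    obtain ⟨b, rfl⟩ := Ideal.mem_span_singleton'.1 hy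
    let g : P →+ (A ⧸ (I.map ρ)) ⊗[A] P := (TensorProduct.mk A (A ⧸ (I.map ρ)) P 1).toAddMonoidHom
    have hg : ∀ (a : A) (p : P), g (a • p) = (Ideal.Quotient.mk (I.map ρ) a) • g p := by
      intro a p
      simp only [g, LinearMap.toAddMonoidHom_coe, TensorProduct.mk_apply, tmul_smul, smul_tmul', Algebra.smul_def, mul_one, smul_eq_mul]
      rfl
    have hker : ∀ p ∈ (I.map ρ • ⊤ : Submodule A P), g p = 0 := by
      intro p hp
      refine Submodule.smul_induction_on hp ?_ ?_
      · intro a ha p _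
        rw [hg, Ideal.Quotient.eq_zero_iff_mem.2 ha, zero_smul]
      · intro x y hx hy; rw [map_add, hx, hy, add_zero]
    have hw' := hv.tr hw
    have f1 : Ideal.Quotient.mk (I.map ρ) w.1 = 1 + ρ' (Ideal.Quotient.mk I s) ^ 3 * Ideal.Quotient.mk _ b := by
      have : w.1 = 1 + x + b * ρ s ^ 3 := by rw [add_assoc, exy]; ring
      rw [this, hρ', map_add, map_add, Ideal.Quotient.eq_zero_iff_mem.2 hx]
      simp [mul_comm]
    have f2 : g w.2 = ρ' (Ideal.Quotient.mk I s) ^ 3 • g q := by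
      have := hker _ hq
      rw [map_sub, sub_eq_zero, hg] at this
      rw [this, hρ', map_pow]
    have hst := step_TR hk hk2 ((ringKrullDim_quotient_le I).trans hd) hmod (Ideal.Quotient.mk I s) φ ψ e1 e2
      (Ideal.Quotient.mk _ b) (g q) (by
        rw [← f1, ← f2]
        obtain ⟨c, θ, hc⟩ := hw'
        refine ⟨Ideal.Quotient.mk _ c, θ.baseChange (A ⧸ (I.map ρ)) |>.restrictScalars A |> fun t =>
          (AlgebraTensorModule.rid A (A ⧸ (I.map ρ)) (A ⧸ (I.map ρ))).toLinearMap.comp (θ.baseChange (A ⧸ (I.map ρ))), ?_⟩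
        rw [Ideal.mem_bot]
        have := Ideal.Quotient.eq_zero_iff_mem.2 hc
        rw [← this]
        simp [g, Algebra.smul_def])
    obtain ⟨z, hz, ez⟩ := TR.lift (Ideal.Quotient.mk (I.map ρ)) g hg (fun x => one_tmul_surj _ x) (by
        intro θ
        let θ1 : P →ₗ[A] A ⧸ (I.map ρ) := (θ.restrictScalars A).comp (TensorProduct.mk A (A ⧸ (I.map ρ)) P 1)
        obtain ⟨θ', h'⟩ := Module.projective_lifting_property (Submodule.mkQ (I.map ρ)) θ1 (Submodule.mkQ_surjective _)
        exact ⟨θ', fun p => congrArg (fun f => f p) h'⟩) hst w (by rw [f1, f2])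
    refine ⟨z, hw.trans hz, ?_, ?_⟩
    · have := congrArg Prod.fst ez
      simp only at this
      rw [← Ideal.Quotient.eq_zero_iff_mem, map_sub, this]; simp
    · exact one_tmul_ker _ _ (congrArg Prod.snd ez)
  obtain ⟨w, hw, h1, h2⟩ := St ⊥ v (by rwa [Ideal.map_bot])
  rw [Ideal.map_bot] at h1 h2
  have : w = (1, 0) := by
    refine Prod.ext ?_ ?_
    · exact sub_eq_zero.1 ((Ideal.mem_bot).1 h1)
    · simpa using h2
  rw [← this]; exact hw

end Transv
end DK
end

noncomputable section

set_option linter.unusedSimpArgs false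
set_option linter.unusedSectionVars false
set_option linter.unusedVariables false
set_option linter.style.longLine false
set_option linter.style.haveILetI false
namespace DK
open Matrix

section FreeRes
open TensorProduct
universe u v

/-- stably free modules -/
def SF (B : Type*) [CommRing B] (M : Type*) [AddCommGroup M] [Module B M] : Prop :=
  ∃ a b : ℕ, Nonempty ((M × (Fin a → B)) ≃ₗ[B] (Fin b → B))

lemma SF.congr {B : Type*} [CommRing B] {M M' : Type*} [AddCommGroup M] [Module B M] [AddCommGroup M'] [Module B M']
    (e : M ≃ₗ[B] M') (h : SF B M) : SF B M' := by
  obtain ⟨a, b, ⟨f⟩⟩ := h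
  exact ⟨a, b, ⟨(LinearEquiv.prodCongr e.symm (LinearEquiv.refl B _)).trans f⟩⟩

def finAddE (B : Type*) [CommRing B] (a b : ℕ) : ((Fin a → B) × (Fin b → B)) ≃ₗ[B] (Fin (a + b) → B) :=
  (LinearEquiv.sumArrowLequivProdArrow (Fin a) (Fin b) B B).symm.trans
    (LinearEquiv.funCongrLeft B B finSumFinEquiv.symm)

lemma SF.prod {B : Type*} [CommRing B] {M M' : Type*} [AddCommGroup M] [Module B M] [AddCommGroup M'] [Module B M']
    (h : SF B M) (h' : SF B M') : SF B (M × M') := by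
  obtain ⟨a, b, ⟨f⟩⟩ := h
  obtain ⟨a', b', ⟨f'⟩⟩ := h'
  exact ⟨a + a', b + b', ⟨((LinearEquiv.prodCongr (LinearEquiv.refl B _) (finAddE B a a').symm).trans
    (LinearEquiv.prodProdProdComm B M M' _ _)).trans ((LinearEquiv.prodCongr f f').trans (finAddE B b b'))⟩⟩

lemma SF.free {B : Type*} [CommRing B] (k : ℕ) : SF B (Fin k → B) :=
  ⟨0, k + 0, ⟨finAddE B k 0⟩⟩

lemma SF.proj {B : Type*} [CommRing B] {M : Type*} [AddCommGroup M] [Module B M] (h : SF B M) : Module.Projective B M := by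
  obtain ⟨a, b, ⟨f⟩⟩ := h
  refine Module.Projective.of_split (f.toLinearMap.comp (LinearMap.inl B M (Fin a → B)))
    ((LinearMap.fst B M (Fin a → B)).comp f.symm.toLinearMap) ?_
  ext; simp

section split
variable {B : Type*} [CommRing B] {L F M : Type*} [AddCommGroup L] [Module B L] [AddCommGroup F] [Module B F]
  [AddCommGroup M] [Module B M]

lemma split_equiv (i : L →ₗ[B] F) (f : F →ₗ[B] M) (hi : Function.Injective i) (hf : Function.Surjective f)
    (he : Function.Exact i f) [Module.Projective B M] : Nonempty (F ≃ₗ[B] L × M) := by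
  obtain ⟨l, hl⟩ := Module.projective_lifting_property f LinearMap.id hf
  exact ⟨(he.splitSurjectiveEquiv hi ⟨l, hl⟩).1⟩
end split

def FR (B : Type u) [CommRing B] : ℕ → ∀ (M : Type u) [AddCommGroup M] [Module B M], Prop
  | 0, M, _, _ => SF B M
  | n + 1, M, _, _ => ∃ (k : ℕ) (f : (Fin k → B) →ₗ[B] M), Function.Surjective f ∧ FR B n (LinearMap.ker f)

variable {B : Type u} [CommRing B]

lemma FR.congr {n : ℕ} {M M' : Type u} [AddCommGroup M] [Module B M] [AddCommGroup M'] [Module B M']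
    (e : M ≃ₗ[B] M') (h : FR B n M) : FR B n M' := by
  cases n with
  | zero => exact SF.congr e h
  | succ n =>
    obtain ⟨k, f, hf, hk⟩ := h
    refine ⟨k, e.toLinearMap.comp f, e.surjective.comp hf, ?_⟩
    rw [LinearMap.ker_comp_of_ker_eq_bot _ e.ker]
    exact hk

lemma FR.of_exact {n : ℕ} {L F M : Type u} [AddCommGroup L] [Module B L] [AddCommGroup F] [Module B F]
    [AddCommGroup M] [Module B M] [Module.Free B F] [Module.Finite B F] (i : L →ₗ[B] F) (f : F →ₗ[B] M)
    (hi : Function.Injective i) (hf : Function.Surjective f)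
    (he : Function.Exact i f) (h : FR B n L) : FR B (n + 1) M := by
  let b := Module.Free.chooseBasis B F
  let ι := Module.Free.ChooseBasisIndex B F
  let e : (Fin (Fintype.card ι) → B) ≃ₗ[B] F :=
    (LinearEquiv.funCongrLeft B B (Fintype.equivFin ι)).trans b.equivFun.symm
  refine ⟨_, f.comp e.toLinearMap, hf.comp e.surjective, ?_⟩
  let e1 : L ≃ₗ[B] LinearMap.ker f :=
    (LinearEquiv.ofInjective i hi).trans (LinearEquiv.ofEq _ _ he.linearMap_ker_eq.symm)
  let e2 : LinearMap.ker f ≃ₗ[B] LinearMap.ker (f.comp e.toLinearMap) :=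
    (e.symm.submoduleMap (LinearMap.ker f)).trans (LinearEquiv.ofEq _ _ (by
      ext x
      simp [LinearMap.mem_ker, Submodule.mem_map, LinearEquiv.symm_apply_eq]))
  exact FR.congr (e1.trans e2) h

lemma FR.succ {n : ℕ} : ∀ {M : Type u} [AddCommGroup M] [Module B M], FR B n M → FR B (n + 1) M := by
  induction n with
  | zero =>
    intro M _ _ h
    obtain ⟨a, b, ⟨f⟩⟩ := id h
    refine FR.of_exact (L := Fin a → B) (F := Fin b → B) (f.toLinearMap.comp (LinearMap.inr B M (Fin a → B)))
      ((LinearMap.fst B M (Fin a → B)).comp f.symm.toLinearMap) ?_ ?_ ?_ (SF.free a)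
    · exact f.injective.comp (LinearMap.inr_injective (R := B))
    · exact (LinearMap.fst_surjective (R := B)).comp f.symm.surjective
    · intro x
      simp only [LinearMap.comp_apply, LinearMap.fst_apply, Set.mem_range, LinearMap.inr_apply, LinearEquiv.coe_coe]
      constructor
      · intro h
        refine ⟨(f.symm x).2, ?_⟩
        rw [← h]; simp
      · rintro ⟨y, rfl⟩; simp
  | succ n ih =>
    intro M _ _ h
    obtain ⟨k, f, hf, hk⟩ := h
    exact ⟨k, f, hf, ih hk⟩

lemma FR.mono {n m : ℕ} (hnm : n ≤ m) {M : Type u} [AddCommGroup M] [Module B M] (h : FR B n M) : FR B m M := by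
  induction m, hnm using Nat.le_induction with
  | base => exact h
  | succ m _ ih => exact ih.succ

lemma FR.ext {n : ℕ} : ∀ {M' M M'' : Type u} [AddCommGroup M'] [Module B M'] [AddCommGroup M] [Module B M]
    [AddCommGroup M''] [Module B M''] (i : M' →ₗ[B] M) (p : M →ₗ[B] M'')
    (hi : Function.Injective i) (hp : Function.Surjective p)
    (he : Function.Exact i p) (h' : FR B n M') (h'' : FR B n M''), FR B n M := by
  induction n with
  | zero =>
    intro M' M M'' _ _ _ _ _ _ i p hi hp he h' h''
    haveI := SF.proj h''
    obtain ⟨e⟩ := split_equiv i p hi hp he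
    exact SF.congr e.symm (SF.prod h' h'')
  | succ n ih =>
    intro M' M M'' _ _ _ _ _ _ i p hi hp he h' h''
    obtain ⟨a, f', hf', hk'⟩ := h'
    obtain ⟨b, f'', hf'', hk''⟩ := h''
    obtain ⟨l, hl⟩ := Module.projective_lifting_property p f'' hp
    have hl' : ∀ y, p (l y) = f'' y := fun y => congrArg (fun f => f y) hl
    have hpi : ∀ x, p (i x) = 0 := fun x => (he (i x)).2 ⟨x, rfl⟩
    let f : ((Fin a → B) × (Fin b → B)) →ₗ[B] M := LinearMap.coprod (i.comp f') l
    have hf : Function.Surjective f := by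
      intro m
      obtain ⟨y, hy⟩ := hf'' (p m)
      obtain ⟨x, hx⟩ := (he (m - l y)).1 (by rw [map_sub, hl', hy, sub_self])
      obtain ⟨z, rfl⟩ := hf' x
      exact ⟨(z, y), by simp [f, hx]⟩
    refine FR.of_exact (L := LinearMap.ker f) (LinearMap.ker f).subtype f (Submodule.subtype_injective _) hf ?_ ?_
    · intro x; simp
    · let j : LinearMap.ker f' →ₗ[B] LinearMap.ker f :=
        LinearMap.codRestrict _ ((LinearMap.inl B _ (Fin b → B)).comp (LinearMap.ker f').subtype) (by
          rintro ⟨x, hx⟩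
          simp [f, LinearMap.mem_ker.1 hx])
      let q : LinearMap.ker f →ₗ[B] LinearMap.ker f'' :=
        LinearMap.codRestrict _ ((LinearMap.snd B (Fin a → B) _).comp (LinearMap.ker f).subtype) (by
          rintro ⟨⟨x, y⟩, hx⟩
          have : i (f' x) + l y = 0 := by simpa [f] using hx
          have := congrArg p this
          rw [map_add, hpi, hl'] at this
          simpa using this)
      refine ih j q ?_ ?_ ?_ hk' hk''
      · rintro ⟨x, hx⟩ ⟨y, hy⟩ h
        have := congrArg (fun z => z.1.1) h
        exact Subtype.ext this
      · rintro ⟨y, hy⟩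
        obtain ⟨x, hx⟩ := (he (l y)).1 (by rw [hl']; exact hy)
        obtain ⟨z, rfl⟩ := hf' x
        refine ⟨⟨(-z, y), ?_⟩, rfl⟩
        simp [f, hx]
      · rintro ⟨⟨x, y⟩, hxy⟩
        constructor
        · intro h
          have h0 : y = 0 := congrArg Subtype.val h
          subst h0
          have : i (f' x) = 0 := by simpa [f] using hxy
          refine ⟨⟨x, ?_⟩, rfl⟩
          exact hi (by rw [this, map_zero])
        · rintro ⟨⟨z, hz⟩, h⟩
          rw [← h]; rfl

lemma FR.coker {n : ℕ} {M' M M'' : Type u} [AddCommGroup M'] [Module B M'] [AddCommGroup M] [Module B M]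
    [AddCommGroup M''] [Module B M''] (i : M' →ₗ[B] M) (p : M →ₗ[B] M'')
    (hi : Function.Injective i) (hp : Function.Surjective p)
    (he : Function.Exact i p) (h' : FR B n M') (h : FR B (n + 1) M) : FR B (n + 1) M'' := by
  obtain ⟨k, f, hf, hk⟩ := h
  refine ⟨k, p.comp f, hp.comp hf, ?_⟩
  let e : M' ≃ₗ[B] LinearMap.ker p :=
    (LinearEquiv.ofInjective i hi).trans (LinearEquiv.ofEq _ _ he.linearMap_ker_eq.symm)
  let q : LinearMap.ker (p.comp f) →ₗ[B] LinearMap.ker p :=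
    LinearMap.codRestrict _ (f.comp (LinearMap.ker (p.comp f)).subtype) (by rintro ⟨x, hx⟩; exact hx)
  let j : LinearMap.ker f →ₗ[B] LinearMap.ker (p.comp f) := Submodule.inclusion (by
    intro x hx
    simp [LinearMap.mem_ker.1 hx])
  refine FR.ext j q (Submodule.inclusion_injective _) ?_ ?_ hk (FR.congr e h')
  · rintro ⟨y, hy⟩
    obtain ⟨x, rfl⟩ := hf y
    exact ⟨⟨x, hy⟩, rfl⟩
  · rintro ⟨x, hx⟩
    constructor
    · intro h
      exact ⟨⟨x, congrArg Subtype.val h⟩, rfl⟩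
    · rintro ⟨⟨z, hz⟩, h⟩
      have : z = x := congrArg Subtype.val h
      subst this
      exact Subtype.ext hz

lemma baseChange_exact (B' : Type*) [CommRing B'] {B : Type*} [CommRing B] [Algebra B B'] [Module.Flat B B'] {F M : Type*} [AddCommGroup F] [Module B F]
    [AddCommGroup M] [Module B M] (f : F →ₗ[B] M) (hf : Function.Surjective f) :
    Function.Injective ((LinearMap.ker f).subtype.baseChange B') ∧ Function.Surjective (f.baseChange B') ∧
    Function.Exact ((LinearMap.ker f).subtype.baseChange B') (f.baseChange B') := by
  refine ⟨?_, ?_, ?_⟩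
  · rw [LinearMap.baseChange_eq_ltensor]
    exact Module.Flat.lTensor_preserves_injective_linearMap _ (Submodule.subtype_injective _)
  · rw [LinearMap.baseChange_eq_ltensor]
    exact LinearMap.lTensor_surjective _ hf
  · rw [LinearMap.baseChange_eq_ltensor, LinearMap.baseChange_eq_ltensor]
    refine lTensor_exact _ ?_ hf
    intro x; simp

lemma SF.baseChange (B' : Type*) [CommRing B'] {B : Type*} [CommRing B] [Algebra B B'] {M : Type*} [AddCommGroup M] [Module B M] (h : SF B M) :
    SF B' (B' ⊗[B] M) := by
  obtain ⟨a, b, ⟨f⟩⟩ := h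
  refine ⟨a, b, ⟨?_⟩⟩
  let e := f.baseChange B B' _ _
  let p (k : ℕ) : B' ⊗[B] (Fin k → B) ≃ₗ[B'] (Fin k → B') := TensorProduct.piScalarRight B B' B' (Fin k)
  exact ((LinearEquiv.prodCongr (LinearEquiv.refl B' _) (p a).symm).trans (TensorProduct.prodRight B B' B' M (Fin a → B)).symm).trans
    (e.trans (p b))

lemma FR.baseChange (B' : Type u) [CommRing B'] [Algebra B B'] [Module.Flat B B'] {n : ℕ} : ∀ {M : Type u} [AddCommGroup M] [Module B M]
    (h : FR B n M), FR B' n (B' ⊗[B] M) := by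
  induction n with
  | zero => intro M _ _ h; exact SF.baseChange B' h
  | succ n ih =>
    intro M _ _ h
    obtain ⟨k, f, hf, hk⟩ := h
    obtain ⟨h1, h2, h3⟩ := baseChange_exact B' f hf
    exact FR.of_exact _ _ h1 h2 h3 (ih hk)

lemma FR.sf_baseChange (B' : Type*) [CommRing B'] [Algebra B B'] [Module.Flat B B'] {n : ℕ} : ∀ {M : Type u} [AddCommGroup M] [Module B M]
    (h : FR B n M) (hp : Module.Projective B' (B' ⊗[B] M)), SF B' (B' ⊗[B] M) := by
  induction n with
  | zero => intro M _ _ h _; exact SF.baseChange B' h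
  | succ n ih =>
    intro M _ _ h hp
    obtain ⟨k, f, hf, hk⟩ := h
    obtain ⟨h1, h2, h3⟩ := baseChange_exact B' f hf
    obtain ⟨e⟩ := split_equiv _ _ h1 h2 h3
    have hL : Module.Projective B' (B' ⊗[B] LinearMap.ker f) :=
      Module.Projective.of_split (e.symm.toLinearMap.comp (LinearMap.inl B' _ _)) ((LinearMap.fst B' _ _).comp e.toLinearMap) (by ext; simp)
    obtain ⟨a, b, ⟨g⟩⟩ := ih hk hL
    let p : B' ⊗[B] (Fin k → B) ≃ₗ[B'] (Fin k → B') := TensorProduct.piScalarRight B B' B' (Fin k)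
    refine ⟨b, k + a, ⟨?_⟩⟩
    exact (LinearEquiv.prodCongr (LinearEquiv.refl B' _) g.symm).trans
      ((LinearEquiv.prodAssoc B' _ _ _).symm.trans
      ((LinearEquiv.prodCongr ((LinearEquiv.prodComm B' _ _).trans (e.symm.trans p)) (LinearEquiv.refl B' _)).trans (finAddE B' k a)))

end FreeRes
end DK
end

noncomputable section

set_option linter.unusedSimpArgs false
set_option linter.unusedSectionVars false
set_option linter.unusedVariables false
set_option linter.style.longLine false
set_option linter.style.haveILetI false
namespace DK
open Matrix

section Lang
open TensorProduct
universe u v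

def AllFR (B : Type u) [CommRing B] : Prop :=
  ∀ (M : Type u) [AddCommGroup M] [Module B M] [Module.Finite B M], ∃ n, FR B n M

lemma AllFR.field (K : Type u) [Field K] : AllFR K := by
  intro M _ _ _
  refine ⟨0, ?_⟩
  exact SF.congr (Module.finBasis K M).equivFun.symm (SF.free _)

lemma ex_ext {B : Type u} [CommRing B] {M' M M'' : Type u} [AddCommGroup M'] [Module B M'] [AddCommGroup M] [Module B M]
    [AddCommGroup M''] [Module B M''] (i : M' →ₗ[B] M) (p : M →ₗ[B] M'')
    (hi : Function.Injective i) (hp : Function.Surjective p)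
    (he : Function.Exact i p) (h' : ∃ n, FR B n M') (h'' : ∃ n, FR B n M'') : ∃ n, FR B n M := by
  obtain ⟨n, h'⟩ := h'
  obtain ⟨m, h''⟩ := h''
  exact ⟨max n m, FR.ext i p hi hp he (h'.mono (le_max_left _ _)) (h''.mono (le_max_right _ _))⟩

lemma ex_coker {B : Type u} [CommRing B] {M' M M'' : Type u} [AddCommGroup M'] [Module B M'] [AddCommGroup M] [Module B M]
    [AddCommGroup M''] [Module B M''] (i : M' →ₗ[B] M) (p : M →ₗ[B] M'')
    (hi : Function.Injective i) (hp : Function.Surjective p)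
    (he : Function.Exact i p) (h' : ∃ n, FR B n M') (h : ∃ n, FR B n M) : ∃ n, FR B n M'' := by
  obtain ⟨n, h'⟩ := h'
  obtain ⟨m, h⟩ := h
  exact ⟨max n m + 1, FR.coker i p hi hp he (h'.mono (le_max_left _ _)) (h.mono (le_trans (le_max_right _ _) (Nat.le_succ _)))⟩

lemma ideal_gen {D : Type*} [CommRing D] [IsDomain D] (J : Ideal (Polynomial D)) (hJ : J ≠ ⊥) :
    ∃ f ∈ J, f ≠ 0 ∧ ∀ g ∈ J, ∃ d : D, d ≠ 0 ∧ Polynomial.C d * g ∈ Ideal.span {f} := by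
  classical
  have hex : ∃ n, ∃ f ∈ J, f ≠ 0 ∧ f.natDegree = n := by
    obtain ⟨f, hf, h0⟩ := Submodule.exists_mem_ne_zero_of_ne_bot hJ
    exact ⟨_, f, hf, h0, rfl⟩
  obtain ⟨f, hf, h0, hdeg⟩ := Nat.find_spec hex
  have hmin : ∀ g ∈ J, g ≠ 0 → f.natDegree ≤ g.natDegree := by
    intro g hg hg0
    rw [hdeg]; exact Nat.find_min' hex ⟨g, hg, hg0, rfl⟩
  refine ⟨f, hf, h0, ?_⟩
  intro g
  induction hn : g.natDegree using Nat.strong_induction_on generalizing g with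
  | _ n ih =>
  intro hg
  by_cases hg0 : g = 0
  · exact ⟨1, one_ne_zero, by simp [hg0]⟩
  have hle := hmin g hg hg0
  let r := Polynomial.C f.leadingCoeff * g - Polynomial.C g.leadingCoeff * Polynomial.X ^ (g.natDegree - f.natDegree) * f
  have hr : r ∈ J := J.sub_mem (J.mul_mem_left _ hg) (J.mul_mem_left _ hf)
  by_cases hr0 : r = 0
  · refine ⟨f.leadingCoeff, by simpa using h0, ?_⟩
    rw [sub_eq_zero.1 hr0]
    exact Ideal.mem_span_singleton'.2 ⟨_, rfl⟩
  have hlt : r.natDegree < n := by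
    have hlf : f.leadingCoeff ≠ 0 := by simpa using h0
    have hlg : g.leadingCoeff ≠ 0 := by simpa using hg0
    have e1 : (Polynomial.C f.leadingCoeff * g).degree = g.degree := by
      rw [Polynomial.degree_mul, Polynomial.degree_C hlf, zero_add]
    have e2 : (Polynomial.C g.leadingCoeff * Polynomial.X ^ (g.natDegree - f.natDegree) * f).degree = g.degree := by
      rw [Polynomial.degree_mul, Polynomial.degree_C_mul_X_pow _ hlg, Polynomial.degree_eq_natDegree h0,
        Polynomial.degree_eq_natDegree hg0]
      norm_cast
      omega
    have : r.degree < (Polynomial.C f.leadingCoeff * g).degree := by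
      refine Polynomial.degree_sub_lt (e1.trans e2.symm) ?_ ?_
      · exact mul_ne_zero (by simpa using h0) hg0
      · rw [Polynomial.leadingCoeff_mul, Polynomial.leadingCoeff_mul, Polynomial.leadingCoeff_C, Polynomial.leadingCoeff_C_mul_X_pow, mul_comm]
    rw [e1] at this
    rw [← hn]
    exact Polynomial.natDegree_lt_natDegree hr0 this
  obtain ⟨d, hd, hd'⟩ := ih _ hlt r rfl hr
  refine ⟨d * f.leadingCoeff, mul_ne_zero hd (by simpa using h0), ?_⟩
  have : Polynomial.C (d * f.leadingCoeff) * g = Polynomial.C d * r + Polynomial.C d * Polynomial.C g.leadingCoeff * Polynomial.X ^ (g.natDegree - f.natDegree) * f := by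
    simp only [r, Polynomial.C_mul]; ring
  rw [this]
  exact Ideal.add_mem _ hd' (Ideal.mem_span_singleton'.2 ⟨_, rfl⟩)

lemma mem_mapC_iff {B : Type*} [CommRing B] (p : Ideal B) (g : Polynomial B) :
    g ∈ p.map (Polynomial.C : B →+* Polynomial B) ↔ g.map (Ideal.Quotient.mk p) = 0 := by
  rw [Ideal.mem_map_C_iff, Polynomial.ext_iff]
  simp [Polynomial.coeff_map, Ideal.Quotient.eq_zero_iff_mem]

lemma prime_gen {B : Type*} [CommRing B] [IsNoetherianRing B] (P : Ideal (Polynomial B)) (p : Ideal B) [p.IsPrime]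
    (hp : p.map (Polynomial.C : B →+* Polynomial B) < P) :
    ∃ f ∈ P, (∀ g, f * g ∈ p.map (Polynomial.C : B →+* Polynomial B) → g ∈ p.map (Polynomial.C : B →+* Polynomial B)) ∧
      ∃ d ∉ p, ∀ g ∈ P, ∃ q, Polynomial.C d * g - q * f ∈ p.map (Polynomial.C : B →+* Polynomial B) := by
  let π : Polynomial B →+* Polynomial (B ⧸ p) := Polynomial.mapRingHom (Ideal.Quotient.mk p)
  have hπ : Function.Surjective π := Polynomial.map_surjective _ Ideal.Quotient.mk_surjective
  have hk : ∀ g, g ∈ p.map (Polynomial.C : B →+* Polynomial B) ↔ π g = 0 := fun g => mem_mapC_iff p g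
  obtain ⟨f, hf, hf0, hd⟩ := ideal_gen (P.map π) (by
    intro hbot
    obtain ⟨g, hg, hgp⟩ := SetLike.exists_of_lt hp
    have := Ideal.mem_map_of_mem π hg
    rw [hbot, Ideal.mem_bot] at this
    exact hgp ((hk g).2 this))
  obtain ⟨f, hfP, rfl⟩ := (Ideal.mem_map_iff_of_surjective π hπ).1 hf
  refine ⟨f, hfP, ?_, ?_⟩
  · intro g hg
    rw [hk] at hg ⊢
    rw [map_mul] at hg
    exact (mul_eq_zero.1 hg).resolve_left hf0
  · have hd1 : ∀ g ∈ P, ∃ d ∉ p, ∃ q, Polynomial.C d * g - q * f ∈ p.map (Polynomial.C : B →+* Polynomial B) := by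
      intro g hg
      obtain ⟨d, hd0, hd1⟩ := hd _ (Ideal.mem_map_of_mem π hg)
      obtain ⟨d, rfl⟩ := Ideal.Quotient.mk_surjective d
      obtain ⟨q, hq⟩ := Ideal.mem_span_singleton'.1 hd1
      obtain ⟨q, rfl⟩ := hπ q
      refine ⟨d, fun h => hd0 (Ideal.Quotient.eq_zero_iff_mem.2 h), q, ?_⟩
      rw [hk, map_sub, map_mul, map_mul, hq]
      simp [π]
    obtain ⟨S, hS⟩ := (isNoetherian_def.1 (inferInstance : IsNoetherian (Polynomial B) (Polynomial B))) P
    choose! D hD Q hQ using hd1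
    have hSP : ∀ g ∈ S, g ∈ P := fun g hg => by rw [← hS]; exact Submodule.subset_span hg
    refine ⟨∏ g ∈ S, D g, ?_, ?_⟩
    · intro h
      obtain ⟨g, hg, hgp⟩ := (Ideal.IsPrime.prod_mem_iff (p := p)).1 h
      exact hD g (hSP g hg) hgp
    · intro g hg
      rw [← hS] at hg
      refine Submodule.span_induction (p := fun g _ => ∃ q, Polynomial.C (∏ g ∈ S, D g) * g - q * f ∈ p.map (Polynomial.C : B →+* Polynomial B)) ?_ ?_ ?_ ?_ hg
      · intro g hg
        classical
        refine ⟨Polynomial.C (∏ g ∈ S.erase g, D g) * Q g, ?_⟩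
        rw [← Finset.mul_prod_erase S D hg, Polynomial.C_mul]
        convert Ideal.mul_mem_left _ (Polynomial.C (∏ g ∈ S.erase g, D g)) (hQ g (hSP g hg)) using 1
        ring
      · exact ⟨0, by simp⟩
      · rintro x y _ _ ⟨q, hq⟩ ⟨q', hq'⟩
        refine ⟨q + q', ?_⟩
        convert Ideal.add_mem _ hq hq' using 1
        ring
      · rintro a x _ ⟨q, hq⟩
        refine ⟨a * q, ?_⟩
        convert Ideal.mul_mem_left _ a hq using 1
        simp only [smul_eq_mul]; ring

lemma AllFR.poly {B : Type u} [CommRing B] [IsNoetherianRing B] (hB : AllFR B) : AllFR (Polynomial B) := by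
  have key : ∀ (p : Ideal B) (P : Ideal (Polynomial B)), P.IsPrime → P.comap Polynomial.C = p →
      ∃ n, FR (Polynomial B) n (Polynomial B ⧸ P) := by
    intro p
    induction p using WellFoundedGT.induction with
    | ind p ih =>
    intro P hP hp
    haveI hpp : p.IsPrime := by rw [← hp]; exact Ideal.comap_isPrime _ _
    let pT := p.map (Polynomial.C : B →+* Polynomial B)
    have hpT : ∃ n, FR (Polynomial B) n (Polynomial B ⧸ pT) := by
      obtain ⟨n, hn⟩ := hB (B ⧸ p)
      refine ⟨n, FR.congr ?_ (hn.baseChange (Polynomial B))⟩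
      exact (Algebra.TensorProduct.quotIdealMapEquivTensorQuot (Polynomial B) p).symm.toLinearEquiv
    have hle : pT ≤ P := by
      rw [Ideal.map_le_iff_le_comap, hp]
    rcases hle.eq_or_lt with h | hlt
    · rw [← h]; exact hpT
    obtain ⟨f, hfP, hf, d, hd, hdP⟩ := prime_gen P p hlt
    -- the submodule P/pT
    let P0 : Submodule (Polynomial B) (Polynomial B ⧸ pT) := Submodule.map (Submodule.mkQ pT) P
    have hP0 : ∀ g, Submodule.mkQ pT g ∈ P0 ↔ g ∈ P := by
      intro g
      constructor
      · rintro ⟨g', hg', e⟩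
        have : g' - g ∈ pT := (Submodule.Quotient.eq pT).1 e
        have := P.sub_mem hg' (hle this)
        simpa using this
      · intro h; exact ⟨g, h, rfl⟩
    let m : (Polynomial B ⧸ pT) →ₗ[Polynomial B] P0 :=
      LinearMap.codRestrict P0 (LinearMap.lsmul (Polynomial B) (Polynomial B ⧸ pT) f) (by
        intro x
        obtain ⟨x, rfl⟩ := Submodule.mkQ_surjective pT x
        rw [LinearMap.lsmul_apply, ← map_smul, hP0]
        exact P.mul_mem_right _ hfP)
    have hm : Function.Injective m := by
      rw [injective_iff_map_eq_zero]
      intro x hx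
      obtain ⟨x, rfl⟩ := Submodule.mkQ_surjective pT x
      have h1 : f • Submodule.mkQ pT x = 0 := congrArg Subtype.val hx
      rw [← map_smul, Submodule.mkQ_apply, Submodule.Quotient.mk_eq_zero] at h1
      rw [Submodule.mkQ_apply, Submodule.Quotient.mk_eq_zero]
      exact hf _ h1
    have hkill : ∀ (M : Type u) [AddCommGroup M] [Module (Polynomial B) M] [Module.Finite (Polynomial B) M],
        (∀ c ∈ p, ∀ x : M, (Polynomial.C c : Polynomial B) • x = 0) → (∀ x : M, (Polynomial.C d : Polynomial B) • x = 0) →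
        ∃ n, FR (Polynomial B) n M := by
      intro M _ _ hfin
      refine IsNoetherianRing.induction_on_isQuotientEquivQuotientPrime (Polynomial B) (M := M) hfin
        (motive := fun M _ _ _ => (∀ c ∈ p, ∀ x : M, (Polynomial.C c : Polynomial B) • x = 0) → (∀ x : M, (Polynomial.C d : Polynomial B) • x = 0) →
        ∃ n, FR (Polynomial B) n M) ?_ ?_ ?_
      · intro N _ _ _ _ _ _
        refine ⟨0, 0, 0, ⟨?_⟩⟩
        exact { toFun := 0, invFun := 0, map_add' := by simp, map_smul' := by simp, left_inv := fun _ => Subsingleton.elim _ _, right_inv := fun _ => Subsingleton.elim _ _}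
      · intro N _ _ _ Q e h1 h2
        have hmem : ∀ c, (∀ x : N, (Polynomial.C c : Polynomial B) • x = 0) → c ∈ Q.1.comap Polynomial.C := by
          intro c hc
          have := congrArg e (hc (e.symm (Submodule.Quotient.mk 1)))
          rw [map_smul, map_zero, LinearEquiv.apply_symm_apply, ← Submodule.Quotient.mk_smul, Submodule.Quotient.mk_eq_zero] at this
          simpa using this
        obtain ⟨n, hn⟩ := ih (Q.1.comap Polynomial.C) (by
          refine lt_of_le_of_ne (fun c hc => hmem c (h1 c hc)) ?_
          intro h
          exact hd (h ▸ hmem d h2)) Q.1 Q.2 rfl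
        exact ⟨n, FR.congr e.symm hn⟩
      · intro N1 _ _ _ N2 _ _ _ N3 _ _ _ i g hi hg hex k1 k3 h1 h2
        refine ex_ext i g hi hg hex (k1 ?_ ?_) (k3 ?_ ?_)
        · intro c hc x; apply hi; rw [map_smul, h1 c hc, map_zero]
        · intro x; apply hi; rw [map_smul, h2, map_zero]
        · intro c hc x; obtain ⟨x, rfl⟩ := hg x; rw [← map_smul, h1 c hc, map_zero]
        · intro x; obtain ⟨x, rfl⟩ := hg x; rw [← map_smul, h2, map_zero]
    have hQ : ∃ n, FR (Polynomial B) n (P0 ⧸ LinearMap.range m) := by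
      apply hkill
      · intro c hc x
        obtain ⟨⟨x, hx⟩, rfl⟩ := Submodule.mkQ_surjective _ x
        rw [← map_smul]
        have : (Polynomial.C c : Polynomial B) • (⟨x, hx⟩ : P0) = 0 := by
          apply Subtype.ext
          obtain ⟨x, rfl⟩ := Submodule.mkQ_surjective pT x
          change (Polynomial.C c : Polynomial B) • Submodule.mkQ pT x = 0
          rw [← map_smul, Submodule.mkQ_apply, Submodule.Quotient.mk_eq_zero]
          exact pT.mul_mem_right _ (Ideal.mem_map_of_mem _ hc)
        rw [this, map_zero]
      · intro x
        obtain ⟨⟨x, hx⟩, rfl⟩ := Submodule.mkQ_surjective _ x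
        obtain ⟨x, rfl⟩ := Submodule.mkQ_surjective pT x
        obtain ⟨q, hq⟩ := hdP x ((hP0 x).1 hx)
        rw [← map_smul, Submodule.mkQ_apply, Submodule.Quotient.mk_eq_zero]
        refine ⟨Submodule.mkQ pT q, Subtype.ext ?_⟩
        change f • Submodule.mkQ pT q = (Polynomial.C d : Polynomial B) • Submodule.mkQ pT x
        rw [← map_smul, ← map_smul, eq_comm]
        refine (Submodule.Quotient.eq pT).2 ?_
        rw [smul_eq_mul, smul_eq_mul, mul_comm f]; exact hq
    have hP0' : ∃ n, FR (Polynomial B) n P0 :=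
      ex_ext m (Submodule.mkQ (LinearMap.range m)) hm (Submodule.mkQ_surjective _) (LinearMap.exact_map_mkQ_range m) hpT hQ
    refine ex_coker P0.subtype (Submodule.mapQ pT P LinearMap.id hle) (Submodule.subtype_injective _) ?_ ?_ hP0' hpT
    · intro x
      obtain ⟨x, rfl⟩ := Submodule.mkQ_surjective P x
      exact ⟨Submodule.mkQ pT x, by simp⟩
    · intro x
      obtain ⟨x, rfl⟩ := Submodule.mkQ_surjective pT x
      rw [Submodule.coe_subtype, Subtype.range_coe_subtype, Set.mem_setOf_eq, hP0]
      exact Submodule.Quotient.mk_eq_zero P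
  intro M _ _ hfin
  refine IsNoetherianRing.induction_on_isQuotientEquivQuotientPrime (Polynomial B) (M := M) hfin
    (motive := fun M _ _ _ => ∃ n, FR (Polynomial B) n M) ?_ ?_ ?_
  · intro N _ _ _ _
    refine ⟨0, 0, 0, ⟨?_⟩⟩
    exact { toFun := 0, invFun := 0, map_add' := by simp, map_smul' := by simp, left_inv := fun _ => Subsingleton.elim _ _, right_inv := fun _ => Subsingleton.elim _ _}
  · intro N _ _ _ Q e
    obtain ⟨n, hn⟩ := key _ Q.1 Q.2 rfl
    exact ⟨n, FR.congr e.symm hn⟩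
  · intro N1 _ _ _ N2 _ _ _ N3 _ _ _ i g hi hg hex k1 k3
    exact ex_ext i g hi hg hex k1 k3

lemma AllFR.mv (K : Type u) [Field K] (n : ℕ) : ∃ (S : Type u) (_ : CommRing S) (_ : IsNoetherianRing S),
    AllFR S ∧ Nonempty (S ≃+* MvPolynomial (Fin n) K) := by
  induction n with
  | zero => exact ⟨K, inferInstance, inferInstance, AllFR.field K, ⟨(MvPolynomial.isEmptyRingEquiv K (Fin 0)).symm⟩⟩
  | succ n ih =>
    obtain ⟨S, _, _, h, ⟨e⟩⟩ := ih
    exact ⟨Polynomial S, inferInstance, inferInstance, h.poly, ⟨(Polynomial.mapEquiv e).trans (MvPolynomial.finSuccEquiv K n).symm.toRingEquiv⟩⟩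

end Lang
end DK
end

noncomputable section

set_option linter.unusedSimpArgs false
set_option linter.unusedSectionVars false
set_option linter.unusedVariables false
set_option linter.style.longLine false
set_option linter.style.haveILetI false
namespace DK
open Matrix

section FieldCase
open TensorProduct
universe u v w

/-- a f.g. projective module over a localization of a ring all of whose modules have finite free resolutions -/
lemma SF.of_loc {S : Type u} [CommRing S] (hS : AllFR S) {B : Type v} [CommRing B] [Algebra S B] (g : Submonoid S)
    [IsLocalization g B] (N : Type w) [AddCommGroup N] [Module B N] [Module.Finite B N] [Module.Projective B N] :
    SF B N := by
  letI : Module S N := Module.compHom N (algebraMap S B)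
  haveI : IsScalarTower S B N := ⟨fun s b n => by
    rw [Algebra.smul_def, mul_smul]; rfl⟩
  haveI := IsLocalization.flat B g
  obtain ⟨k, f, hf⟩ := Module.Finite.exists_fin' B N
  let h : (Fin k → S) →ₗ[S] N := (f.restrictScalars S).comp (LinearMap.compLeft (Algebra.linearMap S B) (Fin k))
  let i : ((Fin k → S) ⧸ LinearMap.ker h) →ₗ[S] N := (LinearMap.ker h).liftQ h le_rfl
  have hi : Function.Injective i := LinearMap.ker_eq_bot.1 (Submodule.ker_liftQ_eq_bot _ _ _ le_rfl)
  haveI : IsLocalizedModule g i := by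
    refine ⟨?_, ?_, ?_⟩
    · intro x
      rw [Module.End.isUnit_iff]
      have hu := IsLocalization.map_units B x
      have := (Module.End.isUnit_iff (R := B) (M := N) _).1 (hu.map (algebraMap B (Module.End B N)))
      convert this using 1
      ext n
      simp only [Module.algebraMap_end_apply, algebraMap_smul]
    · intro y
      obtain ⟨y, rfl⟩ := hf y
      obtain ⟨c, hc⟩ := IsLocalization.exist_integer_multiples_of_finite g y
      choose z hz using hc
      refine ⟨(Submodule.Quotient.mk z, c), ?_⟩
      change c.1 • f y = f (fun j => algebraMap S B (z j))
      rw [← algebraMap_smul B c.1 (f y), ← map_smul]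
      congr 1
      ext j
      rw [hz j, Pi.smul_apply, algebraMap_smul]
    · intro x y hxy
      exact ⟨1, by rw [hi hxy]⟩
  have hb : IsBaseChange B i := IsLocalizedModule.isBaseChange g B i
  let e := hb.equiv
  obtain ⟨n, hn⟩ := hS ((Fin k → S) ⧸ LinearMap.ker h)
  exact SF.congr e (hn.sf_baseChange B (Module.Projective.of_equiv e.symm))

lemma IsModel.sf {K : Type u} [Field K] {B : Type v} [CommRing B] {ρ : K →+* B} (h : IsModel ρ)
    (N : Type w) [AddCommGroup N] [Module B N] [Module.Finite B N] [Module.Projective B N] :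
    SF B N := by
  obtain ⟨σ, _, n, y, F, φ, hy, hφ, hl⟩ := h
  obtain ⟨m, ⟨e⟩⟩ := Finite.exists_equiv_fin σ
  obtain ⟨S, _, _, hS, ⟨e'⟩⟩ := AllFR.mv K m
  let E : S ≃+* MvPolynomial σ K := e'.trans (MvPolynomial.renameEquiv K e.symm).toRingEquiv
  have hL : LocH (φ.comp (E : S →+* MvPolynomial σ K)) (E.symm (gF y F)) := by
    refine ⟨by simpa using hl.unit, ?_, ?_⟩
    · intro b
      obtain ⟨n, s, hs⟩ := hl.surj b
      exact ⟨n, E.symm s, by simpa using hs⟩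
    · intro s hs
      obtain ⟨n, hn⟩ := hl.inj (E s) hs
      refine ⟨n, E.injective ?_⟩
      simpa using hn
  letI := (φ.comp (E : S →+* MvPolynomial σ K)).toAlgebra
  haveI := hL.isLoc
  exact SF.of_loc hS (Submonoid.powers (E.symm (gF y F))) N

lemma quot_cancel {B : Type*} [CommRing B] {M M' : Type*} [AddCommGroup M] [Module B M] [AddCommGroup M'] [Module B M']
    (e : (B × M) ≃ₗ[B] (B × M')) (he : e (1, 0) = (1, 0)) : Nonempty (M ≃ₗ[B] M') := by
  have he' : e.symm (1, 0) = (1, 0) := by rw [← he]; simp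
  have k1 : ∀ (e : (B × M) ≃ₗ[B] (B × M')), e.symm (1, 0) = (1, 0) → ∀ m, (e.symm (0, (e (0, m)).2)).2 = m := by
    intro e he' m
    have : (0, (e (0, m)).2) = e (0, m) - (e (0, m)).1 • (1, 0) := by
      refine Prod.ext ?_ ?_ <;> simp
    rw [this, map_sub, map_smul, he']; simp
  have k2 : ∀ m, (e (0, (e.symm (0, m)).2)).2 = m := by
    intro m
    have : (0, (e.symm (0, m)).2) = e.symm (0, m) - (e.symm (0, m)).1 • (1, 0) := by
      refine Prod.ext ?_ ?_ <;> simp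
    rw [this, map_sub, map_smul, he]; simp
  exact ⟨LinearEquiv.ofLinear
    ((LinearMap.snd B B M').comp (e.toLinearMap.comp (LinearMap.inr B B M)))
    ((LinearMap.snd B B M).comp (e.symm.toLinearMap.comp (LinearMap.inr B B M')))
    (by ext m; simpa using k2 m) (by ext m; simpa using k1 e he' m)⟩

def consE (B : Type*) [CommRing B] (k : ℕ) : (B × (Fin k → B)) ≃ₗ[B] (Fin (k + 1) → B) where
  toFun x := Fin.cons x.1 x.2
  invFun x := (x 0, fun j => x j.succ)
  map_add' x y := by ext j; refine Fin.cases ?_ (fun j => ?_) j <;> simp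
  map_smul' c x := by ext j; refine Fin.cases ?_ (fun j => ?_) j <;> simp
  left_inv x := by simp
  right_inv x := by ext j; refine Fin.cases ?_ (fun j => ?_) j <;> simp

lemma consE_one (B : Type*) [CommRing B] (k : ℕ) : consE B k (1, 0) = Pi.single 0 1 := by
  ext j; refine Fin.cases ?_ (fun j => ?_) j <;> simp [consE]

lemma um_equiv {B : Type*} [CommRing B] {M : Type*} [AddCommGroup M] [Module B M] {k : ℕ}
    (e : (B × M) ≃ₗ[B] (Fin k → B)) : Um (e (1, 0)) := by
  let θ : (Fin k → B) →ₗ[B] B := (LinearMap.fst B B M).comp e.symm.toLinearMap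
  have h : θ (e (1, 0)) = 1 := by simp [θ]
  rw [LinearMap.pi_apply_eq_sum_univ θ] at h
  refine ⟨fun i => θ (fun j => if i = j then 1 else 0), ?_⟩
  refine Eq.trans ?_ h
  refine Finset.sum_congr rfl fun i _ => ?_
  rw [smul_eq_mul, mul_comm]

lemma cancel_free {B : Type*} [CommRing B] {M : Type*} [AddCommGroup M] [Module B M] {k : ℕ}
    (hT : TT (Fin (k + 1)) B) (e : (B × M) ≃ₗ[B] (Fin (k + 1) → B)) : Nonempty (M ≃ₗ[B] (Fin k → B)) := by
  obtain ⟨σ, -, hσ⟩ := hT _ (um_equiv e) 0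
  let s : (Fin (k + 1) → B) ≃ₗ[B] (Fin (k + 1) → B) :=
    Matrix.toLin'OfInv (M' := (σ : Matrix _ _ B)) (M := ((σ⁻¹ : GL (Fin (k + 1)) B) : Matrix _ _ B))
      (by rw [← Units.val_mul]; simp) (by rw [← Units.val_mul]; simp)
  refine quot_cancel ((e.trans s).trans (consE B k).symm) ?_
  rw [LinearEquiv.trans_apply, LinearEquiv.symm_apply_eq, consE_one, LinearEquiv.trans_apply]
  show Matrix.toLin' _ _ = _
  rw [Matrix.toLin'_apply]
  exact hσ

lemma cancel_free' {B : Type*} [CommRing B] {M : Type*} [AddCommGroup M] [Module B M] {r : ℕ}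
    (hT : ∀ k, r ≤ k → TT (Fin (k + 1)) B) (a : ℕ) (e : Nonempty ((M × (Fin a → B)) ≃ₗ[B] (Fin (r + a) → B))) :
    Nonempty (M ≃ₗ[B] (Fin r → B)) := by
  induction a with
  | zero =>
    obtain ⟨e⟩ := e
    exact ⟨(LinearEquiv.prodUnique (R := B) (M := M) (M₂ := Fin 0 → B)).symm.trans e⟩
  | succ a ih =>
    obtain ⟨e⟩ := e
    refine ih (cancel_free (k := r + a) (hT _ (by omega)) ?_)
    exact (((LinearEquiv.prodAssoc B B M (Fin a → B)).symm.trans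
      (LinearEquiv.prodCongr (LinearEquiv.prodComm B B M) (LinearEquiv.refl B _))).trans
      (LinearEquiv.prodAssoc B M B (Fin a → B))).trans
      ((LinearEquiv.prodCongr (LinearEquiv.refl B M) (consE B a)).trans e)

lemma IsModel.free {K : Type u} [Field K] {B : Type v} [CommRing B] {ρ : K →+* B} (h : IsModel ρ)
    (N : Type w) [AddCommGroup N] [Module B N] [Module.Finite B N] [Module.Projective B N] (r : ℕ) (hr2 : 2 ≤ r)
    (hr : ∀ p, Module.rankAtStalk (R := B) N p = r) : Nonempty (N ≃ₗ[B] (Fin r → B)) := by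
  rcases subsingleton_or_nontrivial B with hB | hB
  · haveI : Subsingleton N := Module.subsingleton B N
    exact ⟨{ toFun := 0, invFun := 0, map_add' := by simp, map_smul' := by simp, left_inv := fun _ => Subsingleton.elim _ _, right_inv := fun _ => Subsingleton.elim _ _}⟩
  obtain ⟨a, b, ⟨e⟩⟩ := h.sf N
  have hrk := congrFun (Module.rankAtStalk_eq_of_equiv e) (Classical.arbitrary (PrimeSpectrum B))
  rw [Module.rankAtStalk_prod] at hrk
  simp only [Pi.add_apply, hr, Module.rankAtStalk_eq_finrank_of_free, Module.finrank_fintype_fun_eq_card, Fintype.card_fin] at hrk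
  have hb : b = r + a := by simpa using hrk.symm
  subst hb
  exact cancel_free' (fun k hk => h.TT (d := 0) (by omega) (by omega) (by simp [ringKrullDim_eq_zero_of_field])) a ⟨e⟩

end FieldCase
end DK
end

noncomputable section

set_option linter.unusedSimpArgs false
set_option linter.unusedSectionVars false
set_option linter.unusedVariables false
set_option linter.style.longLine false
set_option linter.style.haveILetI false
namespace DK
open Matrix

open TensorProduct

lemma clear_den {B : Type*} [CommRing B] (S : Submonoid B) {B' : Type*} [CommRing B'] [Algebra B B']
    [IsLocalization S B'] {N : Type*} [AddCommGroup N] [Module B N] [Module.FinitePresentation B N] {r : ℕ}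
    (e : (B' ⊗[B] N) ≃ₗ[B'] (Fin r → B')) :
    ∃ (s : B) (φ : (Fin r → B) →ₗ[B] N) (ψ : N →ₗ[B] (Fin r → B)), s ∈ S ∧ (∀ x, φ (ψ x) = s • x) ∧
      (∀ x, ψ (φ x) = s • x) := by
  let f : N →ₗ[B] B' ⊗[B] N := TensorProduct.mk B B' N 1
  haveI : IsLocalizedModule S f := (isLocalizedModule_iff_isBaseChange S B' f).2 (TensorProduct.isBaseChange B N B')
  let g : (Fin r → B) →ₗ[B] (Fin r → B') :=
    LinearMap.pi fun i => (Algebra.linearMap B B').comp (LinearMap.proj i)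
  haveI : IsLocalizedModule S g := inferInstanceAs (IsLocalizedModule S
    (LinearMap.pi fun i => (Algebra.linearMap B B').comp (LinearMap.proj i)))
  let e' : (B' ⊗[B] N) ≃ₗ[B] (Fin r → B') := e.restrictScalars B
  obtain ⟨φ, s1, h1⟩ := Module.FinitePresentation.exists_lift_of_isLocalizedModule S f (e'.symm.toLinearMap ∘ₗ g)
  obtain ⟨ψ, s2, h2⟩ := Module.FinitePresentation.exists_lift_of_isLocalizedModule S g (e'.toLinearMap ∘ₗ f)
  have h1' : ∀ x, f (φ x) = (s1 : B) • e'.symm (g x) := fun x => congrArg (fun l => l x) h1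
  have h2' : ∀ x, g (ψ x) = (s2 : B) • e' (f x) := fun x => congrArg (fun l => l x) h2
  obtain ⟨s3, h3⟩ := Module.Finite.exists_smul_of_comp_eq_of_isLocalizedModule S f (φ ∘ₗ ψ)
    (((s1 : B) * s2) • LinearMap.id) (by
      ext x
      simp [h1', h2', mul_smul])
  obtain ⟨s4, h4⟩ := Module.Finite.exists_smul_of_comp_eq_of_isLocalizedModule S g (ψ ∘ₗ φ)
    (((s1 : B) * s2) • LinearMap.id) (by
      refine LinearMap.ext fun x => ?_
      simp only [LinearMap.comp_apply, h1', h2', LinearMap.smul_apply, map_smul, LinearMap.id_apply,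
        LinearEquiv.apply_symm_apply, smul_smul]
      rw [mul_comm])
  have h3' : ∀ x, (s3 : B) • φ (ψ x) = (s3 : B) • ((s1 : B) * s2) • x := fun x => congrArg (fun l => l x) h3
  have h4' : ∀ x, (s4 : B) • ψ (φ x) = (s4 : B) • ((s1 : B) * s2) • x := fun x => congrArg (fun l => l x) h4
  refine ⟨(s4 * s3 : B) * (s1 * s2), φ, (s4 * s3 : B) • ψ, ?_, ?_, ?_⟩
  · exact S.mul_mem (S.mul_mem s4.2 s3.2) (S.mul_mem s1.2 s2.2)
  · intro x
    rw [LinearMap.smul_apply, map_smul, mul_smul, h3']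
    simp only [smul_smul, mul_assoc]
  · intro x
    rw [LinearMap.smul_apply, mul_comm (s4 : B), mul_smul, h4']
    simp only [smul_smul, mul_assoc]

lemma free_of_mod_jac {C : Type*} [CommRing C] (J : Ideal C) (hJ : J ≤ Ideal.jacobson ⊥) (N : Type*) [AddCommGroup N]
    [Module C N] [Module.Finite C N] [Module.Projective C N] (r : ℕ)
    (hr : ∀ p, Module.rankAtStalk (R := C) N p = r)
    (e : ((C ⧸ J) ⊗[C] N) ≃ₗ[C ⧸ J] (Fin r → C ⧸ J)) : Nonempty (N ≃ₗ[C] (Fin r → C)) := by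
  classical
  choose n hn using fun i : Fin r => one_tmul_surj J (e.symm (Pi.single i 1))
  let φ : (Fin r → C) →ₗ[C] N := Fintype.linearCombination C n
  have hφ : ∀ c, φ c = ∑ i, c i • n i := fun c => rfl
  have hs : Function.Surjective φ := by
    rw [← LinearMap.range_eq_top, eq_top_iff]
    refine Submodule.le_of_le_smul_of_le_jacobson_bot (I := J) Module.Finite.fg_top hJ ?_
    intro x _
    choose c hc using fun i => Ideal.Quotient.mk_surjective (e ((1 : C ⧸ J) ⊗ₜ[C] x) i)
    have : (1 : C ⧸ J) ⊗ₜ[C] (x - φ c) = 0 := by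
      rw [TensorProduct.tmul_sub, sub_eq_zero, hφ, TensorProduct.tmul_sum]
      apply e.injective
      rw [map_sum]
      have : ∀ i, e ((1 : C ⧸ J) ⊗ₜ[C] (c i • n i)) = Pi.single i (e ((1 : C ⧸ J) ⊗ₜ[C] x) i) := by
        intro i
        have : (1 : C ⧸ J) ⊗ₜ[C] (c i • n i) = (Ideal.Quotient.mk J (c i)) • ((1 : C ⧸ J) ⊗ₜ[C] n i) := by
          rw [TensorProduct.tmul_smul]; rfl
        rw [this, hn, map_smul, e.apply_symm_apply, hc, ← Pi.single_smul, smul_eq_mul, mul_one]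
      rw [Finset.sum_congr rfl fun i _ => this i, Finset.univ_sum_single]
    have h2 := one_tmul_ker J _ this
    have : x = φ c + (x - φ c) := by abel
    rw [this]
    exact Submodule.add_mem_sup ⟨c, rfl⟩ h2
  have hb : Function.Bijective φ := by
    refine Module.bijective_of_surjective_of_rankAtStalk_eq hs fun m hm => ?_
    haveI : Nontrivial C := by
      by_contra hh
      rw [not_nontrivial_iff_subsingleton] at hh
      exact hm.ne_top (Subsingleton.elim _ _)
    rw [hr, Module.rankAtStalk_eq_finrank_of_free]
    simp
  exact ⟨(LinearEquiv.ofBijective φ hb).symm⟩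
lemma IsModel.free' {K : Type u} [CommRing K] (hK : IsField K) {B : Type v} [CommRing B] {ρ : K →+* B} (h : IsModel ρ)
    (N : Type w) [AddCommGroup N] [Module B N] [Module.Finite B N] [Module.Projective B N] (r : ℕ) (hr2 : 2 ≤ r)
    (hr : ∀ p, Module.rankAtStalk (R := B) N p = r) : Nonempty (N ≃ₗ[B] (Fin r → B)) := by
  letI : Field K := hK.toField
  exact IsModel.free (K := K) h N r hr2 hr

lemma gen_triv_aux {R : Type u} {B : Type v} [CommRing R] [CommRing B] [IsNoetherianRing R] {ρ : R →+* B} (h : IsModel ρ)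
    (N : Type w) [AddCommGroup N] [Module B N] [Module.Finite B N] [Module.Projective B N] (r : ℕ) (hr2 : 2 ≤ r)
    (hr : ∀ p, Module.rankAtStalk (R := B) N p = r) (p : Ideal R) [p.IsPrime] (hp : p ∈ minimalPrimes R)
    (R' : Type u) (B' : Type v) [CommRing R'] [CommRing B'] [Algebra R R'] [Algebra B B']
    [IsLocalization p.primeCompl R'] [IsLocalization (p.primeCompl.map ρ) B'] (ρ' : R' →+* B')
    (hρ' : ∀ r, ρ' (algebraMap R R' r) = algebraMap B B' (ρ r)) : GenTriv r R B N ρ := by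
  have h' : IsModel ρ' := h.loc p.primeCompl ρ' hρ'
  haveI : IsLocalization.AtPrime R' p := ‹IsLocalization p.primeCompl R'›
  haveI : IsLocalRing R' := IsLocalization.AtPrime.isLocalRing R' p
  let m : Ideal R' := IsLocalRing.maximalIdeal R'
  have hm : m ≤ nilradical R' := by
    have := IsLocalization.AtPrime.radical_map_of_mem_minimalPrimes (A := R') p ⊥ hp
    rw [Ideal.map_bot, IsLocalization.AtPrime.map_eq_maximalIdeal p R'] at this
    exact this.ge
  have hmJ : m.map ρ' ≤ Ideal.jacobson ⊥ := by
    rw [Ideal.map_le_iff_le_comap]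
    intro x hx
    have : IsNilpotent x := hm hx
    have h2 : IsNilpotent (ρ' x) := this.map ρ'
    exact Ideal.radical_le_jacobson h2
  let ρ2 : R' ⧸ m →+* B' ⧸ (m.map ρ') := Ideal.quotientMap _ ρ' Ideal.le_comap_map
  have h2 : IsModel ρ2 := h'.quot m _ rfl ρ2 (fun r => Ideal.quotientMap_mk)
  have hK : IsField (R' ⧸ m) := (Ideal.Quotient.maximal_ideal_iff_isField_quotient m).1 inferInstance
  obtain ⟨e⟩ := IsModel.free' hK h2 ((B' ⧸ (m.map ρ')) ⊗[B'] (B' ⊗[B] N)) r hr2 (by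
    intro q
    rw [Module.rankAtStalk_baseChange, Module.rankAtStalk_baseChange, hr])
  obtain ⟨e⟩ := free_of_mod_jac (m.map ρ') hmJ (B' ⊗[B] N) r (by
    intro q
    rw [Module.rankAtStalk_baseChange, hr]) e
  haveI := h.noeth
  haveI : Module.FinitePresentation B N := Module.finitePresentation_of_finite B N
  obtain ⟨s, φ, ψ, ⟨s0, hs0, rfl⟩, h3, h4⟩ := clear_den (p.primeCompl.map ρ) e
  exact ⟨p, inferInstance, s0, φ, ψ, hs0, h3, h4⟩

lemma gen_triv {R : Type u} {B : Type v} [CommRing R] [CommRing B] [Nontrivial R] [IsNoetherianRing R] {ρ : R →+* B} (h : IsModel ρ)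
    (N : Type w) [AddCommGroup N] [Module B N] [Module.Finite B N] [Module.Projective B N] (r : ℕ) (hr2 : 2 ≤ r)
    (hr : ∀ p, Module.rankAtStalk (R := B) N p = r) : GenTriv r R B N ρ := by
  obtain ⟨p, hp⟩ := Ideal.nonempty_minimalPrimes (I := (⊥ : Ideal R)) bot_ne_top
  haveI : p.IsPrime := hp.1.1
  exact gen_triv_aux h N r hr2 hr p hp (Localization p.primeCompl) (Localization (p.primeCompl.map ρ))
    (IsLocalization.map (M := p.primeCompl) (T := p.primeCompl.map ρ) _ ρ
      (fun x hx => Submonoid.mem_map_of_mem ρ hx))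
    (fun r => IsLocalization.map_eq _ r)

lemma TR_all {R : Type u} {A : Type v} [CommRing R] [CommRing A] [IsNoetherianRing R] {d r : ℕ} (hk : d < r) (hk2 : 2 ≤ r)
    (hd : ringKrullDim R ≤ d) {ρ : R →+* A} (h : IsModel ρ)
    {P : Type w} [AddCommGroup P] [Module A P] [Module.Projective A P] [Module.Finite A P]
    (hr : ∀ p, Module.rankAtStalk (R := A) P p = r)
    (v : A × P) (hv : UmM ⊥ v) : TR v (1, 0) := by
  refine TR_main hk hk2 hd h ?_ v hv
  intro I hI ρ' _ h'
  haveI : Nontrivial (R ⧸ I) := Ideal.Quotient.nontrivial_iff.2 hI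
  refine gen_triv h' _ r hk2 ?_
  intro q
  rw [Module.rankAtStalk_baseChange, hr]

lemma cancel_one {R : Type u} {A : Type v} [CommRing R] [CommRing A] [IsNoetherianRing R] {d r : ℕ} (hk : d < r) (hk2 : 2 ≤ r)
    (hd : ringKrullDim R ≤ d) {ρ : R →+* A} (h : IsModel ρ)
    {P : Type w} [AddCommGroup P] [Module A P] [Module.Projective A P] [Module.Finite A P]
    (hr : ∀ p, Module.rankAtStalk (R := A) P p = r)
    {Q : Type*} [AddCommGroup Q] [Module A Q] (e : (A × Q) ≃ₗ[A] (A × P)) : Nonempty (Q ≃ₗ[A] P) := by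
  have hv : UmM ⊥ (e (1, 0)) := by
    let θ : (A × P) →ₗ[A] A := (LinearMap.fst A A Q).comp e.symm.toLinearMap
    refine ⟨θ (1, 0), θ.comp (LinearMap.inr A A P), ?_⟩
    have h1 : θ (e (1, 0)) = 1 := by simp [θ]
    have h2 : e (1, 0) = (e (1, 0)).1 • ((1, 0) : A × P) + LinearMap.inr A A P (e (1, 0)).2 := by
      ext <;> simp
    rw [Ideal.mem_bot, sub_eq_zero]
    refine Eq.trans ?_ h1
    conv_rhs => rw [h2, map_add, map_smul, smul_eq_mul]
    rw [mul_comm]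
    rfl
  obtain ⟨f, hf⟩ := (TR_all hk hk2 hd h hr _ hv).equiv
  exact quot_cancel (e.trans f) (by rw [LinearEquiv.trans_apply, hf])

/-- split one free coordinate off -/
def splitE (A : Type*) [CommRing A] (P : Type*) [AddCommGroup P] [Module A P] (t : ℕ) :
    (A × (P × (Fin t → A))) ≃ₗ[A] (P × (Fin (t + 1) → A)) :=
  (((LinearEquiv.prodAssoc A A P (Fin t → A)).symm.trans
      (LinearEquiv.prodCongr (LinearEquiv.prodComm A A P) (LinearEquiv.refl A _))).trans
      (LinearEquiv.prodAssoc A P A (Fin t → A))).trans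
      (LinearEquiv.prodCongr (LinearEquiv.refl A P) (consE A t))

lemma rank_prod {A : Type*} [CommRing A] (P : Type*) [AddCommGroup P] [Module A P] [Module.Projective A P] [Module.Finite A P]
    {r : ℕ} (hr : ∀ p, Module.rankAtStalk (R := A) P p = r) (t : ℕ) (p) :
    Module.rankAtStalk (R := A) (P × (Fin t → A)) p = r + t := by
  haveI : Nontrivial A := ⟨0, 1, fun h => p.2.ne_top (Ideal.eq_top_iff_one _ |>.2 (h ▸ p.asIdeal.zero_mem))⟩
  rw [Module.rankAtStalk_prod, Pi.add_apply, hr, Module.rankAtStalk_eq_finrank_of_free]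
  simp

lemma cancel_to {R : Type u} {A : Type v} [CommRing R] [CommRing A] [IsNoetherianRing R] {d r : ℕ} (hk : d < r)
    (hd : ringKrullDim R ≤ d) {ρ : R →+* A} (h : IsModel ρ)
    {P : Type w} [AddCommGroup P] [Module A P] [Module.Projective A P] [Module.Finite A P]
    (hr : ∀ p, Module.rankAtStalk (R := A) P p = r)
    {Q : Type*} [AddCommGroup Q] [Module A Q] (s : ℕ) (hs : 2 ≤ r + s) (t : ℕ) (hst : s ≤ t)
    (e : Nonempty ((P × (Fin t → A)) ≃ₗ[A] (Q × (Fin t → A)))) :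
    Nonempty ((P × (Fin s → A)) ≃ₗ[A] (Q × (Fin s → A))) := by
  induction t, hst using Nat.le_induction with
  | base => exact e
  | succ t hst ih =>
    obtain ⟨e⟩ := e
    apply ih
    obtain ⟨f⟩ := cancel_one (r := r + t) (by omega) (by omega) hd h (P := P × (Fin t → A))
      (rank_prod P hr t) (((splitE A Q t).trans e.symm).trans (splitE A P t).symm)
    exact ⟨f.symm⟩
end DK
end

noncomputable section

set_option linter.unusedSimpArgs false
set_option linter.unusedSectionVars false
set_option linter.unusedVariables false
set_option linter.style.longLine false
set_option linter.style.haveILetI false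
namespace DK
open Matrix

lemma rank_one_swap {A : Type*} [CommRing A] {M : Type*} [AddCommGroup M] [Module A M] [Module.Finite A M]
    [Module.Projective A M] (hr : ∀ p, Module.rankAtStalk (R := A) M p = 1) (θ : M →ₗ[A] A) (x y : M) :
    θ x • y = θ y • x := by
  refine Module.eq_of_localization_maximal (fun (P : Ideal A) _ => LocalizedModule P.primeCompl M)
    (fun (P : Ideal A) _ => LocalizedModule.mkLinearMap P.primeCompl M) _ _ ?_
  intro P hP
  have h1 : Module.finrank (Localization.AtPrime P) (LocalizedModule P.primeCompl M) = 1 := hr ⟨P, hP.isPrime⟩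
  haveI : Module.Free (Localization.AtPrime P) (LocalizedModule P.primeCompl M) := Module.free_of_flat_of_isLocalRing
  obtain ⟨b⟩ := Module.nonempty_linearEquiv_of_finrank_eq_one h1
  let θ' : LocalizedModule P.primeCompl M →ₗ[Localization.AtPrime P] Localization.AtPrime P :=
    IsLocalizedModule.mapExtendScalars P.primeCompl (LocalizedModule.mkLinearMap P.primeCompl M)
      (Algebra.linearMap A (Localization.AtPrime P)) (Localization.AtPrime P) θ
  have hθ : ∀ z, θ' (LocalizedModule.mkLinearMap P.primeCompl M z) = algebraMap A (Localization.AtPrime P) (θ z) := by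
    intro z
    simp only [θ']
    rw [IsLocalizedModule.mapExtendScalars_apply_apply, IsLocalizedModule.map_apply]
    rfl
  obtain ⟨u, hu⟩ := b.surjective (LocalizedModule.mkLinearMap P.primeCompl M x)
  obtain ⟨w, hw⟩ := b.surjective (LocalizedModule.mkLinearMap P.primeCompl M y)
  have key : ∀ u w, θ' (b u) • b w = θ' (b w) • b u := by
    intro u w
    have e1 : ∀ u, b u = u • b 1 := fun u => by rw [← map_smul, smul_eq_mul, mul_one]
    rw [e1 u, e1 w, map_smul, map_smul, smul_smul, smul_smul, smul_eq_mul, smul_eq_mul]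
    congr 1
    ring
  have := key u w
  rw [hu, hw, hθ, hθ, algebraMap_smul, algebraMap_smul] at this
  rw [map_smul, map_smul]
  exact this

lemma rank_one_half {A : Type*} [CommRing A] {P Q : Type*} [AddCommGroup P] [Module A P] [AddCommGroup Q] [Module A Q]
    [Module.Finite A Q] [Module.Projective A Q] (hr : ∀ p, Module.rankAtStalk (R := A) Q p = 1)
    (e : (A × P) ≃ₗ[A] (A × Q)) (q : Q) :
    (e (1, 0)).1 • (e (0, (e.symm (1, 0)).1 • (e.symm (0, q)).2 - (e.symm (0, q)).1 • (e.symm (1, 0)).2)).2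
    - (e (0, (e.symm (1, 0)).1 • (e.symm (0, q)).2 - (e.symm (0, q)).1 • (e.symm (1, 0)).2)).1 • (e (1, 0)).2 = q := by
  have dec : ∀ a p, e (a, p) = a • e (1, 0) + e (0, p) := by
    intro a p
    rw [← map_smul, ← map_add]; simp
  have dec' : ∀ a p, e.symm (a, p) = a • e.symm (1, 0) + e.symm (0, p) := by
    intro a p
    rw [← map_smul, ← map_add]; simp
  let β' : Q →ₗ[A] A := (LinearMap.fst A A P).comp (e.symm.toLinearMap.comp (LinearMap.inr A A Q))
  have sw : (e.symm (0, q)).1 • (e (1, 0)).2 = (e.symm (0, (e (1, 0)).2)).1 • q :=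
    rank_one_swap hr β' q (e (1, 0)).2
  have h1 : e ((e.symm (1, 0)).1, (e.symm (1, 0)).2) = (1, 0) := e.apply_symm_apply _
  have h2 : e ((e.symm (0, q)).1, (e.symm (0, q)).2) = (0, q) := e.apply_symm_apply _
  have h3 : e.symm ((e (1, 0)).1, (e (1, 0)).2) = (1, 0) := e.symm_apply_apply _
  rw [dec] at h1 h2
  rw [dec'] at h3
  have e1 : e (0, (e.symm (1, 0)).1 • (e.symm (0, q)).2 - (e.symm (0, q)).1 • (e.symm (1, 0)).2)
      = (e.symm (1, 0)).1 • e (0, (e.symm (0, q)).2) - (e.symm (0, q)).1 • e (0, (e.symm (1, 0)).2) := by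
    rw [← map_smul, ← map_smul, ← map_sub]; simp
  rw [e1]
  generalize e (1, 0) = E at *
  obtain ⟨α, q0⟩ := E
  generalize e.symm (0, q) = F at *
  obtain ⟨b, g'⟩ := F
  generalize e.symm (1, 0) = G at *
  obtain ⟨α', p0⟩ := G
  simp only at *
  generalize e (0, p0) = H at *
  obtain ⟨bp, gp⟩ := H
  generalize e (0, g') = H at *
  obtain ⟨bg, gg⟩ := H
  generalize e.symm (0, q0) = H at *
  obtain ⟨c, d⟩ := H
  simp only [Prod.smul_mk, Prod.mk_add_mk, Prod.mk.injEq, smul_eq_mul, Prod.mk_sub_mk] at *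
  obtain ⟨h11, h12⟩ := h1
  obtain ⟨h21, h22⟩ := h2
  obtain ⟨h31, -⟩ := h3
  have f1 : gp = - (α' • q0) := by rw [eq_neg_iff_add_eq_zero, add_comm]; exact h12
  have f2 : gg = q - b • q0 := by rw [← h22]; abel
  have f3 : bg = - (b * α) := by linear_combination h21
  have f4 : bp = 1 - α' * α := by linear_combination h11
  have f5 : c = 1 - α * α' := by linear_combination h31
  rw [f1, f2, f3, f4]
  rw [f5] at sw
  have : q = (α * α') • q + b • q0 := by rw [sw]; module
  conv_rhs => rw [this]
  module

lemma cancel_rank_one {A : Type*} [CommRing A] {P Q : Type*} [AddCommGroup P] [Module A P] [AddCommGroup Q] [Module A Q]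
    [Module.Finite A P] [Module.Projective A P] [Module.Finite A Q] [Module.Projective A Q]
    (hrP : ∀ p, Module.rankAtStalk (R := A) P p = 1) (hrQ : ∀ p, Module.rankAtStalk (R := A) Q p = 1)
    (e : (A × P) ≃ₗ[A] (A × Q)) : Nonempty (P ≃ₗ[A] Q) := by
  let δ : P →ₗ[A] Q := (e (1, 0)).1 • ((LinearMap.snd A A Q).comp (e.toLinearMap.comp (LinearMap.inr A A P)))
    - ((LinearMap.fst A A Q).comp (e.toLinearMap.comp (LinearMap.inr A A P))).smulRight (e (1, 0)).2
  let δ' : Q →ₗ[A] P := (e.symm (1, 0)).1 • ((LinearMap.snd A A P).comp (e.symm.toLinearMap.comp (LinearMap.inr A A Q)))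
    - ((LinearMap.fst A A P).comp (e.symm.toLinearMap.comp (LinearMap.inr A A Q))).smulRight (e.symm (1, 0)).2
  refine ⟨LinearEquiv.ofLinear δ δ' ?_ ?_⟩
  · exact LinearMap.ext fun q => rank_one_half hrQ e q
  · exact LinearMap.ext fun p => rank_one_half hrP e.symm p

open MvPolynomial in
lemma isModel_of {R : Type u} [CommRing R] (m n : ℕ) (F : Fin n → Polynomial R)
    (A : Type v) [CommRing A] [Algebra (MvPolynomial (Fin m ⊕ Fin n) R) A]
    [IsLocalization.Away
      (∏ i : Fin n, Polynomial.aeval (X (Sum.inr i) : MvPolynomial (Fin m ⊕ Fin n) R) (F i)) A] :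
    IsModel ((algebraMap (MvPolynomial (Fin m ⊕ Fin n) R) A).comp (C : R →+* MvPolynomial (Fin m ⊕ Fin n) R)) := by
  refine ⟨Fin m ⊕ Fin n, inferInstance, n, Sum.inr, F, algebraMap _ A, Sum.inr_injective, fun r => rfl, ?_⟩
  haveI : IsLocalization.Away (gF (Sum.inr : Fin n → Fin m ⊕ Fin n) F) A :=
    ‹IsLocalization.Away (∏ i : Fin n, Polynomial.aeval (X (Sum.inr i) : MvPolynomial (Fin m ⊕ Fin n) R) (F i)) A›
  exact LocH.of_isLoc

theorem main
    (R : Type*) [CommRing R] [IsNoetherianRing R] (d : ℕ) (hdim : ringKrullDim R = d)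
    (m n : ℕ) (F : Fin n → Polynomial R)
    (A : Type*) [CommRing A] [Algebra (MvPolynomial (Fin m ⊕ Fin n) R) A]
    [IsLocalization.Away
      (∏ i : Fin n, Polynomial.aeval (MvPolynomial.X (Sum.inr i) : MvPolynomial (Fin m ⊕ Fin n) R) (F i)) A]
    (P : Type*) [AddCommGroup P] [Module A P] [Module.Finite A P] [Module.Projective A P]
    (r : ℕ) (hr : d + 1 ≤ r)
    (hrank : ∀ p : PrimeSpectrum A,
      Module.finrank (Localization.AtPrime p.asIdeal) (LocalizedModule p.asIdeal.primeCompl P)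
        = r)
    (Q : Type*) [AddCommGroup Q] [Module A Q] [Module.Finite A Q] [Module.Projective A Q]
    (t : ℕ) (ht : 0 < t)
    (hiso : Nonempty ((P × (Fin t → A)) ≃ₗ[A] (Q × (Fin t → A)))) :
    Nonempty (P ≃ₗ[A] Q) := by
  have hM := isModel_of m n F A
  have hrk : ∀ p, Module.rankAtStalk (R := A) P p = r := hrank
  by_cases h2 : 2 ≤ r
  · obtain ⟨e⟩ := cancel_to (d := d) (by omega) hdim.le hM hrk 0 (by omega) t (by omega) hiso
    exact ⟨((LinearEquiv.prodUnique (R := A) (M := P) (M₂ := Fin 0 → A)).symm.trans e).trans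
      (LinearEquiv.prodUnique (R := A) (M := Q) (M₂ := Fin 0 → A))⟩
  · obtain rfl : r = 1 := by omega
    obtain ⟨e⟩ := cancel_to (d := d) (by omega) hdim.le hM hrk 1 (by omega) t (by omega) hiso
    have hrQ : ∀ p, Module.rankAtStalk (R := A) Q p = 1 := by
      intro p
      haveI : Nontrivial A := ⟨0, 1, fun h => p.2.ne_top (Ideal.eq_top_iff_one _ |>.2 (h ▸ p.asIdeal.zero_mem))⟩
      have h3 := congrFun (Module.rankAtStalk_eq_of_equiv e) p
      rw [rank_prod P hrk 1, Module.rankAtStalk_prod, Pi.add_apply, Module.rankAtStalk_eq_finrank_of_free (R := A) (M := Fin 1 → A)] at h3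
      simp at h3
      omega
    exact cancel_rank_one hrk hrQ (((LinearEquiv.prodComm A A P).trans (LinearEquiv.prodCongr (LinearEquiv.refl A P) (LinearEquiv.funUnique (Fin 1) A A).symm)).trans (e.trans ((LinearEquiv.prodCongr (LinearEquiv.refl A Q) (LinearEquiv.funUnique (Fin 1) A A)).trans (LinearEquiv.prodComm A Q A))))
end DK
end



open MvPolynomial

noncomputable section

/-- **Theorem (Dhorajia–Keshari).** Let `R` be Noetherian of finite Krull dimension `d`,
`f_i ∈ R[Y_i]` for `1 ≤ i ≤ n`, and `A = R[X_1,…,X_m,Y_1,…,Y_n, (f_1⋯f_n)⁻¹]`.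
Then every finitely generated projective `A`-module `P` of constant rank `r ≥ d + 1` is
cancellative: `P ⊕ Aᵗ ≅ Q ⊕ Aᵗ` implies `P ≅ Q`. -/
theorem projective_cancellation_dhorajia_keshari
    (R : Type*) [CommRing R] [IsNoetherianRing R] (d : ℕ) (hdim : ringKrullDim R = d)
    (m n : ℕ) (F : Fin n → Polynomial R)
    (A : Type*) [CommRing A] [Algebra (MvPolynomial (Fin m ⊕ Fin n) R) A]
    [IsLocalization.Away
      (∏ i : Fin n, Polynomial.aeval (X (Sum.inr i) : MvPolynomial (Fin m ⊕ Fin n) R) (F i)) A]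
    (P : Type*) [AddCommGroup P] [Module A P] [Module.Finite A P] [Module.Projective A P]
    (r : ℕ) (hr : d + 1 ≤ r)
    (hrank : ∀ p : PrimeSpectrum A,
      Module.finrank (Localization.AtPrime p.asIdeal) (LocalizedModule p.asIdeal.primeCompl P)
        = r)
    (Q : Type*) [AddCommGroup Q] [Module A Q] [Module.Finite A Q] [Module.Projective A Q]
    (t : ℕ) (ht : 0 < t)
    (hiso : Nonempty ((P × (Fin t → A)) ≃ₗ[A] (Q × (Fin t → A)))) :
    Nonempty (P ≃ₗ[A] Q) := by
  exact DK.main R d hdim m n F A P r hr hrank Q t ht hiso
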